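/- In dimension 15, every finite set S of points on the unit sphere of EuclideanSpace ℝ (Fin 15) (i.e., ‖x‖ = 1 for all x ∈ S) such that any two distinct points of S are at Euclidean distance at least 1 has cardinality at most 4866; that is, the kissing number in dimension 15 is at most 4866. -/

import Mathlib

def lev (F : ℕ → ℕ → ℕ) (b v : ℕ) : List ℕ → ℕ → ℕ → ℕ
  | [], _, _ => 0
  | C :: l, cc, N => Nat.add (F (Nat.mul cc C) (Nat.mod N (Nat.pow 2 b)))
      (Nat.mul (Nat.pow 2 v) (lev F b v l cc (Nat.div N (Nat.pow 2 b))))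

/-- root entry; `H` half range of the input digits -/
def ent (w H cc d : ℕ) : ℕ :=
  bif Nat.ble H (Nat.add d (Nat.mul (Nat.pow 2 (w-2)) cc)) then
    Nat.min (Nat.pow 2 (w-1)) (Nat.div (Nat.sub (Nat.add d (Nat.mul (Nat.pow 2 (w-2)) cc)) H) cc)
  else Nat.pow 2 (w-1)

def rep (w p A blk : ℕ) : ℕ := Nat.mul blk (Nat.div (Nat.sub (Nat.pow 2 (w*p*A)) 1) (Nat.sub (Nat.pow 2 (w*p)) 1))

def geM (w st m A r : ℕ) : ℕ := rep w (st*m) A (Nat.sub (Nat.pow 2 (w*st*m)) (Nat.pow 2 (w*st*r)))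
def ltM (w st m A r : ℕ) : ℕ := rep w (st*m) A (Nat.sub (Nat.pow 2 (w*st*r)) 1)

def stepL (sh cl g N : ℕ) : ℕ :=
  Nat.add (Nat.sub N (Nat.land N g)) (Nat.land (Nat.shiftRight (Nat.add (Nat.land N g) (Nat.land (Nat.shiftLeft N sh) g)) 1) cl)
def stepR (sh cl g N : ℕ) : ℕ :=
  Nat.add (Nat.sub N (Nat.land N g)) (Nat.land (Nat.shiftRight (Nat.add (Nat.land N g) (Nat.land (Nat.shiftRight N sh) g)) 1) cl)

/-- steps r = m - k, ..., m-1 -/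
def goL (w st m A sh cl : ℕ) : ℕ → ℕ → ℕ
  | 0, N => N
  | k + 1, N => goL w st m A sh cl k (stepL sh cl (geM w st m A (m - (k + 1))) N)
def goR (w st m A sh cl : ℕ) : ℕ → ℕ → ℕ
  | 0, N => N
  | k + 1, N => goR w st m A sh cl k (stepR sh cl (ltM w st m A (k + 1)) N)

structure Ten where
  n0 : ℕ
  n1 : ℕ
  n2 : ℕ
  N : ℕ

def W0 : ℕ := 64
def Ten.ok (t : Ten) : Bool :=
  Nat.beq (Nat.land t.N (rep W0 1 (t.n0*t.n1*t.n2) (Nat.pow 2 (W0-2)))) (rep W0 1 (t.n0*t.n1*t.n2) (Nat.pow 2 (W0-2)))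
def Ten.cl (t : Ten) : ℕ := rep W0 1 (t.n0*t.n1*t.n2) (Nat.sub (Nat.pow 2 (W0-1)) 1)
def Ten.left (ax : ℕ) (t : Ten) : Ten := ⟨t.n0, t.n1, t.n2,
  match ax with
  | 0 => goL W0 (t.n1*t.n2) t.n0 1 (W0*(t.n1*t.n2)) t.cl (t.n0 - 1) t.N
  | 1 => goL W0 t.n2 t.n1 t.n0 (W0*t.n2) t.cl (t.n1 - 1) t.N
  | _ => goL W0 1 t.n2 (t.n0*t.n1) (W0) t.cl (t.n2 - 1) t.N⟩
def Ten.right (ax : ℕ) (t : Ten) : Ten := ⟨t.n0, t.n1, t.n2,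
  match ax with
  | 0 => goR W0 (t.n1*t.n2) t.n0 1 (W0*(t.n1*t.n2)) t.cl (t.n0 - 1) t.N
  | 1 => goR W0 t.n2 t.n1 t.n0 (W0*t.n2) t.cl (t.n1 - 1) t.N
  | _ => goR W0 1 t.n2 (t.n0*t.n1) (W0) t.cl (t.n2 - 1) t.N⟩
def nx (ax : ℕ) : ℕ := match ax with | 0 => 1 | 1 => 2 | _ => 0
def chk : ℕ → ℕ → List Ten → Bool
  | 0, _, l => l.any Ten.ok
  | f + 1, ax, l => l.any Ten.ok || (chk f (nx ax) (l.map (Ten.left ax)) && chk f (nx ax) (l.map (Ten.right ax)))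

structure Ops (R : Type) where
  add : R → R → R
  mul : R → R → R
  c : ℤ → R

def Ops.gH {R : Type} (o : Ops R) (x : R) : List ℤ → R
  | [] => o.c 0
  | a :: l => o.add (o.c a) (o.mul x (o.gH x l))

def Ops.pow {R : Type} (o : Ops R) (x : R) : ℕ → R
  | 0 => o.c 1
  | n + 1 => o.mul x (o.pow x n)

def Ops.hL {R : Type} (o : Ops R) (x : R) : List R → R
  | [] => o.c 0
  | a :: l => o.add a (o.mul x (o.hL x l))

def Ops.addL {R : Type} (o : Ops R) (t : R) : List ℤ → List R → List R
  | [], m => m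
  | a :: l, [] => o.mul (o.c a) t :: o.addL t l []
  | a :: l, b :: m => o.add (o.mul (o.c a) t) b :: o.addL t l m

def Ops.rows {R : Type} (o : Ops R) (y : R) : List (List ℤ) → List R
  | [] => []
  | g :: l => o.addL (o.gH y g) g (o.rows y l)

def Ops.gG {R : Type} (o : Ops R) (x y : R) (l : List (List ℤ)) : R := o.hL x (o.rows y l)

/-- sum over k -/
def Ops.sS {R : Type} (o : Ops R) (x y h A r : R) : List (ℕ × List (List ℤ)) → ℕ → R → R → R
  | [], _, _, _ => o.c 0
  | p :: l, k, R0, R1 =>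
    o.add (o.mul (o.mul (o.c (2 ^ p.1)) (o.mul (o.pow h (16 - k)) R1)) (o.gG x y p.2))
      (o.sS x y h A r l (k + 1) R1
        (o.add (o.mul (o.c (2 * k + 12)) (o.mul A R1)) (o.mul (o.c (-(k * (k + 11)))) (o.mul r R0))))

def Ops.hh {R : Type} (o : Ops R) (x : R) : R := o.add (o.c 2) (o.mul (o.c 2) x)
def Ops.uu {R : Type} (o : Ops R) (x : R) : R := o.add (o.c (-2)) x
def Ops.qq {R : Type} (o : Ops R) (x : R) : R := o.mul (o.c 3) (o.mul x (o.add (o.c 4) x))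

def Ops.S {R : Type} (o : Ops R) (D : List (ℕ × List (List ℤ))) (x y z : R) : R :=
  o.sS x y (o.hh z)
    (o.add (o.mul (o.uu z) (o.mul (o.hh x) (o.hh y))) (o.mul (o.c (-1)) (o.mul (o.uu x) (o.mul (o.uu y) (o.hh z)))))
    (o.mul (o.mul (o.qq x) (o.qq y)) (o.mul (o.hh z) (o.hh z))) D 0 (o.c 0) (o.c 1)

def Ops.T {R : Type} (o : Ops R) (D : List (ℕ × List (List ℤ))) (x y z : R) : R :=
  o.mul (o.c (-1)) (o.add (o.S D x y z) (o.add (o.S D x z y) (o.S D y z x)))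

def opZ : Ops ℤ := ⟨Int.add, Int.mul, id⟩
def opN : Ops ℕ := ⟨Nat.add, Nat.mul, Int.natAbs⟩
def opD : Ops ℕ := ⟨Nat.max, fun a b => Nat.sub (Nat.add a b) 1, fun a => bif (a == 0) then 0 else 1⟩

def pk (w : ℕ) (f : ℕ → ℕ) (n : ℕ) : ℕ := ∑ j ∈ Finset.range n, f j * 2 ^ (w * j)

theorem pk_succ (w f n) : pk w f (n+1) = 2 ^ (w*n) * f n + pk w f n := by
  unfold pk; rw [Finset.sum_range_succ]; ring

theorem pk_lt (w f n) (h : ∀ j < n, f j < 2 ^ w) : pk w f n < 2 ^ (w * n) := by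
  induction n with
  | zero => simp [pk]
  | succ n ih =>
    have h1 := ih (fun j hj => h j (by omega))
    have h2 := h n (by omega)
    rw [pk_succ, mul_add, pow_add, mul_one]
    nlinarith [Nat.pos_of_ne_zero (pow_ne_zero (w*n) (two_ne_zero : (2:ℕ) ≠ 0))]

theorem pk_congr (w f g n) (h : ∀ j < n, f j = g j) : pk w f n = pk w g n := by
  unfold pk; exact Finset.sum_congr rfl (fun j hj => by rw [h j (Finset.mem_range.1 hj)])

theorem testBit_pk (w : ℕ) (hw : 0 < w) (f : ℕ → ℕ) (n : ℕ) (h : ∀ j < n, f j < 2 ^ w) (k : ℕ) :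
    (pk w f n).testBit k = (decide (k / w < n) && (f (k / w)).testBit (k % w)) := by
  induction n with
  | zero => simp [pk]
  | succ n ih =>
    have h1 := pk_lt w f n (fun j hj => h j (by omega))
    rw [pk_succ, Nat.testBit_two_pow_mul_add _ h1, ih (fun j hj => h j (by omega))]
    have key : k / w < n ↔ k < w * n := by
      rw [Nat.div_lt_iff_lt_mul hw, mul_comm]
    have e := Nat.div_add_mod k w
    have e2 := Nat.mod_lt k hw
    split_ifs with hk
    · have : k / w < n := key.2 hk
      simp [this, Nat.lt_succ_of_lt this]
    · have hk' : ¬ k / w < n := fun h => hk (key.1 h)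
      by_cases h3 : k / w = n
      · subst h3
        have : k - w * (k / w) = k % w := by omega
        simp [this]
      · have h4 : ¬ (k / w < n + 1) := by omega
        simp only [h4, decide_false, Bool.false_and]
        have h5 : n + 1 ≤ k / w := by omega
        have h6 : w * (n+1) ≤ k := by
          calc w * (n+1) ≤ w * (k/w) := Nat.mul_le_mul_left _ h5
            _ ≤ k := by omega
        apply Nat.testBit_lt_two_pow
        calc f n < 2 ^ w := h n (by omega)
          _ ≤ _ := Nat.pow_le_pow_right (by norm_num) (by rw [mul_add] at h6; omega)

def msk (w : ℕ) (c : ℕ → Bool) (j : ℕ) : ℕ := if c j then 2 ^ w - 1 else 0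

theorem msk_lt (w c j) : msk w c j < 2 ^ w := by
  unfold msk; have : 0 < 2 ^ w := by positivity
  split_ifs <;> omega

theorem land_msk (w : ℕ) (hw : 0 < w) (f : ℕ → ℕ) (c : ℕ → Bool) (n : ℕ) (h : ∀ j < n, f j < 2 ^ w) :
    Nat.land (pk w f n) (pk w (msk w c) n) = pk w (fun j => if c j then f j else 0) n := by
  apply Nat.eq_of_testBit_eq; intro k
  have hm := Nat.mod_lt k hw
  change ((pk w f n) &&& (pk w (msk w c) n)).testBit k = _
  rw [Nat.testBit_and, testBit_pk w hw _ n h, testBit_pk w hw _ n (fun j _ => msk_lt w c j),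
    testBit_pk w hw _ n (fun j hj => by have := h j hj; split_ifs <;> [exact this; positivity])]
  unfold msk
  by_cases h1 : k / w < n <;> cases h2 : c (k / w) <;> simp [h1, Nat.testBit_two_pow_sub_one, hm]

theorem land_shl (w : ℕ) (hw : 0 < w) (f : ℕ → ℕ) (c : ℕ → Bool) (n st : ℕ) (h : ∀ j < n, f j < 2 ^ w)
    (hc : ∀ j < n, c j → st ≤ j) :
    Nat.land (Nat.shiftLeft (pk w f n) (w * st)) (pk w (msk w c) n) = pk w (fun j => if c j then f (j - st) else 0) n := by
  apply Nat.eq_of_testBit_eq; intro k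
  have hm := Nat.mod_lt k hw
  change (((pk w f n) <<< (w * st)) &&& (pk w (msk w c) n)).testBit k = _
  rw [Nat.testBit_and, Nat.testBit_shiftLeft, testBit_pk w hw _ n h, testBit_pk w hw _ n (fun j _ => msk_lt w c j),
    testBit_pk w hw _ n (fun j hj => by
      split_ifs
      · exact h _ (by omega)
      · positivity)]
  unfold msk
  by_cases h1 : k / w < n
  swap
  · simp [h1]
  cases h2 : c (k / w)
  · simp
  have h3 := hc _ h1 h2
  have h4 : w * st ≤ k := (Nat.mul_le_mul_left w h3).trans (Nat.mul_div_le k w)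
  have h5 : (k - w * st) / w = k / w - st := by rw [Nat.sub_mul_div]
  have h6 : (k - w * st) % w = k % w := Nat.sub_mul_mod h4
  have h7 : k / w - st < n := by omega
  simp [h1, h4, h5, h6, h7, Nat.testBit_two_pow_sub_one, hm]

theorem land_shr (w : ℕ) (hw : 0 < w) (f : ℕ → ℕ) (c : ℕ → Bool) (n st : ℕ) (h : ∀ j < n, f j < 2 ^ w)
    (hc : ∀ j < n, c j → j + st < n) :
    Nat.land (Nat.shiftRight (pk w f n) (w * st)) (pk w (msk w c) n) = pk w (fun j => if c j then f (j + st) else 0) n := by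
  apply Nat.eq_of_testBit_eq; intro k
  have hm := Nat.mod_lt k hw
  change (((pk w f n) >>> (w * st)) &&& (pk w (msk w c) n)).testBit k = _
  rw [Nat.testBit_and, Nat.testBit_shiftRight, testBit_pk w hw _ n h, testBit_pk w hw _ n (fun j _ => msk_lt w c j),
    testBit_pk w hw _ n (fun j hj => by
      split_ifs with h1
      · exact h _ (hc j hj h1)
      · positivity)]
  unfold msk
  by_cases h1 : k / w < n
  swap
  · simp [h1]
  cases h2 : c (k / w)
  · simp
  have h3 := hc _ h1 h2
  have h5 : (w * st + k) / w = k / w + st := by rw [Nat.mul_add_div hw, add_comm]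
  have h6 : (w * st + k) % w = k % w := Nat.mul_add_mod _ _ _
  simp [h1, h5, h6, h3, Nat.testBit_two_pow_sub_one, hm]

theorem pk_half (w : ℕ) (hw : 0 < w) (f : ℕ → ℕ) (n : ℕ) (h : ∀ j < n, f j < 2 ^ w) :
    Nat.land (Nat.shiftRight (pk w f n) 1) (pk w (fun _ => 2 ^ (w-1) - 1) n) = pk w (fun j => f j / 2) n := by
  have hp : 2 ^ (w-1) ≤ 2 ^ w := Nat.pow_le_pow_right (by norm_num) (by omega)
  have hp' : 0 < 2 ^ (w-1) := by positivity
  apply Nat.eq_of_testBit_eq; intro k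
  have hm := Nat.mod_lt k hw
  have e := Nat.div_add_mod k w
  change (((pk w f n) >>> 1) &&& _).testBit k = _
  rw [Nat.testBit_and, Nat.testBit_shiftRight, testBit_pk w hw _ n h, testBit_pk w hw _ n (fun j _ => by omega),
    testBit_pk w hw _ n (fun j hj => by have := h j hj; omega)]
  by_cases h1 : k / w < n
  swap
  · simp [h1]
  simp only [h1, decide_true, Bool.true_and, Nat.testBit_two_pow_sub_one, Nat.testBit_div_two]
  by_cases h2 : k % w < w - 1
  · have h5 : (1 + k) / w = k / w := by
      rw [Nat.div_eq_iff hw, mul_comm (k / w) w]; constructor <;> omega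
    have h6 : (1 + k) % w = k % w + 1 := by
      have e' := Nat.div_add_mod (1+k) w
      rw [h5] at e'; omega
    simp [h2, h5, h6, h1]
  · have : k % w = w - 1 := by omega
    simp only [h2, decide_false, Bool.and_false]
    rw [this, Nat.sub_add_cancel (by omega)]
    exact (Nat.testBit_lt_two_pow (h _ h1)).symm

theorem pk_add (w f g n) : pk w f n + pk w g n = pk w (fun j => f j + g j) n := by
  unfold pk; rw [← Finset.sum_add_distrib]; simp only [add_mul]

theorem pk_rep (w p A : ℕ) (f : ℕ → ℕ) (hwp : 0 < w * p) (hf : ∀ i j, j < p → f (j + p * i) = f j) :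
    pk w f (p * A) = rep w p A (pk w f p) := by
  have h2 : 2 ≤ 2 ^ (w*p) := by
    calc 2 = 2 ^ 1 := rfl
      _ ≤ _ := Nat.pow_le_pow_right (by norm_num) hwp
  have : pk w f (p * A) = pk w f p * ∑ i ∈ Finset.range A, (2 ^ (w*p)) ^ i := by
    induction A with
    | zero => simp [pk]
    | succ A ih =>
      rw [Finset.sum_range_succ, mul_add (pk w f p), ← ih, mul_add, mul_one]
      unfold pk
      rw [Finset.sum_range_add, Finset.sum_mul]
      congr 1
      apply Finset.sum_congr rfl
      intro j hj
      rw [add_comm (p*A) j, hf A j (Finset.mem_range.1 hj), ← pow_mul, mul_assoc, ← pow_add]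
      congr 2; ring
  rw [this, Nat.geomSum_eq h2, ← pow_mul]
  rfl

theorem pk_full (w n : ℕ) : pk w (fun _ => 2 ^ w - 1) n = 2 ^ (w * n) - 1 := by
  have h0 : 1 ≤ 2 ^ w := Nat.one_le_two_pow
  have : pk w (fun _ => 2 ^ w - 1) n + 1 = 2 ^ (w*n) := by
    induction n with
    | zero => simp [pk]
    | succ n ih =>
      rw [pk_succ, add_assoc, ih, mul_add, pow_add, mul_one]
      obtain ⟨q, hq⟩ := Nat.exists_eq_add_of_le h0
      rw [hq]; simp; ring
  omega

theorem pk_const (w p : ℕ) (hw : 0 < w) (a : ℕ) : pk w (fun _ => a) p = rep w 1 p a := by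
  have := pk_rep w 1 p (fun _ => a) (by omega) (fun _ _ _ => rfl)
  rw [one_mul] at this
  rw [this]; congr 1; simp [pk]

theorem pk_ltM (w st m A r : ℕ) (hw : 0 < w) (hst : 0 < st) (hm : 0 < m) (hr : r ≤ m) :
    ltM w st m A r = pk w (msk w (fun j => decide (j / st % m < r))) (st * m * A) := by
  rw [pk_rep w (st*m) A _ (by positivity)]
  · unfold ltM
    congr 1
    obtain ⟨q, rfl⟩ := Nat.exists_eq_add_of_le hr
    have : pk w (msk w (fun j => decide (j / st % (r+q) < r))) (st * (r+q)) = pk w (fun _ => 2 ^ w - 1) (st * r) := by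
      rw [mul_add]; unfold pk
      rw [Finset.sum_range_add]
      have z : ∑ x ∈ Finset.range (st*q), msk w (fun j => decide (j / st % (r+q) < r)) (st * r + x) * 2 ^ (w * (st * r + x)) = 0 := by
        apply Finset.sum_eq_zero
        intro x hx
        have hx' := Finset.mem_range.1 hx
        have h1 : (st * r + x) / st = r + x / st := Nat.mul_add_div hst _ _
        have h2 : x / st < q := by rw [Nat.div_lt_iff_lt_mul hst]; linarith
        have h3 : (r + x/st) % (r+q) = r + x / st := Nat.mod_eq_of_lt (by omega)
        simp [msk, h1, h3]
      rw [z, add_zero]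
      apply Finset.sum_congr rfl
      intro x hx
      have hx' := Finset.mem_range.1 hx
      have h2 : x / st < r := by rw [Nat.div_lt_iff_lt_mul hst]; linarith
      have h3 : (x/st) % (r+q) = x / st := Nat.mod_eq_of_lt (by omega)
      simp [msk, h3, h2]
    rw [this, pk_full, mul_assoc]; rfl
  · intro i j hj
    have : (j + st * m * i) / st % m = j / st % m := by
      rw [mul_assoc, Nat.add_mul_div_left _ _ hst, Nat.add_mul_mod_self_left]
    simp [msk, this]

theorem pk_geM (w st m A r : ℕ) (hw : 0 < w) (hst : 0 < st) (hm : 0 < m) (hr : r ≤ m) :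
    geM w st m A r = pk w (msk w (fun j => decide (r ≤ j / st % m))) (st * m * A) := by
  rw [pk_rep w (st*m) A _ (by positivity)]
  · unfold geM
    congr 1
    have e1 : pk w (msk w (fun j => decide (r ≤ j / st % m))) (st * m) + pk w (msk w (fun j => decide (j / st % m < r))) (st * m * 1)
        = 2 ^ (w * (st * m)) - 1 := by
      rw [mul_one, pk_add, ← pk_full]
      apply pk_congr
      intro j hj
      unfold msk
      by_cases h : r ≤ j / st % m
      · simp [h]
      · simp [h, not_le.1 h]
    rw [← pk_ltM w st m 1 r hw hst hm hr] at e1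
    have e2 : ltM w st m 1 r = 2 ^ (w * st * r) - 1 := by
      unfold ltM rep
      rw [mul_one]
      have : 0 < 2 ^ (w * (st * m)) - 1 := by
        have : 2 ≤ 2 ^ (w * (st * m)) := by
          calc 2 = 2 ^ 1 := rfl
            _ ≤ _ := Nat.pow_le_pow_right (by norm_num) (by have : 0 < w * (st * m) := by positivity
                                                            omega)
        omega
      change (2 ^ (w * st * r) - 1) * ((2 ^ (w * (st * m)) - 1) / (2 ^ (w * (st * m)) - 1)) = _
      rw [Nat.div_self this, mul_one]
    rw [e2] at e1
    have h1 : 1 ≤ 2 ^ (w * st * r) := Nat.one_le_two_pow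
    have h2 : 1 ≤ 2 ^ (w * (st * m)) := Nat.one_le_two_pow
    rw [mul_assoc]
    change 2 ^ (w * (st * m)) - 2 ^ (w * st * r) = _
    omega
  · intro i j hj
    have : (j + st * m * i) / st % m = j / st % m := by
      rw [mul_assoc, Nat.add_mul_div_left _ _ hst, Nat.add_mul_mod_self_left]
    simp [msk, this]

theorem stepL_pk (w st m A r : ℕ) (f : ℕ → ℕ) (hw : 0 < w) (hst : 0 < st) (hr1 : 1 ≤ r) (hr : r ≤ m)
    (hf : ∀ j, f j < 2 ^ (w-1)) :
    stepL (w * st) (pk w (fun _ => 2 ^ (w-1) - 1) (st * m * A)) (geM w st m A r) (pk w f (st * m * A))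
      = pk w (fun j => if r ≤ j / st % m then (f j + f (j - st)) / 2 else f j) (st * m * A) := by
  have hp : 2 ^ (w-1) + 2 ^ (w-1) = 2 ^ w := by rw [← two_mul, ← pow_succ']; congr 1; omega
  have hf' : ∀ j < st * m * A, f j < 2 ^ w := fun j _ => by have := hf j; omega
  unfold stepL
  rw [pk_geM w st m A r hw hst (by omega) hr, land_msk w hw f _ _ hf', land_shl w hw f _ _ st hf']
  swap
  · intro j _ hj
    by_contra hh
    have : j / st = 0 := Nat.div_eq_of_lt (by omega)
    simp [this] at hj; omega
  have e1 : pk w f (st * m * A) = pk w (fun j => if decide (r ≤ j / st % m) = true then f j else 0) (st * m * A)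
      + pk w (fun j => if r ≤ j / st % m then 0 else f j) (st * m * A) := by
    rw [pk_add]; apply pk_congr; intro j _; by_cases h : r ≤ j / st % m <;> simp [h]
  change (_ - _) + Nat.land (Nat.shiftRight (_ + _) 1) _ = _
  rw [pk_add, pk_half w hw]
  · conv_lhs => rw [e1]
    rw [Nat.add_sub_cancel_left, pk_add]
    apply pk_congr; intro j _; by_cases h : r ≤ j / st % m <;> simp [h]
  · intro j _
    have h1 := hf j; have h2 := hf (j - st)
    split_ifs <;> omega

theorem stepR_pk (w st m A r : ℕ) (f : ℕ → ℕ) (hw : 0 < w) (hst : 0 < st) (hr : r + 1 ≤ m)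
    (hf : ∀ j, f j < 2 ^ (w-1)) :
    stepR (w * st) (pk w (fun _ => 2 ^ (w-1) - 1) (st * m * A)) (ltM w st m A r) (pk w f (st * m * A))
      = pk w (fun j => if j / st % m < r then (f j + f (j + st)) / 2 else f j) (st * m * A) := by
  have hp : 2 ^ (w-1) + 2 ^ (w-1) = 2 ^ w := by rw [← two_mul, ← pow_succ']; congr 1; omega
  have hf' : ∀ j < st * m * A, f j < 2 ^ w := fun j _ => by have := hf j; omega
  unfold stepR
  rw [pk_ltM w st m A r hw hst (by omega) (by omega), land_msk w hw f _ _ hf', land_shr w hw f _ _ st hf']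
  swap
  · intro j hjn hj
    have hj' : j / st % m < r := by simpa using hj
    have h1 : j / st < m * A := by
      rw [Nat.div_lt_iff_lt_mul hst]; calc j < st * m * A := hjn
        _ = m * A * st := by ring
    have h2 : j / st / m < A := by rw [Nat.div_lt_iff_lt_mul (by omega)]; linarith
    have h3 := Nat.div_add_mod (j / st) m
    have h4 : m * (j / st / m + 1) ≤ m * A := Nat.mul_le_mul_left _ h2
    have h5 : j / st + 1 < m * A := by rw [mul_add] at h4; omega
    have h6 : (j + st) / st < m * A := by rw [Nat.add_div_right _ hst]; exact h5
    rw [Nat.div_lt_iff_lt_mul hst] at h6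
    calc j + st < m * A * st := h6
      _ = _ := by ring
  have e1 : pk w f (st * m * A) = pk w (fun j => if decide (j / st % m < r) = true then f j else 0) (st * m * A)
      + pk w (fun j => if j / st % m < r then 0 else f j) (st * m * A) := by
    rw [pk_add]; apply pk_congr; intro j _; by_cases h : j / st % m < r <;> simp [h]
  change (_ - _) + Nat.land (Nat.shiftRight (_ + _) 1) _ = _
  rw [pk_add, pk_half w hw]
  · conv_lhs => rw [e1]
    rw [Nat.add_sub_cancel_left, pk_add]
    apply pk_congr; intro j _; by_cases h : j / st % m < r <;> simp [h]
  · intro j _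
    have h1 := hf j; have h2 := hf (j + st)
    split_ifs <;> omega

noncomputable def av (b : ℕ → ℝ) : ℕ → ℝ := fun i => (b i + b (i+1)) / 2
noncomputable def avn : ℕ → (ℕ → ℝ) → ℕ → ℝ
  | 0, b => b
  | k + 1, b => avn k (av b)

theorem avn_succ' (k : ℕ) (b : ℕ → ℝ) : avn (k+1) b = av (avn k b) := by
  induction k generalizing b with
  | zero => rfl
  | succ k ih => rw [avn, ih, ← avn]

theorem avn_shift (k : ℕ) (b : ℕ → ℝ) (i : ℕ) : avn k (fun j => b (j+1)) i = avn k b (i+1) := by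
  induction k generalizing b with
  | zero => rfl
  | succ k ih => 
    rw [avn, avn, ← ih]; rfl

noncomputable def Ph : ℕ → (ℕ → ℝ) → ℝ → ℝ
  | 0, b, _ => b 0
  | d + 1, b, x => (1 - x) * Ph d b x + x * Ph d (fun i => b (i+1)) x

theorem Ph_mono (d : ℕ) (b b' : ℕ → ℝ) (x : ℝ) (hx : 0 ≤ x) (hx1 : x ≤ 1) (h : ∀ i ≤ d, b i ≤ b' i) :
    Ph d b x ≤ Ph d b' x := by
  induction d generalizing b b' with
  | zero => exact h 0 le_rfl
  | succ d ih =>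
    have h1 := ih b b' (fun i hi => h i (by omega))
    have h2 := ih (fun i => b (i+1)) (fun i => b' (i+1)) (fun i hi => h (i+1) (by omega))
    simp only [Ph]
    have := mul_le_mul_of_nonneg_left h1 (sub_nonneg.2 hx1)
    have := mul_le_mul_of_nonneg_left h2 hx
    linarith

theorem Ph_zero (d : ℕ) (x : ℝ) : Ph d (fun _ => 0) x = 0 := by
  induction d with
  | zero => rfl
  | succ d ih => simp [Ph, ih]

theorem Ph_av (d : ℕ) (b b' : ℕ → ℝ) (x : ℝ) :
    Ph d (fun i => (b i + b' i) / 2) x = (Ph d b x + Ph d b' x) / 2 := by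
  induction d generalizing b b' with
  | zero => rfl
  | succ d ih => simp only [Ph]; rw [ih, ih (fun i => b (i+1)) (fun i => b' (i+1))]; ring

theorem Ph_left_eq (d : ℕ) (b : ℕ → ℝ) (x : ℝ) : Ph d (fun i => avn i b 0) x = Ph d b (x/2) := by
  induction d generalizing b with
  | zero => rfl
  | succ d ih =>
    simp only [Ph]
    rw [ih]
    have : (fun i => avn (i+1) b 0) = fun i => avn i (av b) 0 := rfl
    rw [this, ih]
    have := Ph_av d b (fun i => b (i+1)) (x/2)
    unfold av
    rw [this]; ring

theorem Ph_right_eq (d : ℕ) (b : ℕ → ℝ) (x : ℝ) : Ph d (fun i => avn (d - i) b i) x = Ph d b ((1+x)/2) := by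
  induction d generalizing b with
  | zero => rfl
  | succ d ih =>
    simp only [Ph]
    have e1 : Ph d (fun i => avn (d + 1 - i) b i) x = Ph d (fun i => avn (d - i) (av b) i) x := by
      apply le_antisymm_iff.2
      have key : ∀ i ≤ d, avn (d + 1 - i) b i = avn (d - i) (av b) i := fun i hi => by
        rw [Nat.succ_sub hi]; rfl
      have : ∀ d' (b b' : ℕ → ℝ), (∀ i ≤ d', b i = b' i) → Ph d' b x = Ph d' b' x := by
        intro d'
        induction d' with
        | zero => intro b b' h; exact h 0 le_rfl
        | succ d' ih => intro b b' h; simp only [Ph]; rw [ih b b' (fun i hi => h i (by omega)), ih (fun i => b (i+1)) (fun i => b' (i+1)) (fun i hi => h (i+1) (by omega))]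
      exact le_antisymm_iff.1 (this d _ _ key)
    have e2 : (fun i => avn (d + 1 - (i+1)) b (i+1)) = fun i => avn (d - i) (fun j => b (j+1)) i := by
      funext i; rw [Nat.add_sub_add_right, avn_shift]
    rw [e1, e2, ih, ih]
    have := Ph_av d b (fun i => b (i+1)) ((1+x)/2)
    unfold av
    rw [this]; ring

theorem avn_Ph (n d : ℕ) (g : ℕ → ℕ → ℝ) (z : ℝ) (i : ℕ) :
    avn n (fun j => Ph d (g j) z) i = Ph d (fun k => avn n (fun j => g j k) i) z := by
  induction n generalizing g with
  | zero => rfl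
  | succ n ih =>
    have : av (fun j => Ph d (g j) z) = fun j => Ph d (fun k => (g j k + g (j+1) k) / 2) z := by
      funext j; unfold av; rw [Ph_av]
    rw [avn, this, ih]; rfl

def fL (st m : ℕ) : ℕ → (ℕ → ℕ) → (ℕ → ℕ)
  | 0, f => f
  | k + 1, f => fL st m k (fun j => if m - (k+1) ≤ j / st % m then (f j + f (j - st)) / 2 else f j)
def fR (st m : ℕ) : ℕ → (ℕ → ℕ) → (ℕ → ℕ)
  | 0, f => f
  | k + 1, f => fR st m k (fun j => if j / st % m < k + 1 then (f j + f (j + st)) / 2 else f j)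

theorem fL_lt (st m k B : ℕ) (f : ℕ → ℕ) (h : ∀ j, f j < B) : ∀ j, fL st m k f j < B := by
  induction k generalizing f with
  | zero => exact h
  | succ k ih =>
    apply ih; intro j
    have h1 := h j; have h2 := h (j - st)
    split_ifs <;> omega
theorem fR_lt (st m k B : ℕ) (f : ℕ → ℕ) (h : ∀ j, f j < B) : ∀ j, fR st m k f j < B := by
  induction k generalizing f with
  | zero => exact h
  | succ k ih =>
    apply ih; intro j
    have h1 := h j; have h2 := h (j + st)
    split_ifs <;> omega

theorem goL_pk (w st m A k : ℕ) (f : ℕ → ℕ) (hw : 0 < w) (hst : 0 < st) (hk : k + 1 ≤ m)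
    (hf : ∀ j, f j < 2 ^ (w-1)) :
    goL w st m A (w*st) (pk w (fun _ => 2 ^ (w-1) - 1) (st * m * A)) k (pk w f (st * m * A)) =
      pk w (fL st m k f) (st * m * A) := by
  induction k generalizing f with
  | zero => rfl
  | succ k ih =>
    rw [goL, stepL_pk w st m A _ f hw hst (by omega) (by omega) hf, ih _ (by omega), fL]
    intro j
    have h1 := hf j; have h2 := hf (j - st)
    split_ifs <;> omega

theorem goR_pk (w st m A k : ℕ) (f : ℕ → ℕ) (hw : 0 < w) (hst : 0 < st) (hk : k + 1 ≤ m)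
    (hf : ∀ j, f j < 2 ^ (w-1)) :
    goR w st m A (w*st) (pk w (fun _ => 2 ^ (w-1) - 1) (st * m * A)) k (pk w f (st * m * A)) =
      pk w (fR st m k f) (st * m * A) := by
  induction k generalizing f with
  | zero => rfl
  | succ k ih =>
    rw [goR, stepR_pk w st m A _ f hw hst (by omega) hf, ih _ (by omega), fR]
    intro j
    have h1 := hf j; have h2 := hf (j + st)
    split_ifs <;> omega

theorem idx_dig (st m lo hi i : ℕ) (hlo : lo < st) (hi' : i < m) : (lo + st * (i + m * hi)) / st % m = i := by
  rw [Nat.add_mul_div_left _ _ (by omega), Nat.div_eq_of_lt hlo, zero_add, Nat.add_mul_mod_self_left, Nat.mod_eq_of_lt hi']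

theorem half_cast (a b : ℕ) (c : ℝ) : (((a + b) / 2 : ℕ) : ℝ) - c ≤ ((a - c) + (b - c)) / 2 := by
  have := @Nat.cast_div_le ℝ _ _ _ (a+b) 2
  push_cast at this
  linarith

theorem fL_sound (st m lo hi : ℕ) (hlo : lo < st) (b : ℕ → ℝ) (c : ℝ) (k r : ℕ) (f : ℕ → ℕ) (hk : r + k + 1 = m)
    (h : ∀ i < m, (f (lo + st * (i + m * hi)) : ℝ) - c ≤ if r ≤ i then avn r b (i - r) else avn i b 0) :
    ∀ i < m, (fL st m k f (lo + st * (i + m * hi)) : ℝ) - c ≤ avn i b 0 := by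
  induction k generalizing f r with
  | zero =>
    intro i hi
    have := h i hi
    rw [fL]
    split_ifs at this with h1
    · have e : r = i := by omega
      subst e
      rwa [Nat.sub_self] at this
    · exact this
  | succ k ih =>
    rw [fL]
    apply ih (r+1) _ (by omega)
    intro i hi'
    have e : m - (k+1) = r + 1 := by omega
    simp only [idx_dig st m lo hi i hlo hi', e]
    have h0 := h i hi'
    by_cases hri : r + 1 ≤ i
    · rw [if_pos hri, if_pos hri]
      have h1 := h (i-1) (by omega)
      rw [if_pos (by omega)] at h0 h1
      have e2 : lo + st * (i + m * hi) - st = lo + st * ((i-1) + m * hi) := by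
        obtain ⟨q, rfl⟩ : ∃ q, i = q + 1 := ⟨i-1, by omega⟩
        rw [Nat.add_sub_cancel]
        have : lo + st * (q + 1 + m * hi) = lo + st * (q + m * hi) + st := by ring
        rw [this, Nat.add_sub_cancel]
      rw [e2]
      refine (half_cast _ _ c).trans ?_
      rw [avn_succ']; unfold av
      have e3 : i - (r+1) + 1 = i - r := by omega
      have e4 : i - 1 - r = i - (r+1) := by omega
      rw [e4] at h1
      rw [e3]; linarith
    · rw [if_neg hri, if_neg hri]
      split_ifs at h0 with h1
      · have : r = i := by omega
        subst this; simpa using h0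
      · exact h0

theorem fR_sound (st m lo hi : ℕ) (hlo : lo < st) (b : ℕ → ℝ) (c : ℝ) (k r : ℕ) (f : ℕ → ℕ) (hk : r + k + 1 = m)
    (h : ∀ i < m, (f (lo + st * (i + m * hi)) : ℝ) - c ≤ if i ≤ k then avn r b i else avn (m - 1 - i) b i) :
    ∀ i < m, (fR st m k f (lo + st * (i + m * hi)) : ℝ) - c ≤ avn (m - 1 - i) b i := by
  induction k generalizing f r with
  | zero =>
    intro i hi
    have := h i hi
    rw [fR]
    split_ifs at this with h1
    · have e : i = 0 := by omega
      have e' : m - 1 - i = r := by omega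
      rw [e']; exact this
    · exact this
  | succ k ih =>
    rw [fR]
    apply ih (r+1) _ (by omega)
    intro i hi'
    simp only [idx_dig st m lo hi i hlo hi']
    have h0 := h i hi'
    by_cases hri : i < k + 1
    · rw [if_pos hri, if_pos (by omega)]
      have h1 := h (i+1) (by omega)
      rw [if_pos (by omega)] at h0 h1
      have e2 : lo + st * (i + m * hi) + st = lo + st * ((i+1) + m * hi) := by ring
      rw [e2]
      refine (half_cast _ _ c).trans ?_
      rw [avn_succ']; unfold av
      linarith
    · rw [if_neg hri, if_neg (by omega)]
      split_ifs at h0 with h1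
      · have e : m - 1 - i = r := by omega
        rw [e]; exact h0
      · exact h0

structure Ten.Is (t : Ten) (f : ℕ → ℕ) : Prop where
  eq : t.N = pk W0 f (t.n0 * t.n1 * t.n2)
  lt : ∀ j, f j < 2 ^ (W0 - 1)
  h0 : 0 < t.n0
  h1 : 0 < t.n1
  h2 : 0 < t.n2

noncomputable def Ten.val (t : Ten) (f : ℕ → ℕ) (x y z : ℝ) : ℝ :=
  Ph (t.n0 - 1) (fun i => Ph (t.n1 - 1) (fun j => Ph (t.n2 - 1) (fun k =>
    (f (k + t.n2 * (j + t.n1 * i)) : ℝ) - 2 ^ (W0 - 2)) z) y) x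

def I01 (x : ℝ) : Prop := 0 ≤ x ∧ x ≤ 1

def Ten.LB (t : Ten) (F : ℝ → ℝ → ℝ → ℝ) : Prop :=
  ∃ f, t.Is f ∧ ∀ x y z, I01 x → I01 y → I01 z → t.val f x y z ≤ F x y z

theorem Ten.cl_eq (t : Ten) : t.cl = pk W0 (fun _ => 2 ^ (W0-1) - 1) (t.n0 * t.n1 * t.n2) := by
  rw [pk_const _ _ (by decide)]; rfl

theorem Ten.LB_ok (t : Ten) (F) (h : t.LB F) (hok : t.ok = true) (x y z : ℝ) (hx : I01 x) (hy : I01 y) (hz : I01 z) :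
    0 ≤ F x y z := by
  obtain ⟨f, hf, hF⟩ := h
  refine le_trans ?_ (hF x y z hx hy hz)
  have hw : 0 < W0 := by decide
  have key : ∀ j < t.n0 * t.n1 * t.n2, 2 ^ (W0-2) ≤ f j := by
    intro j hj
    unfold Ten.ok at hok
    rw [← pk_const _ _ hw, hf.eq] at hok
    have hok := Nat.eq_of_beq_eq_true hok
    change ((_ : ℕ) &&& (_ : ℕ)) = _ at hok
    simp only [show Nat.pow 2 (W0-2) = 2 ^ (W0-2) from rfl] at hok
    have h2 := congrArg (fun n => n.testBit (W0 * j + (W0-2))) hok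
    simp only [Nat.testBit_and] at h2
    have hp : (2:ℕ) ^ (W0-1) < 2 ^ W0 := by decide
    have hp' : (2:ℕ) ^ (W0-2) < 2 ^ W0 := by decide
    have e1 : (W0 * j + (W0-2)) / W0 = j := by
      rw [Nat.mul_add_div hw, Nat.div_eq_of_lt (by decide), add_zero]
    have e2 : (W0 * j + (W0-2)) % W0 = W0 - 2 := by
      rw [Nat.mul_add_mod, Nat.mod_eq_of_lt (by decide)]
    rw [testBit_pk W0 hw _ _ (fun j _ => hp'), testBit_pk W0 hw _ _ (fun j _ => (hf.lt j).trans hp), e1, e2] at h2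
    simp [hj] at h2
    exact Nat.ge_two_pow_of_testBit h2
  unfold Ten.val
  have z0 : Ph (t.n0 - 1) (fun i => Ph (t.n1 - 1) (fun j => Ph (t.n2 - 1) (fun k => 0) z) y) x = 0 := by
    simp [Ph_zero]
  rw [← z0]
  apply Ph_mono _ _ _ _ hx.1 hx.2
  intro i hi
  apply Ph_mono _ _ _ _ hy.1 hy.2
  intro j hj
  apply Ph_mono _ _ _ _ hz.1 hz.2
  intro k hk
  have hh : k + t.n2 * (j + t.n1 * i) < t.n0 * t.n1 * t.n2 := by
    have a0 := hf.h0; have a1 := hf.h1; have a2 := hf.h2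
    have b1 : t.n1 * (i+1) ≤ t.n1 * t.n0 := Nat.mul_le_mul_left _ (by omega)
    have b2 : j + t.n1 * i + 1 ≤ t.n1 * t.n0 := by rw [mul_add] at b1; omega
    have b3 := Nat.mul_le_mul_left t.n2 b2
    have b4 : t.n2 * (t.n1 * t.n0) = t.n0 * t.n1 * t.n2 := by ring
    rw [mul_add, b4] at b3
    omega
  have := key _ hh
  have : ((2 ^ (W0-2) : ℕ) : ℝ) ≤ f (k + t.n2 * (j + t.n1 * i)) := by exact_mod_cast this
  push_cast at this
  linarith

theorem I01.half {x} (h : I01 x) : I01 (x/2) := ⟨by linarith [h.1], by linarith [h.2]⟩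
theorem I01.half' {x} (h : I01 x) : I01 ((1+x)/2) := ⟨by linarith [h.1], by linarith [h.2]⟩

def axF (φ : ℝ → ℝ) (ax : ℕ) (F : ℝ → ℝ → ℝ → ℝ) : ℝ → ℝ → ℝ → ℝ := fun x y z =>
  match ax with
  | 0 => F (φ x) y z
  | 1 => F x (φ y) z
  | _ => F x y (φ z)

theorem Ten.LB_left (t : Ten) (F) (h : t.LB F) (ax : ℕ) : (t.left ax).LB (axF (fun x => x/2) ax F) := by
  obtain ⟨f, hf, hF⟩ := h
  have a0 := hf.h0; have a1 := hf.h1; have a2 := hf.h2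
  have hw : 0 < W0 := by decide
  match ax with
  | 0 =>
    refine ⟨fL (t.n1*t.n2) t.n0 (t.n0 - 1) f, ⟨?_, fL_lt _ _ _ _ f hf.lt, a0, a1, a2⟩, ?_⟩
    · have e : t.n0 * t.n1 * t.n2 = (t.n1 * t.n2) * t.n0 * 1 := by ring
      have := goL_pk W0 (t.n1*t.n2) t.n0 1 (t.n0-1) f hw (by positivity) (by omega) hf.lt
      rw [← e, ← hf.eq, ← t.cl_eq] at this
      exact this
    · intro x y z hx hy hz
      refine le_trans ?_ (hF (x/2) y z hx.half hy hz)
      unfold Ten.val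
      rw [← Ph_left_eq]
      apply Ph_mono _ _ _ _ hx.1 hx.2
      intro i hi
      rw [avn_Ph]
      apply Ph_mono _ _ _ _ hy.1 hy.2
      intro j hj
      rw [avn_Ph]
      apply Ph_mono _ _ _ _ hz.1 hz.2
      intro k hk
      change i ≤ t.n0 - 1 at hi
      change j ≤ t.n1 - 1 at hj
      change k ≤ t.n2 - 1 at hk
      have e : ∀ i, k + t.n2 * (j + t.n1 * i) = (k + t.n2 * j) + (t.n1*t.n2) * (i + t.n0 * 0) := fun i => by ring
      have b2 : (k + t.n2 * j) < t.n1 * t.n2 := by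
        have := Nat.mul_le_mul_left t.n2 (show j + 1 ≤ t.n1 by omega)
        rw [mul_comm t.n1]; rw [mul_add] at this; omega
      have := fL_sound (t.n1*t.n2) t.n0 (k + t.n2 * j) 0 b2 (fun i => (f (k + t.n2*(j + t.n1*i)) : ℝ) - 2^(W0-2)) (2^(W0-2)) (t.n0-1) 0 f (by omega) (fun i hi => by rw [← e]; simp [avn]) i (by omega)
      rw [← e] at this
      exact this
  | 1 =>
    refine ⟨fL t.n2 t.n1 (t.n1 - 1) f, ⟨?_, fL_lt _ _ _ _ f hf.lt, a0, a1, a2⟩, ?_⟩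
    · have e : t.n0 * t.n1 * t.n2 = t.n2 * t.n1 * t.n0 := by ring
      have := goL_pk W0 t.n2 t.n1 t.n0 (t.n1-1) f hw (by positivity) (by omega) hf.lt
      rw [← e, ← hf.eq, ← t.cl_eq] at this
      exact this
    · intro x y z hx hy hz
      refine le_trans ?_ (hF x (y/2) z hx hy.half hz)
      unfold Ten.val
      apply Ph_mono _ _ _ _ hx.1 hx.2
      intro i hi
      rw [← Ph_left_eq]
      apply Ph_mono _ _ _ _ hy.1 hy.2
      intro j hj
      rw [avn_Ph]
      apply Ph_mono _ _ _ _ hz.1 hz.2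
      intro k hk
      exact fL_sound t.n2 t.n1 k i (by change k ≤ t.n2 - 1 at hk; omega) _ _ (t.n1-1) 0 f (by omega) (fun i hi => by simp [avn]) j (by change j ≤ t.n1 - 1 at hj; omega)
  | ax+2 =>
    refine ⟨fL 1 t.n2 (t.n2 - 1) f, ⟨?_, fL_lt _ _ _ _ f hf.lt, a0, a1, a2⟩, ?_⟩
    · have e : t.n0 * t.n1 * t.n2 = 1 * t.n2 * (t.n0 * t.n1) := by ring
      have := goL_pk W0 1 t.n2 (t.n0*t.n1) (t.n2-1) f hw (by positivity) (by omega) hf.lt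
      rw [← e, ← hf.eq, ← t.cl_eq, mul_one] at this
      exact this
    · intro x y z hx hy hz
      refine le_trans ?_ (hF x y (z/2) hx hy hz.half)
      unfold Ten.val
      apply Ph_mono _ _ _ _ hx.1 hx.2
      intro i hi
      apply Ph_mono _ _ _ _ hy.1 hy.2
      intro j hj
      rw [← Ph_left_eq]
      apply Ph_mono _ _ _ _ hz.1 hz.2
      intro k hk
      have e : ∀ k, k + t.n2 * (j + t.n1 * i) = 0 + 1 * (k + t.n2 * (j + t.n1 * i)) := fun i => by ring
      have := fL_sound 1 t.n2 0 (j + t.n1 * i) (by omega) (fun k => (f (k + t.n2 * (j + t.n1 * i)) : ℝ) - 2 ^ (W0-2)) (2 ^ (W0-2)) (t.n2-1) 0 f (by omega) (fun i hi => by simp [avn]) k (by change k ≤ t.n2 - 1 at hk; omega)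
      rw [← e] at this
      exact this

theorem Ten.LB_right (t : Ten) (F) (h : t.LB F) (ax : ℕ) : (t.right ax).LB (axF (fun x => (1+x)/2) ax F) := by
  obtain ⟨f, hf, hF⟩ := h
  have a0 := hf.h0; have a1 := hf.h1; have a2 := hf.h2
  have hw : 0 < W0 := by decide
  match ax with
  | 0 =>
    refine ⟨fR (t.n1*t.n2) t.n0 (t.n0 - 1) f, ⟨?_, fR_lt _ _ _ _ f hf.lt, a0, a1, a2⟩, ?_⟩
    · have e : t.n0 * t.n1 * t.n2 = (t.n1 * t.n2) * t.n0 * 1 := by ring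
      have := goR_pk W0 (t.n1*t.n2) t.n0 1 (t.n0-1) f hw (by positivity) (by omega) hf.lt
      rw [← e, ← hf.eq, ← t.cl_eq] at this
      exact this
    · intro x y z hx hy hz
      refine le_trans ?_ (hF ((1+x)/2) y z hx.half' hy hz)
      unfold Ten.val
      rw [← Ph_right_eq]
      apply Ph_mono _ _ _ _ hx.1 hx.2
      intro i hi
      rw [avn_Ph]
      apply Ph_mono _ _ _ _ hy.1 hy.2
      intro j hj
      rw [avn_Ph]
      apply Ph_mono _ _ _ _ hz.1 hz.2
      intro k hk
      change i ≤ t.n0 - 1 at hi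
      change j ≤ t.n1 - 1 at hj
      change k ≤ t.n2 - 1 at hk
      have e : ∀ i, k + t.n2 * (j + t.n1 * i) = (k + t.n2 * j) + (t.n1*t.n2) * (i + t.n0 * 0) := fun i => by ring
      have b2 : (k + t.n2 * j) < t.n1 * t.n2 := by
        have := Nat.mul_le_mul_left t.n2 (show j + 1 ≤ t.n1 by omega)
        rw [mul_comm t.n1]; rw [mul_add] at this; omega
      have := fR_sound (t.n1*t.n2) t.n0 (k + t.n2 * j) 0 b2 (fun i => (f (k + t.n2*(j + t.n1*i)) : ℝ) - 2^(W0-2)) (2^(W0-2)) (t.n0-1) 0 f (by omega) (fun i hi => by rw [← e]; rw [if_pos (by omega)]; simp [avn]) i (by omega)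
      rw [← e] at this
      exact this
  | 1 =>
    refine ⟨fR t.n2 t.n1 (t.n1 - 1) f, ⟨?_, fR_lt _ _ _ _ f hf.lt, a0, a1, a2⟩, ?_⟩
    · have e : t.n0 * t.n1 * t.n2 = t.n2 * t.n1 * t.n0 := by ring
      have := goR_pk W0 t.n2 t.n1 t.n0 (t.n1-1) f hw (by positivity) (by omega) hf.lt
      rw [← e, ← hf.eq, ← t.cl_eq] at this
      exact this
    · intro x y z hx hy hz
      refine le_trans ?_ (hF x ((1+y)/2) z hx hy.half' hz)
      unfold Ten.val
      apply Ph_mono _ _ _ _ hx.1 hx.2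
      intro i hi
      rw [← Ph_right_eq]
      apply Ph_mono _ _ _ _ hy.1 hy.2
      intro j hj
      rw [avn_Ph]
      apply Ph_mono _ _ _ _ hz.1 hz.2
      intro k hk
      exact fR_sound t.n2 t.n1 k i (by change k ≤ t.n2 - 1 at hk; omega) _ _ (t.n1-1) 0 f (by omega) (fun i hi => by rw [if_pos (by omega)]; simp [avn]) j (by change j ≤ t.n1 - 1 at hj; omega)
  | ax+2 =>
    refine ⟨fR 1 t.n2 (t.n2 - 1) f, ⟨?_, fR_lt _ _ _ _ f hf.lt, a0, a1, a2⟩, ?_⟩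
    · have e : t.n0 * t.n1 * t.n2 = 1 * t.n2 * (t.n0 * t.n1) := by ring
      have := goR_pk W0 1 t.n2 (t.n0*t.n1) (t.n2-1) f hw (by positivity) (by omega) hf.lt
      rw [← e, ← hf.eq, ← t.cl_eq, mul_one] at this
      exact this
    · intro x y z hx hy hz
      refine le_trans ?_ (hF x y ((1+z)/2) hx hy hz.half')
      unfold Ten.val
      apply Ph_mono _ _ _ _ hx.1 hx.2
      intro i hi
      apply Ph_mono _ _ _ _ hy.1 hy.2
      intro j hj
      rw [← Ph_right_eq]
      apply Ph_mono _ _ _ _ hz.1 hz.2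
      intro k hk
      have e : ∀ k, k + t.n2 * (j + t.n1 * i) = 0 + 1 * (k + t.n2 * (j + t.n1 * i)) := fun i => by ring
      have := fR_sound 1 t.n2 0 (j + t.n1 * i) (by omega) (fun k => (f (k + t.n2 * (j + t.n1 * i)) : ℝ) - 2 ^ (W0-2)) (2 ^ (W0-2)) (t.n2-1) 0 f (by omega) (fun i hi => by rw [if_pos (by omega)]; simp [avn]) k (by change k ≤ t.n2 - 1 at hk; omega)
      rw [← e] at this
      exact this

def Good (Fs : List (ℝ → ℝ → ℝ → ℝ)) : Prop :=
  ∀ x y z, I01 x → I01 y → I01 z → ∃ F ∈ Fs, 0 ≤ F x y z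

theorem Good_split (Fs : List (ℝ → ℝ → ℝ → ℝ)) (ax : ℕ) (h1 : Good (Fs.map (axF (fun x => x/2) ax)))
    (h2 : Good (Fs.map (axF (fun x => (1+x)/2) ax))) : Good Fs := by
  intro x y z hx hy hz
  have key : ∀ x, I01 x → (∃ x', I01 x' ∧ x'/2 = x) ∨ (∃ x', I01 x' ∧ (1+x')/2 = x) := by
    intro x hx
    rcases le_total x (1/2) with h | h
    · left; exact ⟨2*x, ⟨by linarith [hx.1], by linarith⟩, by ring⟩
    · right; exact ⟨2*x-1, ⟨by linarith [hx.1], by linarith [hx.2]⟩, by ring⟩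
  match ax, h1, h2 with
  | 0, h1, h2 =>
    rcases key x hx with ⟨x', hx', rfl⟩ | ⟨x', hx', rfl⟩
    · obtain ⟨F, hF, h⟩ := h1 x' y z hx' hy hz
      obtain ⟨G, hG, rfl⟩ := List.mem_map.1 hF
      exact ⟨G, hG, h⟩
    · obtain ⟨F, hF, h⟩ := h2 x' y z hx' hy hz
      obtain ⟨G, hG, rfl⟩ := List.mem_map.1 hF
      exact ⟨G, hG, h⟩
  | 1, h1, h2 =>
    rcases key y hy with ⟨x', hx', rfl⟩ | ⟨x', hx', rfl⟩
    · obtain ⟨F, hF, h⟩ := h1 x x' z hx hx' hz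
      obtain ⟨G, hG, rfl⟩ := List.mem_map.1 hF
      exact ⟨G, hG, h⟩
    · obtain ⟨F, hF, h⟩ := h2 x x' z hx hx' hz
      obtain ⟨G, hG, rfl⟩ := List.mem_map.1 hF
      exact ⟨G, hG, h⟩
  | ax+2, h1, h2 =>
    rcases key z hz with ⟨x', hx', rfl⟩ | ⟨x', hx', rfl⟩
    · obtain ⟨F, hF, h⟩ := h1 x y x' hx hy hx'
      obtain ⟨G, hG, rfl⟩ := List.mem_map.1 hF
      exact ⟨G, hG, h⟩
    · obtain ⟨F, hF, h⟩ := h2 x y x' hx hy hx'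
      obtain ⟨G, hG, rfl⟩ := List.mem_map.1 hF
      exact ⟨G, hG, h⟩

theorem LBs_left (ts : List Ten) (Fs) (h : List.Forall₂ Ten.LB ts Fs) (ax : ℕ) :
    List.Forall₂ Ten.LB (ts.map (Ten.left ax)) (Fs.map (axF (fun x => x/2) ax)) := by
  rw [List.forall₂_map_left_iff, List.forall₂_map_right_iff]
  exact h.imp (fun t F h => t.LB_left F h ax)
theorem LBs_right (ts : List Ten) (Fs) (h : List.Forall₂ Ten.LB ts Fs) (ax : ℕ) :
    List.Forall₂ Ten.LB (ts.map (Ten.right ax)) (Fs.map (axF (fun x => (1+x)/2) ax)) := by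
  rw [List.forall₂_map_left_iff, List.forall₂_map_right_iff]
  exact h.imp (fun t F h => t.LB_right F h ax)

theorem any_sound (ts : List Ten) (Fs) (h : List.Forall₂ Ten.LB ts Fs) (hok : ts.any Ten.ok = true) : Good Fs := by
  intro x y z hx hy hz
  induction h with
  | nil => simp at hok
  | @cons t F ts Fs h1 _ ih =>
    rw [List.any_cons, Bool.or_eq_true] at hok
    rcases hok with hok | hok
    · exact ⟨F, by simp, t.LB_ok F h1 hok x y z hx hy hz⟩
    · obtain ⟨G, hG, hh⟩ := ih hok
      exact ⟨G, by simp [hG], hh⟩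

theorem chk_sound (fuel ax : ℕ) (ts : List Ten) (Fs) (h : List.Forall₂ Ten.LB ts Fs) (hok : chk fuel ax ts = true) :
    Good Fs := by
  induction fuel generalizing ax ts Fs with
  | zero => exact any_sound ts Fs h hok
  | succ fuel ih =>
    rw [chk, Bool.or_eq_true, Bool.and_eq_true] at hok
    rcases hok with hok | ⟨h1, h2⟩
    · exact any_sound ts Fs h hok
    · exact Good_split Fs ax (ih _ _ _ (LBs_left ts Fs h ax) h1) (ih _ _ _ (LBs_right ts Fs h ax) h2)

structure Ops.Rel {R R' : Type} (o : Ops R) (o' : Ops R') (r : R → R' → Prop) : Prop where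
  add : ∀ {a a' b b'}, r a a' → r b b' → r (o.add a b) (o'.add a' b')
  mul : ∀ {a a' b b'}, r a a' → r b b' → r (o.mul a b) (o'.mul a' b')
  c : ∀ n, r (o.c n) (o'.c n)

section
variable {R R' : Type} {o : Ops R} {o' : Ops R'} {r : R → R' → Prop}
theorem rel_gH (H : Ops.Rel o o' r) {x x'} (hx : r x x') (l : List ℤ) : r (o.gH x l) (o'.gH x' l) := by
  induction l with
  | nil => exact H.c _
  | cons a l ih => exact H.add (H.c _) (H.mul hx ih)
theorem rel_pow (H : Ops.Rel o o' r) {x x'} (hx : r x x') (n : ℕ) : r (o.pow x n) (o'.pow x' n) := by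
  induction n with
  | zero => exact H.c _
  | succ a ih => exact H.mul hx ih
theorem rel_hL (H : Ops.Rel o o' r) {x x'} (hx : r x x') {l l'} (h : List.Forall₂ r l l') : r (o.hL x l) (o'.hL x' l') := by
  induction h with
  | nil => exact H.c _
  | cons a l ih => exact H.add a (H.mul hx ih)
theorem rel_addL (H : Ops.Rel o o' r) {x x'} (hx : r x x') (g : List ℤ) {l l'} (h : List.Forall₂ r l l') :
    List.Forall₂ r (o.addL x g l) (o'.addL x' g l') := by
  induction g generalizing l l' with
  | nil => cases h with
    | nil => exact .nil
    | cons a b => exact .cons a b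
  | cons a g ih => cases h with
    | nil => exact .cons (H.mul (H.c _) hx) (ih .nil)
    | cons b h => exact .cons (H.add (H.mul (H.c _) hx) b) (ih h)
theorem rel_rows (H : Ops.Rel o o' r) {x x'} (hx : r x x') (l : List (List ℤ)) :
    List.Forall₂ r (o.rows x l) (o'.rows x' l) := by
  induction l with
  | nil => exact .nil
  | cons a g ih => exact rel_addL H (rel_gH H hx a) a ih
theorem rel_gG (H : Ops.Rel o o' r) {x x' y y'} (hx : r x x') (hy : r y y') (l : List (List ℤ)) :
    r (o.gG x y l) (o'.gG x' y' l) := rel_hL H hx (rel_rows H hy l)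
theorem rel_sS (H : Ops.Rel o o' r) {x x' y y' h h' A A' q q'} (hx : r x x') (hy : r y y') (hh : r h h') (hA : r A A') (hq : r q q') (l : List (ℕ × List (List ℤ)))
    (k : ℕ) {R0 R0' R1 R1'} (h0 : r R0 R0') (h1 : r R1 R1') :
    r (o.sS x y h A q l k R0 R1) (o'.sS x' y' h' A' q' l k R0' R1') := by
  induction l generalizing k R0 R0' R1 R1' with
  | nil => exact H.c _
  | cons a g ih =>
    exact H.add (H.mul (H.mul (H.c _) (H.mul (rel_pow H hh _) h1)) (rel_gG H hx hy _))
      (ih _ h1 (H.add (H.mul (H.c _) (H.mul hA h1)) (H.mul (H.c _) (H.mul hq h0))))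
theorem rel_hh (H : Ops.Rel o o' r) {x x'} (hx : r x x') : r (o.hh x) (o'.hh x') := H.add (H.c _) (H.mul (H.c _) hx)
theorem rel_uu (H : Ops.Rel o o' r) {x x'} (hx : r x x') : r (o.uu x) (o'.uu x') := H.add (H.c _) hx
theorem rel_qq (H : Ops.Rel o o' r) {x x'} (hx : r x x') : r (o.qq x) (o'.qq x') := H.mul (H.c _) (H.mul hx (H.add (H.c _) hx))
theorem rel_S (H : Ops.Rel o o' r) (D) {x x' y y' z z'} (hx : r x x') (hy : r y y') (hz : r z z') : r (o.S D x y z) (o'.S D x' y' z') :=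
  rel_sS H hx hy (rel_hh H hz)
    (H.add (H.mul (rel_uu H hz) (H.mul (rel_hh H hx) (rel_hh H hy)))
      (H.mul (H.c _) (H.mul (rel_uu H hx) (H.mul (rel_uu H hy) (rel_hh H hz)))))
    (H.mul (H.mul (rel_qq H hx) (rel_qq H hy)) (H.mul (rel_hh H hz) (rel_hh H hz))) D 0 (H.c 0) (H.c 1)
theorem rel_T (H : Ops.Rel o o' r) (D) {x x' y y' z z'} (hx : r x x') (hy : r y y') (hz : r z z') : r (o.T D x y z) (o'.T D x' y' z') :=
  H.mul (H.c _) (H.add (rel_S H D hx hy hz) (H.add (rel_S H D hx hz hy) (rel_S H D hy hz hx)))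
end

abbrev MP := MvPolynomial (Fin 3) ℤ
noncomputable def opP : Ops MP := ⟨fun a b => a + b, fun a b => a * b, fun n => MvPolynomial.C n⟩
noncomputable def opR : Ops ℝ := ⟨fun a b => a + b, fun a b => a * b, fun n => (n : ℝ)⟩

theorem rel_Z (v : Fin 3 → ℤ) : Ops.Rel opP opZ (fun P a => MvPolynomial.eval v P = a) where
  add := by rintro a _ b _ rfl rfl; simp [opP, opZ]
  mul := by rintro a _ b _ rfl rfl; simp [opP, opZ]
  c := by intro n; simp [opP, opZ]

theorem rel_R (v : Fin 3 → ℝ) : Ops.Rel opP opR (fun P a => MvPolynomial.aeval v P = a) where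
  add := by rintro a _ b _ rfl rfl; simp [opP, opR]
  mul := by rintro a _ b _ rfl rfl; simp [opP, opR]
  c := by intro n; simp [opP, opR]

def relN' (P : MP) (n : ℕ) : Prop := ∃ Q : MvPolynomial (Fin 3) ℕ, (∀ s, (P.coeff s).natAbs ≤ Q.coeff s) ∧ MvPolynomial.eval (fun _ => 1) Q ≤ n

theorem rel_N : Ops.Rel opP opN relN' where
  add := by
    rintro a a' b b' ⟨Q, hQ, h⟩ ⟨Q', hQ', h'⟩
    refine ⟨Q + Q', fun s => ?_, ?_⟩
    · simp only [opP, MvPolynomial.coeff_add]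
      exact (Int.natAbs_add_le _ _).trans (add_le_add (hQ s) (hQ' s))
    · rw [map_add]; exact add_le_add h h'
  mul := by
    rintro a a' b b' ⟨Q, hQ, h⟩ ⟨Q', hQ', h'⟩
    refine ⟨Q * Q', fun s => ?_, ?_⟩
    · simp only [opP, MvPolynomial.coeff_mul]
      refine (Int.natAbs_sum_le _ _).trans (Finset.sum_le_sum fun i _ => ?_)
      rw [Int.natAbs_mul]; exact Nat.mul_le_mul (hQ _) (hQ' _)
    · rw [map_mul]; exact Nat.mul_le_mul h h'
  c := by
    intro n
    refine ⟨MvPolynomial.C n.natAbs, fun s => ?_, by simp [opN]⟩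
    simp only [opP, MvPolynomial.coeff_C]
    split_ifs <;> simp

theorem relN_bound {P : MP} {n : ℕ} (h : relN' P n) (s) : (P.coeff s).natAbs ≤ n := by
  obtain ⟨Q, hQ, h⟩ := h
  refine (hQ s).trans (le_trans ?_ h)
  rw [MvPolynomial.eval_eq]
  by_cases hs : s ∈ Q.support
  · refine le_trans ?_ (Finset.single_le_sum (f := fun d => Q.coeff d * ∏ i ∈ d.support, (1:ℕ) ^ d i) (fun i _ => Nat.zero_le _) hs)
    simp
  · rw [MvPolynomial.notMem_support_iff.1 hs]; exact Nat.zero_le _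

def relD' (i : Fin 3) (P : MP) (n : ℕ) : Prop := ∀ s, P.coeff s ≠ 0 → s i < n

theorem rel_D (i : Fin 3) : Ops.Rel opP opD (relD' i) where
  add := by
    intro a a' b b' h h' s hs
    simp only [opP, MvPolynomial.coeff_add] at hs
    change _ < max a' b'
    by_cases h0 : a.coeff s = 0
    · rw [h0, zero_add] at hs; exact lt_max_of_lt_right (h' s hs)
    · exact lt_max_of_lt_left (h s h0)
  mul := by
    intro a a' b b' h h' s hs
    simp only [opP, MvPolynomial.coeff_mul] at hs
    obtain ⟨⟨p, q⟩, hp, hne⟩ := Finset.exists_ne_zero_of_sum_ne_zero hs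
    have e := Finset.HasAntidiagonal.mem_antidiagonal.1 hp
    have h1 := h p (left_ne_zero_of_mul hne)
    have h2 := h' q (right_ne_zero_of_mul hne)
    change _ < a' + b' - 1
    rw [← e]
    change p i + q i < _
    omega
  c := by
    intro n s hs
    simp only [opP, MvPolynomial.coeff_C] at hs
    split_ifs at hs with h0
    · subst h0
      have : (n == 0) = false := by simpa using hs
      simp [opD, this]
    · exact absurd rfl hs

theorem relD_X (i j : Fin 3) : relD' i (MvPolynomial.X j) (if i = j then 2 else 1) := by
  intro s hs
  rw [MvPolynomial.coeff_X] at hs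
  split_ifs at hs with h
  · subst h
    by_cases h : i = j
    · subst h; simp
    · simp [h, Finsupp.single_eq_of_ne h]
  · exact absurd rfl hs
theorem relN_X (j : Fin 3) : relN' (MvPolynomial.X j) 1 := by
  refine ⟨MvPolynomial.X j, fun s => ?_, by simp⟩
  rw [MvPolynomial.coeff_X, MvPolynomial.coeff_X]
  split_ifs <;> simp

theorem sum_blk {α : Type*} [AddCommMonoid α] (m n : ℕ) (g : ℕ → α) :
    ∑ i ∈ Finset.range m, ∑ k ∈ Finset.range n, g (k + n * i) = ∑ j ∈ Finset.range (m * n), g j := by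
  induction m with
  | zero => simp
  | succ m ih =>
    rw [Finset.sum_range_succ, ih, add_mul, one_mul, Finset.sum_range_add]
    congr 1
    exact Finset.sum_congr rfl fun k _ => by congr 1; ring

theorem sum_blk3 {α : Type*} [AddCommMonoid α] (n0 n1 n2 : ℕ) (g : ℕ → α) :
    ∑ i ∈ Finset.range n0, ∑ j ∈ Finset.range n1, ∑ k ∈ Finset.range n2, g (k + n2 * (j + n1 * i))
      = ∑ j ∈ Finset.range (n0 * n1 * n2), g j := by
  rw [sum_blk n0 n1 (fun m => ∑ k ∈ Finset.range n2, g (k + n2 * m)), sum_blk]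

theorem lev_eq (F : ℕ → ℕ → ℕ) (b v : ℕ) (l : List ℕ) (cc N : ℕ) :
    lev F b v l cc N = ∑ i ∈ Finset.range l.length, F (cc * l.getD i 0) (N / 2 ^ (b * i) % 2 ^ b) * 2 ^ (v * i) := by
  induction l generalizing N with
  | nil => simp [lev]
  | cons C l ih =>
    rw [List.length_cons, Finset.sum_range_succ', lev, ih]
    change F (cc * C) (N % 2 ^ b) + 2 ^ v * _ = _
    rw [Finset.mul_sum, add_comm]
    congr 1
    · refine Finset.sum_congr rfl fun i _ => ?_
      simp only [List.getD_cons_succ]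
      rw [show Nat.div N (Nat.pow 2 b) = N / 2 ^ b from rfl, Nat.div_div_eq_div_mul, ← pow_add]
      rw [show b + b * i = b * (i+1) by ring, show v * (i+1) = v + v * i by ring, pow_add]
      ring
    · simp

theorem pk_dig (w a i n : ℕ) (hw : 0 < w) (d : ℕ → ℕ) (hd : ∀ j < n, d j < 2 ^ w) (h : a * i + a ≤ n) :
    pk w d n / 2 ^ (w * a * i) % 2 ^ (w * a) = pk w (fun j => d (j + a * i)) a := by
  apply Nat.eq_of_testBit_eq
  intro k
  rw [Nat.testBit_mod_two_pow, Nat.testBit_div_two_pow, testBit_pk w hw _ _ hd,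
    testBit_pk w hw _ _ (fun j hj => hd _ (by omega))]
  have e1 : (k + w * a * i) / w = k / w + a * i := by
    rw [mul_assoc, Nat.add_mul_div_left _ _ hw]
  have e2 : (k + w * a * i) % w = k % w := by
    rw [mul_assoc, Nat.add_mul_mod_self_left]
  rw [e1, e2]
  have e3 : k < w * a ↔ k / w < a := by rw [Nat.div_lt_iff_lt_mul hw, mul_comm]
  by_cases h1 : k / w < a
  · simp [h1, e3.2 h1, show k / w + a * i < n by omega]
  · simp [h1, mt e3.1 h1]

theorem pk_dig1 (w i n : ℕ) (hw : 0 < w) (d : ℕ → ℕ) (hd : ∀ j < n, d j < 2 ^ w) (h : i < n) :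
    pk w d n / 2 ^ (w * i) % 2 ^ w = d i := by
  have := pk_dig w 1 i n hw d hd (by omega)
  rw [mul_one] at this
  rw [this]; simp [pk]

theorem lev3_eq (w v n0 n1 n2 cc : ℕ) (F : ℕ → ℕ → ℕ) (L0 L1 L2 : List ℕ) (h0 : L0.length = n0) (h1 : L1.length = n1) (h2 : L2.length = n2)
    (hw : 0 < w) (p1 : 0 < n1) (p2 : 0 < n2)
    (d : ℕ → ℕ) (hd : ∀ j < n0 * n1 * n2, d j < 2 ^ w) :
    lev (lev (lev F w v L2) (w * n2) (v * n2) L1) (w * (n1 * n2)) (v * (n1 * n2)) L0 cc (pk w d (n0 * n1 * n2))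
      = pk v (fun m => F (cc * L0.getD (m / n2 / n1) 0 * L1.getD (m / n2 % n1) 0 * L2.getD (m % n2) 0) (d m)) (n0 * n1 * n2) := by
  unfold pk
  rw [← sum_blk3 n0 n1 n2 (fun j => _ * 2 ^ (v * j))]
  rw [lev_eq, h0]
  refine Finset.sum_congr rfl fun i hi => ?_
  have hi := Finset.mem_range.1 hi
  change lev _ _ _ _ _ (pk w d (n0 * n1 * n2) / _ % _) * _ = _
  have b1 : (n1 * n2) * i + n1 * n2 ≤ n0 * n1 * n2 := by
    calc (n1 * n2) * i + n1 * n2 = (n1*n2) * (i+1) := by ring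
      _ ≤ (n1*n2) * n0 := Nat.mul_le_mul_left _ hi
      _ = _ := by ring
  rw [pk_dig w (n1*n2) i _ hw d hd b1, lev_eq, h1, Finset.sum_mul]
  refine Finset.sum_congr rfl fun j hj => ?_
  have hj := Finset.mem_range.1 hj
  have b2 : n2 * j + n2 ≤ n1 * n2 := by
    calc n2 * j + n2 = n2 * (j+1) := by ring
      _ ≤ n2 * n1 := Nat.mul_le_mul_left _ hj
      _ = _ := by ring
  rw [pk_dig w n2 j _ hw _ (fun m hm => hd _ (by omega)) b2, lev_eq, h2, Finset.sum_mul, Finset.sum_mul]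
  refine Finset.sum_congr rfl fun k hk => ?_
  have hk := Finset.mem_range.1 hk
  rw [pk_dig1 w k _ hw _ (fun m hm => hd _ (by nlinarith)) hk]
  have e1 : (k + n2 * (j + n1 * i)) % n2 = k := by rw [Nat.add_mul_mod_self_left, Nat.mod_eq_of_lt hk]
  have e2 : (k + n2 * (j + n1 * i)) / n2 = j + n1 * i := by rw [Nat.add_mul_div_left _ _ p2, Nat.div_eq_of_lt hk, zero_add]
  have e3 : (j + n1 * i) % n1 = j := by rw [Nat.add_mul_mod_self_left, Nat.mod_eq_of_lt hj]
  have e4 : (j + n1 * i) / n1 = i := by rw [Nat.add_mul_div_left _ _ p1, Nat.div_eq_of_lt hj, zero_add]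
  simp only [e1, e2, e3, e4]
  rw [show k + n2 * j + n1 * n2 * i = k + n2 * (j + n1 * i) by ring]
  rw [mul_assoc, mul_assoc, ← pow_add, ← pow_add]
  congr 2; ring

theorem ent_le (w H cc d : ℕ) : ent w H cc d ≤ 2 ^ (w-1) := by
  unfold ent
  cases Nat.ble H (Nat.add d (Nat.mul (Nat.pow 2 (w-2)) cc))
  · exact le_rfl
  · exact min_le_left _ _

theorem ent_lt (w H cc d : ℕ) (h : ent w H cc d < 2 ^ (w-1)) : ent w H cc d * cc + H ≤ d + 2 ^ (w-2) * cc := by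
  unfold ent at h ⊢
  cases hb : Nat.ble H (Nat.add d (Nat.mul (Nat.pow 2 (w-2)) cc)) with
  | false => rw [hb] at h; exact absurd h (lt_irrefl _)
  | true =>
    rw [hb] at h
    simp only [cond_true] at h ⊢
    have hb := Nat.le_of_ble_eq_true hb
    change H ≤ d + 2 ^ (w-2) * cc at hb
    change min (2 ^ (w-1)) ((d + 2 ^ (w-2) * cc - H) / cc) < _ at h
    change min (2 ^ (w-1)) ((d + 2 ^ (w-2) * cc - H) / cc) * cc + H ≤ _
    have h3 := Nat.div_mul_le_self (d + 2 ^ (w-2) * cc - H) cc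
    have h4 := Nat.mul_le_mul_right cc (min_le_right (2 ^ (w-1)) ((d + 2 ^ (w-2) * cc - H) / cc))
    omega

noncomputable def cf (P : MP) (i j k : ℕ) : ℤ := P.coeff (Finsupp.equivFunOnFinite.symm ![i, j, k])

theorem eval_cf {A : Type} [CommRing A] (P : MP) (n0 n1 n2 : ℕ) (h0 : relD' 0 P n0) (h1 : relD' 1 P n1) (h2 : relD' 2 P n2) (v : Fin 3 → A) :
    MvPolynomial.aeval v P = ∑ i ∈ Finset.range n0, ∑ j ∈ Finset.range n1, ∑ k ∈ Finset.range n2,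
      (cf P i j k : A) * (v 0 ^ i * v 1 ^ j * v 2 ^ k) := by
  rw [← Finset.sum_product', ← Finset.sum_product', MvPolynomial.aeval_def, MvPolynomial.eval₂_eq']
  let e : (ℕ × ℕ) × ℕ → (Fin 3 →₀ ℕ) := fun p => Finsupp.equivFunOnFinite.symm ![p.1.1, p.1.2, p.2]
  have he : Function.Injective e := by
    intro p q h
    have h := Finsupp.equivFunOnFinite.symm.injective h
    have a0 := congrFun h 0; have a1 := congrFun h 1; have a2 := congrFun h 2
    simp at a0 a1 a2
    ext <;> assumption
  have hsub : P.support ⊆ (((Finset.range n0 ×ˢ Finset.range n1) ×ˢ Finset.range n2).map ⟨e, he⟩) := by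
    intro s hs
    have hs := MvPolynomial.mem_support_iff.1 hs
    rw [Finset.mem_map]
    refine ⟨((s 0, s 1), s 2), by simp [h0 s hs, h1 s hs, h2 s hs], ?_⟩
    ext i; fin_cases i <;> simp [e]
  rw [Finset.sum_subset hsub, Finset.sum_map]
  · refine Finset.sum_congr rfl fun p _ => ?_
    simp [e, cf, Fin.prod_univ_three]
  · intro s _ hs
    rw [MvPolynomial.notMem_support_iff.1 hs]; simp

theorem cf_bound {P : MP} {n : ℕ} (h : relN' P n) (i j k) : |cf P i j k| ≤ n := by
  have := relN_bound h (Finsupp.equivFunOnFinite.symm ![i, j, k])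
  unfold cf; rw [Int.abs_eq_natAbs]; exact_mod_cast this

theorem Ph_eq (d : ℕ) (b : ℕ → ℝ) (x : ℝ) :
    Ph d b x = ∑ i ∈ Finset.range (d+1), (d.choose i : ℝ) * b i * (x ^ i * (1-x) ^ (d-i)) := by
  induction d generalizing b with
  | zero => simp [Ph]
  | succ d ih =>
    rw [Ph, ih, ih, Finset.sum_range_succ' _ (d+1)]
    simp only [Nat.choose_succ_succ', Nat.cast_add, add_mul, Finset.sum_add_distrib, Nat.add_sub_add_right]
    rw [Finset.sum_range_succ' _ d, Finset.sum_range_succ (fun i => ((d.choose (i+1) : ℕ) : ℝ) * _ * _) d, Nat.choose_succ_self]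
    rw [mul_add, Finset.mul_sum, Finset.mul_sum]
    have e1 : ∑ i ∈ Finset.range d, (1-x) * (((d.choose (i+1) : ℕ) : ℝ) * b (i+1) * (x ^ (i+1) * (1-x)^(d-(i+1))))
      = ∑ i ∈ Finset.range d, ((d.choose (i+1) : ℕ) : ℝ) * b (i+1) * (x ^ (i+1) * (1-x)^(d-i)) := by
      refine Finset.sum_congr rfl fun i hi => ?_
      have : d - i = (d - (i+1)) + 1 := by have := Finset.mem_range.1 hi; omega
      rw [this]; ring
    have e2 : ∑ i ∈ Finset.range (d+1), x * (((d.choose i : ℕ) : ℝ) * b (i+1) * (x ^ i * (1-x)^(d-i)))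
      = ∑ i ∈ Finset.range (d+1), ((d.choose i : ℕ) : ℝ) * b (i+1) * (x ^ (i+1) * (1-x)^(d-i)) := by
      refine Finset.sum_congr rfl fun i hi => ?_
      ring
    rw [e1, e2]; simp; ring

def rootOf (w n1 n2 : ℕ) (L0 L1 L2 : List ℕ) (cc N : ℕ) : ℕ :=
  lev (lev (lev (ent W0 (2^(w-1))) w W0 L2) (w*n2) (W0*n2) L1) (w*(n1*n2)) (W0*(n1*n2)) L0 cc N
def kron (w n : ℕ) (e : ℤ) : ℕ := Int.toNat (Int.add e (Int.ofNat (rep w 1 n (2^(w-1)))))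
def topOk (n N : ℕ) : Bool := Nat.beq (Nat.land N (rep W0 1 n (2^(W0-1)))) 0

theorem topOk_lt (n : ℕ) (f : ℕ → ℕ) (hf : ∀ j, f j ≤ 2 ^ (W0-1)) (h : topOk n (pk W0 f n) = true) (j : ℕ) (hj : j < n) :
    f j < 2 ^ (W0-1) := by
  have hw : 0 < W0 := by decide
  have hp : (2:ℕ) ^ (W0-1) < 2 ^ W0 := by decide
  unfold topOk at h
  have h := Nat.eq_of_beq_eq_true h
  rw [← pk_const _ _ hw] at h
  change ((_ : ℕ) &&& (_ : ℕ)) = _ at h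
  have h2 := congrArg (fun n => n.testBit (W0 * j + (W0-1))) h
  simp only [Nat.testBit_and] at h2
  have e1 : (W0 * j + (W0-1)) / W0 = j := by
    rw [Nat.mul_add_div hw, Nat.div_eq_of_lt (by decide), add_zero]
  have e2 : (W0 * j + (W0-1)) % W0 = W0 - 1 := by
    rw [Nat.mul_add_mod, Nat.mod_eq_of_lt (by decide)]
  rw [testBit_pk W0 hw _ _ (fun j _ => hp), testBit_pk W0 hw _ _ (fun j _ => (hf j).trans_lt hp), e1, e2] at h2
  simp [hj] at h2
  rcases (hf j).lt_or_eq with h | h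
  · exact h
  · rw [h] at h2; simp at h2

theorem root_LB (w n0 n1 n2 cc b : ℕ) (L0 L1 L2 : List ℕ) (h0 : L0.length = n0) (h1 : L1.length = n1) (h2 : L2.length = n2)
    (c0 : ∀ i < n0, L0.getD i 0 = (n0-1).choose i) (c1 : ∀ i < n1, L1.getD i 0 = (n1-1).choose i)
    (c2 : ∀ i < n2, L2.getD i 0 = (n2-1).choose i)
    (hw : 0 < w) (p0 : 0 < n0) (p1 : 0 < n1) (p2 : 0 < n2) (hcc : 0 < cc)
    (P : MP) (hN : relN' P b) (hb : b < 2 ^ (w-1)) (d0 : relD' 0 P n0) (d1 : relD' 1 P n1) (d2 : relD' 2 P n2)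
    (ev : ℤ) (hev : MvPolynomial.eval ![2 ^ (w * (n1 * n2)), 2 ^ (w * n2), 2 ^ w] P = ev)
    (ht : topOk (n0 * n1 * n2) (rootOf w n1 n2 L0 L1 L2 cc (kron w (n0 * n1 * n2) ev)) = true)
    (F : ℝ → ℝ → ℝ → ℝ) (hFc : Continuous (fun p : ℝ × ℝ × ℝ => F p.1 p.2.1 p.2.2))
    (hF : ∀ x y z, 0 ≤ x → x < 1 → 0 ≤ y → y < 1 → 0 ≤ z → z < 1 →
      (1-x) ^ (n0-1) * (1-y) ^ (n1-1) * (1-z) ^ (n2-1) * MvPolynomial.aeval ![x/(1-x), y/(1-y), z/(1-z)] P = F x y z * cc) :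
    Ten.LB ⟨n0, n1, n2, rootOf w n1 n2 L0 L1 L2 cc (kron w (n0 * n1 * n2) ev)⟩ F := by
  let p : ℕ → ℤ := fun m => cf P (m / n2 / n1) (m / n2 % n1) (m % n2)
  have hp : ∀ i j k, i < n0 → j < n1 → k < n2 → p (k + n2 * (j + n1 * i)) = cf P i j k := by
    intro i j k hi hj hk
    have e1 : (k + n2 * (j + n1 * i)) % n2 = k := by rw [Nat.add_mul_mod_self_left, Nat.mod_eq_of_lt hk]
    have e2 : (k + n2 * (j + n1 * i)) / n2 = j + n1 * i := by rw [Nat.add_mul_div_left _ _ p2, Nat.div_eq_of_lt hk, zero_add]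
    have e3 : (j + n1 * i) % n1 = j := by rw [Nat.add_mul_mod_self_left, Nat.mod_eq_of_lt hj]
    have e4 : (j + n1 * i) / n1 = i := by rw [Nat.add_mul_div_left _ _ p1, Nat.div_eq_of_lt hj, zero_add]
    simp only [p, e1, e2, e3, e4]
  have hpb : ∀ m, |p m| < 2 ^ (w-1) := fun m => (cf_bound hN _ _ _).trans_lt (by exact_mod_cast hb)
  have hww : (2:ℕ) ^ w = 2 * 2 ^ (w-1) := by rw [← pow_succ']; congr 1; omega
  let d : ℕ → ℕ := fun m => (p m + 2 ^ (w-1)).toNat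
  have hd : ∀ m, (d m : ℤ) = p m + 2 ^ (w-1) := fun m => Int.toNat_of_nonneg (by have := abs_lt.1 (hpb m); linarith)
  have hd2 : ∀ m, d m < 2 ^ w := by
    intro m
    have : (d m : ℤ) < ((2 ^ w : ℕ) : ℤ) := by rw [hww, hd]; push_cast; have := abs_lt.1 (hpb m); linarith
    exact_mod_cast this
  have hk : kron w (n0 * n1 * n2) ev = pk w d (n0 * n1 * n2) := by
    have : ev + (rep w 1 (n0 * n1 * n2) (2 ^ (w-1)) : ℕ) = ((pk w d (n0 * n1 * n2) : ℕ) : ℤ) := by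
      rw [← pk_const _ _ hw, ← hev]
      unfold pk
      push_cast
      have := eval_cf P n0 n1 n2 d0 d1 d2 (![2 ^ (w * (n1 * n2)), 2 ^ (w * n2), 2 ^ w] : Fin 3 → ℤ)
      have h5 := DFunLike.congr_fun (MvPolynomial.coe_aeval_eq_eval (![2 ^ (w * (n1 * n2)), 2 ^ (w * n2), 2 ^ w] : Fin 3 → ℤ)) P
      rw [← h5]
      refine (congrArg (· + _) this).trans ?_
      simp only [hd, add_mul, Finset.sum_add_distrib]
      congr 1
      rw [← sum_blk3 n0 n1 n2]
      refine Finset.sum_congr rfl fun i hi => Finset.sum_congr rfl fun j hj => Finset.sum_congr rfl fun k hk => ?_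
      rw [hp i j k (Finset.mem_range.1 hi) (Finset.mem_range.1 hj) (Finset.mem_range.1 hk)]
      simp only [Matrix.cons_val_zero, Matrix.cons_val_one, Matrix.cons_val, Int.cast_id, ← pow_mul, ← pow_add]
      congr 2; ring
    unfold kron
    change Int.toNat (ev + (rep w 1 (n0 * n1 * n2) (2 ^ (w-1)) : ℕ)) = _
    rw [this]; simp
  let g : ℕ → ℕ := fun m => ent W0 (2 ^ (w-1)) (cc * L0.getD (m / n2 / n1) 0 * L1.getD (m / n2 % n1) 0 * L2.getD (m % n2) 0) (d m)
  have hr : rootOf w n1 n2 L0 L1 L2 cc (kron w (n0 * n1 * n2) ev) = pk W0 g (n0 * n1 * n2) := by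
    rw [hk]; exact lev3_eq w W0 n0 n1 n2 cc _ L0 L1 L2 h0 h1 h2 hw p1 p2 d (fun j _ => hd2 j)
  rw [hr] at ht
  have hg := topOk_lt _ g (fun j => ent_le _ _ _ _) ht
  let f : ℕ → ℕ := fun m => if m < n0 * n1 * n2 then g m else 0
  have hgc : ∀ i j k, i < n0 → j < n1 → k < n2 →
      ((f (k + n2 * (j + n1 * i)) : ℝ) - 2 ^ (W0-2)) ≤ (cf P i j k : ℝ) / ((cc : ℝ) * (n0-1).choose i * (n1-1).choose j * (n2-1).choose k) := by
    intro i j k hi hj hk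
    have hlt : k + n2 * (j + n1 * i) < n0 * n1 * n2 := by
      have b1 : n1 * (i+1) ≤ n1 * n0 := Nat.mul_le_mul_left _ (by omega)
      have b2 : j + n1 * i + 1 ≤ n1 * n0 := by rw [mul_add] at b1; omega
      have b3 := Nat.mul_le_mul_left n2 b2
      have b4 : n2 * (n1 * n0) = n0 * n1 * n2 := by ring
      rw [mul_add, b4] at b3
      omega
    have hfe : f (k + n2 * (j + n1 * i)) = g (k + n2 * (j + n1 * i)) := if_pos hlt
    have key := ent_lt _ _ _ _ (hg _ hlt)
    change g _ * _ + _ ≤ _ at key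
    have e1 : (k + n2 * (j + n1 * i)) % n2 = k := by rw [Nat.add_mul_mod_self_left, Nat.mod_eq_of_lt hk]
    have e2 : (k + n2 * (j + n1 * i)) / n2 = j + n1 * i := by rw [Nat.add_mul_div_left _ _ p2, Nat.div_eq_of_lt hk, zero_add]
    have e3 : (j + n1 * i) % n1 = j := by rw [Nat.add_mul_mod_self_left, Nat.mod_eq_of_lt hj]
    have e4 : (j + n1 * i) / n1 = i := by rw [Nat.add_mul_div_left _ _ p1, Nat.div_eq_of_lt hj, zero_add]
    rw [e1, e2, e3, e4, c0 i hi, c1 j hj, c2 k hk] at key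
    have q0 : 0 < (n0-1).choose i := Nat.choose_pos (by omega)
    have q1 : 0 < (n1-1).choose j := Nat.choose_pos (by omega)
    have q2 : 0 < (n2-1).choose k := Nat.choose_pos (by omega)
    rw [le_div_iff₀ (by positivity), hfe]
    have k2 : ((g (k + n2 * (j + n1 * i)) : ℤ)) * (cc * (n0-1).choose i * (n1-1).choose j * (n2-1).choose k) + 2 ^ (w-1)
      ≤ (d (k + n2 * (j + n1 * i)) : ℤ) + 2 ^ (W0-2) * (cc * (n0-1).choose i * (n1-1).choose j * (n2-1).choose k) := by exact_mod_cast key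
    rw [hd, hp i j k hi hj hk] at k2
    have k3 : (((g (k + n2 * (j + n1 * i)) : ℤ)) - 2 ^ (W0-2)) * (cc * (n0-1).choose i * (n1-1).choose j * (n2-1).choose k) ≤ cf P i j k := by linarith
    exact_mod_cast k3
  refine ⟨f, ⟨?_, ?_, p0, p1, p2⟩, ?_⟩
  · rw [hr]; exact pk_congr _ _ _ _ (fun j hj => (if_pos hj).symm)
  · intro j
    by_cases hj : j < n0 * n1 * n2
    · rw [show f j = g j from if_pos hj]; exact hg j hj
    · rw [show f j = 0 from if_neg hj]; decide
  -- main bound on the half-open cube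
  have main : ∀ x y z : ℝ, 0 ≤ x → x < 1 → 0 ≤ y → y < 1 → 0 ≤ z → z < 1 →
      Ph (n0 - 1) (fun i => Ph (n1 - 1) (fun j => Ph (n2 - 1) (fun k =>
        (f (k + n2 * (j + n1 * i)) : ℝ) - 2 ^ (W0 - 2)) z) y) x ≤ F x y z := by
    intro x y z x0 x1 y0 y1 z0 z1
    have hccR : (0:ℝ) < cc := by exact_mod_cast hcc
    calc _ ≤ Ph (n0 - 1) (fun i => Ph (n1 - 1) (fun j => Ph (n2 - 1) (fun k =>
        (cf P i j k : ℝ) / ((cc : ℝ) * (n0-1).choose i * (n1-1).choose j * (n2-1).choose k)) z) y) x := by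
          apply Ph_mono _ _ _ _ x0 x1.le
          intro i hi
          apply Ph_mono _ _ _ _ y0 y1.le
          intro j hj
          apply Ph_mono _ _ _ _ z0 z1.le
          intro k hk
          exact hgc i j k (by omega) (by omega) (by omega)
      _ = F x y z := by
          have hxx : (1 - x) ≠ 0 := by linarith
          have hyy : (1 - y) ≠ 0 := by linarith
          have hzz : (1 - z) ≠ 0 := by linarith
          rw [← mul_left_inj' hccR.ne', ← hF x y z x0 x1 y0 y1 z0 z1, eval_cf P n0 n1 n2 d0 d1 d2]
          simp only [Ph_eq]
          rw [show n0 - 1 + 1 = n0 by omega, show n1 - 1 + 1 = n1 by omega, show n2 - 1 + 1 = n2 by omega]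
          rw [Finset.sum_mul, Finset.mul_sum]
          refine Finset.sum_congr rfl fun i hi => ?_
          rw [Finset.mul_sum, Finset.mul_sum, Finset.sum_mul, Finset.sum_mul]
          refine Finset.sum_congr rfl fun j hj => ?_
          rw [Finset.mul_sum, Finset.mul_sum, Finset.sum_mul, Finset.mul_sum, Finset.sum_mul, Finset.sum_mul]
          refine Finset.sum_congr rfl fun k hk => ?_
          have hi := Finset.mem_range.1 hi
          have hj := Finset.mem_range.1 hj
          have hk := Finset.mem_range.1 hk
          have q0 : (((n0-1).choose i : ℕ) : ℝ) ≠ 0 := by exact_mod_cast (Nat.choose_pos (by omega)).ne'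
          have q1 : (((n1-1).choose j : ℕ) : ℝ) ≠ 0 := by exact_mod_cast (Nat.choose_pos (by omega)).ne'
          have q2 : (((n2-1).choose k : ℕ) : ℝ) ≠ 0 := by exact_mod_cast (Nat.choose_pos (by omega)).ne'
          have pw : ∀ (t : ℝ) (n i : ℕ), 1 - t ≠ 0 → i ≤ n → (1-t) ^ n * (t/(1-t)) ^ i = t ^ i * (1-t) ^ (n-i) := by
            intro t n i ht hin
            rw [div_pow]
            have : (1-t) ^ n = (1-t) ^ (n-i) * (1-t) ^ i := by rw [← pow_add]; congr 1; omega
            rw [this]; field_simp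
          have w0 := pw x (n0-1) i hxx (by omega)
          have w1 := pw y (n1-1) j hyy (by omega)
          have w2 := pw z (n2-1) k hzz (by omega)
          simp only [Matrix.cons_val_zero, Matrix.cons_val_one, Matrix.cons_val]
          calc _ = (cf P i j k : ℝ) * (x ^ i * (1-x) ^ (n0-1-i)) * (y ^ j * (1-y) ^ (n1-1-j)) * (z ^ k * (1-z) ^ (n2-1-k)) := by
                field_simp
            _ = _ := by rw [← w0, ← w1, ← w2]; ring
  intro x y z hx hy hz
  have hPc : ∀ (n : ℕ) (G : ℕ → ℝ → ℝ) (h : ℝ → ℝ), (∀ i, Continuous (G i)) → Continuous h →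
      Continuous (fun c => Ph n (fun i => G i c) (h c)) := by
    intro n G h hG hh
    simp only [Ph_eq]
    fun_prop
  have hcl : (1:ℝ) ∈ closure (Set.Ico (0:ℝ) 1) := by rw [closure_Ico (by norm_num)]; simp
  have := ContinuousWithinAt.closure_le (s := Set.Ico (0:ℝ) 1) (x := (1:ℝ))
    (f := fun c => Ph (n0 - 1) (fun i => Ph (n1 - 1) (fun j => Ph (n2 - 1) (fun k =>
        (f (k + n2 * (j + n1 * i)) : ℝ) - 2 ^ (W0 - 2)) (c*z)) (c*y)) (c*x)) (g := fun c => F (c*x) (c*y) (c*z)) hcl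
    (Continuous.continuousWithinAt (hPc _ (fun i c => Ph (n1 - 1) (fun j => Ph (n2 - 1) (fun k =>
        (f (k + n2 * (j + n1 * i)) : ℝ) - 2 ^ (W0 - 2)) (c*z)) (c*y)) _
      (fun i => hPc _ (fun j c => Ph (n2 - 1) (fun k =>
        (f (k + n2 * (j + n1 * i)) : ℝ) - 2 ^ (W0 - 2)) (c*z)) _ (fun j => hPc _ (fun k c => (f (k + n2 * (j + n1 * i)) : ℝ) - 2 ^ (W0 - 2)) _ (fun k => continuous_const) (by fun_prop)) (by fun_prop)) (by fun_prop)))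
    (Continuous.continuousWithinAt (hFc.comp (f := fun c : ℝ => (c*x, c*y, c*z)) (by fun_prop)))
    (fun c hc => main _ _ _ (mul_nonneg hc.1 hx.1) (by nlinarith [hc.1, hc.2, hx.1, hx.2]) (mul_nonneg hc.1 hy.1) (by nlinarith [hc.1, hc.2, hy.1, hy.2]) (mul_nonneg hc.1 hz.1) (by nlinarith [hc.1, hc.2, hz.1, hz.2]))
  simpa [Ten.val] using this

def dataW : List (ℕ × List (List ℤ)) := [
(138, [[-38512182, 377863410, -9802175551, 90581211688, -435846636445, 1260716303461, -2345934057484, 2878023732105, -2331893787068, 1196236802467, -357823166505, 47383723381, 2351293713, -1690112972, 230219273, -18655326, -468698],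
  [199626058, -105989305, -1628913713, 29799825495, -40763956905, -416078228766, 1675758524941, -2767679148156, 2476226209959, -1254436654986, 328532979401, -33275097257, -714813176, 183776653, 103365084, -21558119, -208432],
  [0, 1649490449, -54957792004, 516152305933, -2358550281107, 6324002445960, -10760983895907, 11959510930524, -8643827134944, 3963340326747, -1097282553153, 164746974092, -7983933885, -1076225851, 123940313, -3071120, -253094],
  [0, 0, 22529588289, -220338090574, 985933405431, -2472458127967, 3777602971257, -3818769925163, 2628669040115, -1239787452079, 452574100026, -142394526055, 32396393580, -4045570763, 88464378, 8154272, 253445],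
  [0, 0, 0, 55351182641, -490565079496, 1985975076051, -4585283266678, 6627276890811, -6308781464704, 4027035892119, -1703710104710, 467703665305, -79037211153, 5968914382, 32782845, -2126787, -7441],
  [0, 0, 0, 0, 85044871926, -557873851005, 1769100298894, -3361911084838, 4028254440059, -3105014286646, 1528118355023, -467674765824, 84021703681, -8150059475, 358083169, 1242045, 40037],
  [0, 0, 0, 0, 0, 105440917650, -558368678521, 1288464622392, -1651246191724, 1285772742072, -629890430194, 187852606247, -33366957326, 3827907103, -256101929, 6210175, -223108],
  [0, 0, 0, 0, 0, 0, 99074187279, -475416768834, 951178142347, -1009872016969, 611280608661, -211145221467, 38299643585, -2906194088, -67413358, 6525354, 453959],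
  [0, 0, 0, 0, 0, 0, 0, 190756095445, -633868987860, 833269312072, -610639155773, 268156807263, -66468127920, 8489741592, -425238736, -3635006, 120967],
  [0, 0, 0, 0, 0, 0, 0, 0, 60700576477, -127789214434, 128142706879, -80151633762, 26927945813, -4746686533, 472509247, -5008883, -448437],
  [0, 0, 0, 0, 0, 0, 0, 0, 0, 36173342850, -52627962658, 32201359457, -12121678756, 2292591754, -219312144, 9335327, 147526],
  [0, 0, 0, 0, 0, 0, 0, 0, 0, 0, 11832296682, -13386424205, 5707760731, -1201012799, 58967003, -1357978, 200486],
  [0, 0, 0, 0, 0, 0, 0, 0, 0, 0, 0, 5415797034, -2726538199, 291375488, -37761007, -3835956, 122082],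
  [0, 0, 0, 0, 0, 0, 0, 0, 0, 0, 0, 0, 814825623, -260084320, 43888847, -4593567, -212471],
  [0, 0, 0, 0, 0, 0, 0, 0, 0, 0, 0, 0, 0, 301147518, -85262866, 722729, -48229],
  [0, 0, 0, 0, 0, 0, 0, 0, 0, 0, 0, 0, 0, 0, 27418325, -448640, -176275],
  [0, 0, 0, 0, 0, 0, 0, 0, 0, 0, 0, 0, 0, 0, 0, 1140975, -27741],
  [0, 0, 0, 0, 0, 0, 0, 0, 0, 0, 0, 0, 0, 0, 0, 0, 568]]),
 (132, [[380681410, 1958202303, -607862754, -80932738084, 697006986327, -2583410433690, 5105187881209, -5939246783394, 4246081741782, -1857775589181, 473563070549, -67878474775, 5125856117, -109003639, 12857657, 1370814],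
  [0, 7179402351, -133891336630, 966934485981, -3637824809406, 8165753904409, -11709907681824, 10932439190298, -6565203514259, 2469631869742, -555734326628, 68234548860, -3364536504, -910798, -40351766, -400229],
  [0, 0, 65710432865, -549216169772, 2012863383039, -4050809913862, 4997936157640, -4126871423317, 2308942839199, -865059336559, 229091462498, -42863190427, 4348303976, 152536290, -93151654, -1528185],
  [0, 0, 0, 134642920817, -1175588292201, 4320486043833, -8556707041122, 9927991867190, -7015278320648, 3017312385174, -749536569730, 93747126310, -1428046906, -1089233916, 67247663, 2187218],
  [0, 0, 0, 0, 202928212761, -1301870069438, 3431001921207, -4832014651056, 3907179214834, -1901937470265, 579498193871, -111949826709, 14892345139, -1464805428, 29802266, 1526900],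
  [0, 0, 0, 0, 0, 384393880379, -1814036817808, 3732162915195, -4198046877907, 2713873591935, -1019107648542, 213402554599, -22249930050, 859394401, 13830796, 779844],
  [0, 0, 0, 0, 0, 0, 371649669842, -1349518056895, 2093730394000, -1713951713962, 765302494975, -186944198979, 23430286551, -1218885481, 42437256, 213074],
  [0, 0, 0, 0, 0, 0, 0, 208274562428, -495084772066, 511037230092, -303199532416, 105915416945, -18809662530, 1509517984, -90082896, -867195],
  [0, 0, 0, 0, 0, 0, 0, 0, 54051992548, -105814937964, 70076148136, -20345023790, 3250981930, -284460003, -16254841, -126441],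
  [0, 0, 0, 0, 0, 0, 0, 0, 0, 25426330443, -21051283819, 7178746495, -1661548414, 51180357, -21348359, 735985],
  [0, 0, 0, 0, 0, 0, 0, 0, 0, 0, 37455194983, -32981097046, 9421487856, -1249967758, 37251360, 1665899],
  [0, 0, 0, 0, 0, 0, 0, 0, 0, 0, 0, 5474794445, -436875157, -252321610, -22279680, -225878],
  [0, 0, 0, 0, 0, 0, 0, 0, 0, 0, 0, 0, 1704080849, -676003946, 91046851, 1364091],
  [0, 0, 0, 0, 0, 0, 0, 0, 0, 0, 0, 0, 0, 136348934, -34747575, -913152],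
  [0, 0, 0, 0, 0, 0, 0, 0, 0, 0, 0, 0, 0, 0, 32947485, 92393],
  [0, 0, 0, 0, 0, 0, 0, 0, 0, 0, 0, 0, 0, 0, 0, 411246]]),
 (126, [[937356912, -15950998386, 181810479319, -1033091315785, 3345900296168, -6633194342291, 8418658767636, -7050718965987, 3942508383941, -1443458420189, 330343147458, -46386229153, 4193173625, -245118702, -8038582],
  [0, 25185159264, -326131406255, 1825392105243, -5416553020137, 9527354984856, -10577522648439, 7498264190106, -3351579274299, 936534717681, -172582644683, 23682591525, -1909664280, 34473956, 1811357],
  [0, 0, 100728202218, -792437594766, 2964732460280, -6210903563390, 7846032583392, -6147902899417, 2930320340482, -805429820403, 114490925774, -7435874222, 146437091, 100221349, 891008],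
  [0, 0, 0, 242525460310, -1728418576501, 5126265725905, -8002975574251, 7082429258787, -3662540418467, 1090174666615, -168652705071, 9529772034, 381177604, -49827082, -1299203],
  [0, 0, 0, 0, 134695941117, -778102948969, 1821752213142, -2219418098636, 1449080514042, -488908096026, 71312377577, 2096344940, -1206229280, -15306476, 1250113],
  [0, 0, 0, 0, 0, 262058797987, -1114539999954, 2004497527850, -1925173729657, 1017283865434, -287817499416, 41136817604, -1979493339, -24865045, -1694910],
  [0, 0, 0, 0, 0, 0, 127097235327, -453131196093, 658878884305, -488073805584, 193311991406, -39726109663, 3697801161, -52028824, 54592],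
  [0, 0, 0, 0, 0, 0, 0, 97339281101, -176522506070, 156941802855, -83510907062, 20983946256, -2654805184, 119888661, 2455155],
  [0, 0, 0, 0, 0, 0, 0, 0, 74805177743, -46364991496, -3307158961, 7386945475, -2108759998, 162315191, 7375404],
  [0, 0, 0, 0, 0, 0, 0, 0, 0, 14977516254, -14676073817, 5786167766, -923623598, 31283898, 1181369],
  [0, 0, 0, 0, 0, 0, 0, 0, 0, 0, 9260006889, -4096417323, 795657653, -109172682, -2340732],
  [0, 0, 0, 0, 0, 0, 0, 0, 0, 0, 0, 337994819, -77368564, 17181095, -145708],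
  [0, 0, 0, 0, 0, 0, 0, 0, 0, 0, 0, 0, 143115836, -20177548, -13820],
  [0, 0, 0, 0, 0, 0, 0, 0, 0, 0, 0, 0, 0, 18678687, 704591],
  [0, 0, 0, 0, 0, 0, 0, 0, 0, 0, 0, 0, 0, 0, 1332258]]),
 (118, [[3717177495, -76802370442, 725063950817, -3197175401740, 7648845659082, -10711418157933, 9168093587046, -4923191250545, 1705565615759, -386779685126, 63936482342, -8485826223, 293849304, 25781964],
  [0, 64473185237, -668092426405, 3047527833268, -7172249074777, 9643377382923, -7590688862978, 3224538621745, -514556067783, -65982378673, 19750995182, 1820253297, -459074631, -10910299],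
  [0, 0, 156371747923, -1629473038250, 6772422846649, -14354392327978, 17136877327233, -11970104607922, 4928491288887, -1171409261593, 155745408437, -11244629355, 342871480, 6627002],
  [0, 0, 0, 348968592818, -1879552138459, 4449299246798, -5630980517475, 4117461007893, -1833274483312, 479688677697, -59165546489, 916376703, 372020423, 13808130],
  [0, 0, 0, 0, 364274549868, -1509235916963, 2570685427180, -2227857427541, 971526516942, -189444455858, 1626514323, 3200210312, 164290310, 7853327],
  [0, 0, 0, 0, 0, 521187504053, -1826436351407, 2654048401068, -1998626700108, 821482599034, -181159328095, 19948863194, -712847775, -29341108],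
  [0, 0, 0, 0, 0, 0, 173536925563, -450018133755, 497992861494, -272720441438, 74746712138, -9197785821, 369249618, -2797638],
  [0, 0, 0, 0, 0, 0, 0, 106688132152, -185070562372, 121176328536, -28519781563, 3209913275, -522307547, -13656441],
  [0, 0, 0, 0, 0, 0, 0, 0, 27557076626, -31979941764, 12869230913, -3361843626, 499434247, 15462176],
  [0, 0, 0, 0, 0, 0, 0, 0, 0, 9281128063, -8287299412, 2113613475, -156006647, -4107917],
  [0, 0, 0, 0, 0, 0, 0, 0, 0, 0, 5496941420, -862558379, -119497419, -7341704],
  [0, 0, 0, 0, 0, 0, 0, 0, 0, 0, 0, 203219704, 1816185, 2799185],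
  [0, 0, 0, 0, 0, 0, 0, 0, 0, 0, 0, 0, 87950479, 3209234],
  [0, 0, 0, 0, 0, 0, 0, 0, 0, 0, 0, 0, 0, 2553973]]),
 (112, [[15658197177, -293768871452, 2002524988781, -6836684759636, 13063807465729, -14813520580631, 10066585160746, -3944406846886, 801356122185, -65558263207, 2065896761, -486242509, -2499683],
  [0, 27830252635, -363173615198, 1862401959559, -4933211215974, 7473515118913, -6714672842363, 3584489955972, -1089341266849, 165888761318, -8676491989, -313166809, -1612835],
  [0, 0, 93814340910, -887939003061, 3048906462029, -5167814857021, 4724684540222, -2397519380120, 667020523984, -93791693903, 5014628112, -147209914, -5485360],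
  [0, 0, 0, 112701754118, -710445296173, 1815754350316, -2343417217749, 1643366478591, -634913379623, 132958868472, -13085972714, 472387391, 1746000],
  [0, 0, 0, 0, 394315901519, -1377110253987, 2017544471602, -1562859333470, 684165760526, -165661694806, 21715300107, -1102970636, -34475936],
  [0, 0, 0, 0, 0, 257729205840, -712101613493, 852182649233, -495028297680, 133530367512, -16716802863, 653072057, 32676228],
  [0, 0, 0, 0, 0, 0, 21600991766, -28265314832, 13213054521, -2811033483, -238955959, 76850211, 6820152],
  [0, 0, 0, 0, 0, 0, 0, 25018219504, -42557812773, 18938540489, -4319635611, 399238110, 18644104],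
  [0, 0, 0, 0, 0, 0, 0, 0, 9306367155, -5557807824, 1920419841, -219927166, -7685441],
  [0, 0, 0, 0, 0, 0, 0, 0, 0, 2131285562, -679353491, 86119694, -2284235],
  [0, 0, 0, 0, 0, 0, 0, 0, 0, 0, 121794584, 12492099, 3094519],
  [0, 0, 0, 0, 0, 0, 0, 0, 0, 0, 0, 29477350, 2564909],
  [0, 0, 0, 0, 0, 0, 0, 0, 0, 0, 0, 0, 474422]]),
 (104, [[26426530386, -411883510650, 2300717921854, -6199486195039, 8958561165405, -7274357280757, 3257758584801, -673501674340, 3838169790, 18167735933, -1471322272, -50782572],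
  [0, 123524811013, -1217547995543, 4632467110312, -8921140876766, 9615608658557, -5846282831514, 1925398508516, -305118387521, 20192412735, -1206760339, 18388879],
  [0, 0, 167903774247, -1320253692180, 3724251564654, -5203239319343, 4088687498794, -1844333673205, 445622032975, -48565729021, 1062186980, 68038641],
  [0, 0, 0, 126636953603, -507613334089, 706142040893, -394850618612, 68447339815, 7375158209, -5706137578, 1205258622, 16273853],
  [0, 0, 0, 0, 188472688647, -502330948783, 516585550918, -223109780768, 31274738471, 1557281648, -917695646, -40056671],
  [0, 0, 0, 0, 0, 75862767354, -193659038447, 171350417151, -61802516193, 9227895459, -461488884, -12867613],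
  [0, 0, 0, 0, 0, 0, 25129120659, -26606518486, 8432732219, -475731178, -194818253, 264615],
  [0, 0, 0, 0, 0, 0, 0, 9468125194, -10300785055, 3362219166, -428688226, -5300188],
  [0, 0, 0, 0, 0, 0, 0, 0, 2214770756, -807480709, 143333491, -482511],
  [0, 0, 0, 0, 0, 0, 0, 0, 0, 235201092, -6438756, 3414866],
  [0, 0, 0, 0, 0, 0, 0, 0, 0, 0, 33813068, 3044423],
  [0, 0, 0, 0, 0, 0, 0, 0, 0, 0, 0, 612021]]),
 (96, [[72589787735, -918916168245, 4324992879378, -10076787903758, 12909205286076, -9438634438630, 3828494372930, -772381195538, 60102353629, 389588903, 8574783],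
  [0, 23187152662, -204110800749, 685293629648, -1133469823986, 972656135062, -437291763008, 98562633429, -10385805214, 523644364, 3238003],
  [0, 0, 63915904428, -447027465764, 1066468662848, -1195126309724, 665750609472, -186458481437, 23389150129, -797113231, 22059397],
  [0, 0, 0, 34030293302, -129895784071, 231941666980, -177130990782, 60436087222, -7284297405, -162665300, -14158791],
  [0, 0, 0, 0, 18176071129, -53926285390, 60656777039, -28549886409, 5646402997, -343134747, -1340843],
  [0, 0, 0, 0, 0, 9824435845, -14301530808, 8289266864, -1542930170, 103560334, 2504708],
  [0, 0, 0, 0, 0, 0, 3592585006, -4561931300, 1818811053, -233084137, -13594],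
  [0, 0, 0, 0, 0, 0, 0, 2877805294, -1024898349, 255083316, 6661508],
  [0, 0, 0, 0, 0, 0, 0, 0, 308490426, -45088075, 1491501],
  [0, 0, 0, 0, 0, 0, 0, 0, 0, 23045675, 1952157],
  [0, 0, 0, 0, 0, 0, 0, 0, 0, 0, 573496]]),
 (86, [[144198568709, -1332310761417, 4895395179806, -9350761324445, 10005483147946, -5939483756609, 1836816652396, -244457621058, 8824250043, 65910275],
  [0, 498407054345, -2323801544065, 4470105891034, -4674380287827, 2785934599814, -880854380890, 124162085949, -9417260564, -308844978],
  [0, 0, 43106463153, -187190780355, 305028894128, -231912976955, 85815969420, -13449116020, 533466752, -5131714],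
  [0, 0, 0, 34997537072, -116350223811, 128378452241, -60703907370, 10664808409, -657891101, -11916017],
  [0, 0, 0, 0, 11183946203, -24826571010, 21502057208, -7105988518, 867344834, 2497010],
  [0, 0, 0, 0, 0, 7102756278, -7607705545, 3585421064, -404805144, 5901002],
  [0, 0, 0, 0, 0, 0, 1416298369, -1030938801, 202229985, 175662],
  [0, 0, 0, 0, 0, 0, 0, 350484105, -56997581, 1929075],
  [0, 0, 0, 0, 0, 0, 0, 0, 24098479, 929963],
  [0, 0, 0, 0, 0, 0, 0, 0, 0, 1450902]]),
 (68, [[427837531235, -3154028844383, 8804390607297, -12172022530735, 9004683865944, -3553294948287, 690331766443, -51256316234, 17311230],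
  [0, 328644112920, -1953876085948, 4162458526076, -4123896305154, 2015708587585, -460398703666, 38790883189, 7544987],
  [0, 0, 280636533784, -1029620993950, 1344525394409, -788309712065, 208009173196, -20610316134, 31372963],
  [0, 0, 0, 206709465201, -556408989952, 486343531918, -166656204871, 19265304095, -2614779],
  [0, 0, 0, 0, 75544860817, -139421534449, 77051031006, -11817072718, -27998267],
  [0, 0, 0, 0, 0, 34572275938, -31524651810, 6531012149, -11463474],
  [0, 0, 0, 0, 0, 0, 7128434343, -1774737832, 68463826],
  [0, 0, 0, 0, 0, 0, 0, 819707496, -69761069],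
  [0, 0, 0, 0, 0, 0, 0, 0, 87136418]]),
 (64, [[1069073369943, -6122117782158, 11070281583021, -9628823611831, 4687288402053, -993360712947, -16787544675, 15857100975],
  [0, 59180025270, -341542244332, 530132162291, -324769883255, 95620089610, -15452845404, 892201815],
  [0, 0, 79863965060, -147091919415, 85684863312, -27172380703, 6729844660, -608357524],
  [0, 0, 0, 50744719645, -81457836889, 33706896043, -2128461851, -391550961],
  [0, 0, 0, 0, 12471414046, -14285336465, 3605469217, -121950093],
  [0, 0, 0, 0, 0, 1877122751, -1067664848, 110785112],
  [0, 0, 0, 0, 0, 0, 317496333, -65485283],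
  [0, 0, 0, 0, 0, 0, 0, 29998635]]),
 (46, [[1282956771366, -6556080007774, 11682231596797, -9043595282329, 3056088835356, -362711435193, 389227567],
  [0, 1112700576382, -3469218178204, 3733955491275, -1632231454753, 234672638162, -302268513],
  [0, 0, 786228995903, -1633671696038, 976947688286, -158866379634, -305156398],
  [0, 0, 0, 326100031239, -338628320550, 70156530872, -225893223],
  [0, 0, 0, 0, 55826493720, -29324900949, 2257872101],
  [0, 0, 0, 0, 0, 13226023537, -3430177547],
  [0, 0, 0, 0, 0, 0, 1620648931]]),
 (34, [[3598111186589, -12817599096958, 15303513426392, -7163562298016, 1077786139449, -5181706514],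
  [0, 2698385740640, -6075203508228, 3890821776954, -669748718743, -101320184],
  [0, 0, 988391055893, -930530245458, 173572304801, -2732339349],
  [0, 0, 0, 270853597816, -126904627520, 4212066903],
  [0, 0, 0, 0, 101125438738, -31842039629],
  [0, 0, 0, 0, 0, 14407559206]]),
 (24, [[4501325312464, -10610110020061, 7096578814050, -1330708246843, 17865657020],
  [0, 1297861502546, -1528670652746, 480975451322, -43055927579],
  [0, 0, 682740667224, -519011977195, 80835174204],
  [0, 0, 0, 277333688431, -70803247412],
  [0, 0, 0, 0, 46983187750]]),
 (12, [[6504336602144, -11063944724851, 5342349635214, -702634139482],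
  [0, 3225097373393, -3103149007759, 584807587898],
  [0, 0, 854375850576, -232990295200],
  [0, 0, 0, 179776251520]]),
 (0, [[14731072525425, -15572295074790, 3248770001850],
  [0, 3166485452277, -1239789650974],
  [0, 0, 651668200320]]),
 (0, [[252239261164, -119163665256],
  [0, 46280058254]]),
 (0, [[3860103538]])]
def dataV : List ℤ := [579933461, 0, 0, 0, 0, 0, 0, 0, 0, 0, 0, 0, 0, 0, 0, 0, 0, 0]
def dataA : List ℤ := [511495573878078433699143046770471013439453952641398593, 35147603386907844761257945721567032788518871450378070283409, 5707214828046905197257256748219197272336524748303431118896, 1235780856939949647975827254164905316994822499693550596693, 18708585435251365251248572547077937752267252563208641330, 439674698691154332234557315714857601286494764859527043, 94206397987276621603234590883056356318635195976408218, 83591648622041651435695891702035662702811889245448, 10846798974118077209399865383567676722624972115, 23453969505407980397255454821017690805551892, 500012634507125907743354961808188652385902, 25340225355733286668557010892675070615188, 1333418373049054138447849289405849877051, 15008718889304293281457353010478911056, 133010509875946897917405377143784240, 2460499119976217244107745037404458, 71174160367700381013940597525197, 1244545106443581442893132036502, 15752287652529189348666481742, 266629559895694844504878309, 4420841019616573103953351,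 65235500585950684585915, 944533722608043080056, 13722584135188410537, 190096974080027226]

def Ops.sA {R : Type} (o : Ops R) (h u q : R) : List ℤ → ℕ → R → R → R
  | [], _, _, _ => o.c 0
  | a :: l, k, R0, R1 =>
    o.add (o.mul (o.c a) (o.mul (o.pow h (32 - k)) R1))
      (o.sA h u q l (k + 1) R1
        (o.add (o.mul (o.c (2 * k + 13)) (o.mul u R1)) (o.mul (o.c (-(k * (k + 12)))) (o.mul q R0))))

def Ops.Q {R : Type} (o : Ops R) (D : List (ℕ × List (List ℤ))) (A : List ℤ) (g : List ℤ) (w M : ℤ) (x : R) : R :=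
  o.mul (o.c (-1)) (o.add
    (o.add (o.sS x x (o.c 2) (o.mul (o.c 2) (o.qq x)) (o.mul (o.c 4) (o.mul (o.qq x) (o.qq x))) D 0 (o.c 0) (o.c 1))
      (o.mul (o.mul (o.c w) (o.gH x g)) (o.pow (o.add (o.c 1) x) 16)))
    (o.add (o.sA (o.add (o.c 1) x) (o.uu x) (o.mul (o.hh x) (o.hh x)) A 0 (o.c 0) (o.c 1))
      (o.mul (o.c M) (o.pow (o.add (o.c 1) x) 32))))

def g00 : List ℤ := ((dataW.headD (0, [])).2).headD []
def w00 : ℤ := 2 ^ 17 * 2 ^ (dataW.headD (0, [])).1 * dataV.headD 0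
def M00 : ℤ := 2 ^ 200

theorem Q_N : Nat.ble (opN.Q dataW dataA g00 w00 M00 1 + 1) (2 ^ 255) = true := by decide +kernel
theorem Q_D2 : Nat.ble (opD.Q dataW dataA g00 w00 M00 2) 33 = true := by decide +kernel
theorem Q_D1 : Nat.ble (opD.Q dataW dataA g00 w00 M00 1) 1 = true := by decide +kernel
def C16 : List ℕ := [1,16,120,560,1820,4368,8008,11440,12870,11440,8008,4368,1820,560,120,16,1]
def C32 : List ℕ := (List.range 33).map (Nat.choose 32)
def chk1 : ℕ → List Ten → Bool
  | 0, l => l.any Ten.ok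
  | f + 1, l => l.any Ten.ok || (chk1 f (l.map (Ten.left 2)) && chk1 f (l.map (Ten.right 2)))
def kQ : ℤ := opZ.Q dataW dataA g00 w00 M00 (2 ^ 256)
def root1 : ℕ := rootOf 256 1 33 [1] [1] C32 (2 ^ 156) (kron 256 (1*1*33) kQ)
theorem Q_top : topOk (1*1*33) root1 = true := by decide +kernel
theorem Q_chk : chk1 8 [⟨1,1,33,root1⟩] = true := by decide +kernel

def detN : ℕ := 3782415221704349344087283220857161364429685769722609613926422475528556538565062661669686340611240184216189700984318189265559987859822147014885477759965232174084349738613113936639514053103630392242206488239913743078072272486546415116999364489080778740858911383190845714858202158485456612010679325435677499271382515100802387282776798459183288686857911310494392913697821804397445541787576602264994938743514105725233215850839594262606456939141976630048354952020016327949213785828487652744715231990099071047650017974224420863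
def o1N : ℕ := 3351951982485649274348377206329756363928297096933341667028681298079699414701818587776143530310307221903053685518648869015953357395100635184515160704286719
def o2N : ℕ := 3351951982485649274348377249652720334566029273148978128716697708367752775349373139678645770418329843673838372550300346245709713351708950242502434766192639

theorem T_N : Nat.ble (opN.T dataW 1 1 1 + 1) (2 ^ 274) = true := by decide +kernel
theorem T_D0 : Nat.ble (opD.T dataW 2 1 1) 17 = true := by decide +kernel
theorem T_D1 : Nat.ble (opD.T dataW 1 2 1) 17 = true := by decide +kernel
theorem T_D2 : Nat.ble (opD.T dataW 1 1 2) 17 = true := by decide +kernel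
def kT : ℤ := opZ.T dataW (2 ^ (275 * (17 * 17))) (2 ^ (275 * 17)) (2 ^ 275)
def root3 : ℕ := rootOf 275 17 17 C16 C16 C16 (2 ^ 165) (kron 275 (17*17*17) kT)
def L3 : List Ten := [⟨2,2,2,o1N⟩, ⟨2,2,2,o2N⟩, ⟨3,3,3,detN⟩, ⟨17,17,17,root3⟩]
theorem T_top : topOk (17*17*17) root3 = true := by decide +kernel
theorem T_chk00 : chk 25 2 ((L3.map (Ten.left 0)).map (Ten.left 1)) = true := by decide +kernel
theorem T_chk01 : chk 25 2 ((L3.map (Ten.left 0)).map (Ten.right 1)) = true := by decide +kernel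
theorem T_chk10 : chk 25 2 ((L3.map (Ten.right 0)).map (Ten.left 1)) = true := by decide +kernel
theorem T_chk11 : chk 25 2 ((L3.map (Ten.right 0)).map (Ten.right 1)) = true := by decide +kernel

noncomputable def RR (a : ℕ) (x r : ℝ) : ℕ → ℝ
  | 0 => 1
  | 1 => a * x
  | k + 2 => (2 * (k + 1) + a) * x * RR a x r (k + 1) - (k + 1) * (k + a) * r * RR a x r k

noncomputable def phi (x : ℝ) : ℕ → List ℤ → ℝ
  | _, [] => 0
  | n, a :: l => a * (1 - x) ^ n + x * phi x (n - 1) l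

noncomputable def GG (x y : ℝ) (n : ℕ) : List (List ℤ) → ℝ
  | [] => 0
  | g :: l => phi x n g * phi y n g + GG x y n l

noncomputable def SD (x y A q : ℝ) : List (ℕ × List (List ℤ)) → ℕ → ℝ
  | [], _ => 0
  | p :: l, k => 2 ^ p.1 * 2 ^ (16 + 2 * k) * GG x y (16 - k) p.2 * RR 12 A q k + SD x y A q l (k + 1)

noncomputable def UU (x : ℝ) : ℝ := (3 * x - 2) / 2

def lenOk : List (ℕ × List (List ℤ)) → ℕ → Bool
  | [], _ => true
  | p :: l, k => (Nat.ble k 16 && p.2.all (fun g => Nat.ble g.length (17 - k))) && lenOk l (k + 1)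

theorem gH_phi (x : ℝ) (hx : x < 1) (n : ℕ) (g : List ℤ) (hg : g.length ≤ n + 1) :
    (1 - x) ^ n * opR.gH (x / (1 - x)) g = phi x n g := by
  induction g generalizing n with
  | nil => simp [Ops.gH, opR, phi]
  | cons a l ih =>
    have h1 : 1 - x ≠ 0 := by linarith
    rw [Ops.gH, phi]
    change (1 - x) ^ n * ((a : ℝ) + x / (1 - x) * opR.gH (x / (1 - x)) l) = _
    cases n with
    | zero =>
      have : l = [] := by
        rw [List.length_cons] at hg; exact List.length_eq_zero_iff.1 (by omega)
      subst this
      simp [Ops.gH, opR, phi]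
    | succ n =>
      rw [Nat.add_sub_cancel, ← ih n (by rw [List.length_cons] at hg; omega)]
      rw [pow_succ]; field_simp

theorem hL_addL (x t : ℝ) (g : List ℤ) (m : List ℝ) : opR.hL x (opR.addL t g m) = t * opR.gH x g + opR.hL x m := by
  induction g generalizing m with
  | nil => simp [Ops.addL, Ops.gH, opR]
  | cons a g ih =>
    cases m with
    | nil =>
      have e : opR.hL x [] = 0 := by simp [Ops.hL, opR]
      have := ih []
      rw [e] at this ⊢
      rw [Ops.addL]
      change (a : ℝ) * t + x * opR.hL x (opR.addL t g []) = t * ((a : ℝ) + x * opR.gH x g) + 0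
      rw [this]; ring
    | cons b m =>
      rw [Ops.addL, Ops.hL, ih, Ops.gH, Ops.hL]
      change ((a : ℝ) * t + b) + x * (t * _ + opR.hL x m) = t * ((a : ℝ) + x * _) + (b + x * _)
      ring

theorem gG_GG (x y : ℝ) (hx : x < 1) (hy : y < 1) (n : ℕ) (l : List (List ℤ)) (hl : ∀ g ∈ l, g.length ≤ n + 1) :
    (1 - x) ^ n * (1 - y) ^ n * opR.gG (x / (1 - x)) (y / (1 - y)) l = GG x y n l := by
  induction l with
  | nil => simp [Ops.gG, Ops.rows, Ops.hL, GG, opR]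
  | cons g l ih =>
    rw [GG, ← ih (fun g hg => hl g (List.mem_cons_of_mem _ hg)), ← gH_phi x hx n g (hl g (by simp)),
      ← gH_phi y hy n g (hl g (by simp)), Ops.gG, Ops.rows, hL_addL, Ops.gG]
    ring

theorem opR_pow (x : ℝ) (n : ℕ) : opR.pow x n = x ^ n := by
  induction n with
  | zero => simp [Ops.pow, opR]
  | succ n ih => rw [Ops.pow, ih, pow_succ']; rfl

theorem sS_SD (x y ζ h H A q : ℝ) (hx : x < 1) (hy : y < 1) (hz : h * ζ = 2) (hH : H * ((1 - x) * (1 - y) * ζ) = 8)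
    (D : List (ℕ × List (List ℤ))) (k : ℕ) (hD : lenOk D k = true) (R0 R1 : ℝ)
    (h1 : R1 = H ^ k * RR 12 A q k) (h0 : k * R0 = k * (H ^ (k-1) * RR 12 A q (k-1))) :
    ((1 - x) * (1 - y) * ζ) ^ 16 * opR.sS (x / (1 - x)) (y / (1 - y)) h (H * A) (H * H * q) D k R0 R1
      = SD x y A q D k := by
  induction D generalizing k R0 R1 with
  | nil => simp [Ops.sS, SD, opR]
  | cons p D ih =>
    rw [lenOk, Bool.and_eq_true, Bool.and_eq_true] at hD
    obtain ⟨⟨hk, hp⟩, hD⟩ := hD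
    have hk := Nat.le_of_ble_eq_true hk
    have hp : ∀ g ∈ p.2, g.length ≤ (16 - k) + 1 := by
      intro g hg
      have := Nat.le_of_ble_eq_true (List.all_eq_true.1 hp g hg)
      omega
    rw [Ops.sS, SD, ← gG_GG x y hx hy _ _ hp]
    have e2 := ih (k+1) hD R1 ((2 * k + 12) * (H * A * R1) + (-(k * (k + 11))) * (H * H * q * R0)) (by
      cases k with
      | zero => rw [h1]; simp [RR]; ring
      | succ k =>
        have h0' : ((k:ℝ) + 1) * R0 = (k+1) * (H ^ k * RR 12 A q k) := by simpa using h0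
        rw [RR, h1]
        push_cast
        have : -(((k:ℝ)+1) * (k + 1 + 11)) * (H * H * q * R0) = -(k+1+11) * (H * H * q) * ((k+1) * R0) := by ring
        rw [this, h0']
        ring) (by rw [h1]; simp)
    rw [← e2, opR_pow]
    change _ * ((((2 ^ p.1 : ℤ) : ℝ) * (h ^ (16 - k) * R1)) * _ + opR.sS _ _ _ _ _ D (k+1) R1 (((2 * k + 12 : ℤ) : ℝ) * _ + ((-(k * (k+11)) : ℤ) : ℝ) * _)) = _
    rw [mul_add]
    congr 1
    · rw [h1]
      push_cast
      have e3 : ((1 - x) * (1 - y) * ζ) ^ 16 * (h ^ (16 - k) * H ^ k) = 2 ^ (16 + 2 * k) * ((1 - x) ^ (16 - k) * (1 - y) ^ (16 - k)) := by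
        have a1 : ((1 - x) * (1 - y) * ζ) ^ 16 = ((1 - x) * (1 - y) * ζ) ^ k * ((1 - x) * (1 - y) * ζ) ^ (16 - k) := by
          rw [← pow_add]; congr 1; omega
        have a2 : (2:ℝ) ^ (16 + 2 * k) = 2 ^ (16 - k) * 8 ^ k := by
          rw [show (8:ℝ) = 2 ^ 3 by norm_num, ← pow_mul, ← pow_add]; congr 1; omega
        rw [a1, a2, ← hz, ← hH]
        simp only [mul_pow]; ring
      calc _ = 2 ^ p.1 * RR 12 A q k * opR.gG (x / (1 - x)) (y / (1 - y)) p.2 * (((1 - x) * (1 - y) * ζ) ^ 16 * (h ^ (16 - k) * H ^ k)) := by ring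
        _ = _ := by rw [e3]; ring
    · push_cast
      rfl

theorem S_SD (x y z : ℝ) (hx : x < 1) (hy : y < 1) (hz : z < 1) (D) (hD : lenOk D 0 = true) :
    ((1 - x) * (1 - y) * (1 - z)) ^ 16 * opR.S D (x / (1 - x)) (y / (1 - y)) (z / (1 - z))
      = SD x y (UU z - UU x * UU y) ((1 - UU x ^ 2) * (1 - UU y ^ 2)) D 0 := by
  have h1 : 1 - x ≠ 0 := by linarith
  have h2 : 1 - y ≠ 0 := by linarith
  have h3 : 1 - z ≠ 0 := by linarith
  have eh : ∀ t : ℝ, 1 - t ≠ 0 → opR.hh (t / (1 - t)) = 2 / (1 - t) := by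
    intro t ht; simp [Ops.hh, opR]; field_simp; ring
  have eu : ∀ t : ℝ, 1 - t ≠ 0 → opR.uu (t / (1 - t)) = 2 * UU t / (1 - t) := by
    intro t ht; simp [Ops.uu, opR, UU]; field_simp; ring
  have eq : ∀ t : ℝ, 1 - t ≠ 0 → opR.qq (t / (1 - t)) = 4 * (1 - UU t ^ 2) / (1 - t) ^ 2 := by
    intro t ht; simp [Ops.qq, opR, UU]; field_simp; ring
  rw [← sS_SD x y (1 - z) (2 / (1 - z)) (8 / ((1 - x) * (1 - y) * (1 - z))) _ _ hx hy (by field_simp) (by field_simp) D 0 hD 0 1 (by simp [RR]) (by simp)]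
  rw [Ops.S, eh x h1, eh y h2, eh z h3, eu x h1, eu y h2, eu z h3, eq x h1, eq y h2]
  congr 2
  · simp only [opR]; push_cast; field_simp; ring
  · simp only [opR]; field_simp; ring
  · simp [opR]
  · simp [opR]

noncomputable def F3 (D : List (ℕ × List (List ℤ))) (x y z : ℝ) : ℝ :=
  -(SD x y (UU z - UU x * UU y) ((1 - UU x ^ 2) * (1 - UU y ^ 2)) D 0
  + (SD x z (UU y - UU x * UU z) ((1 - UU x ^ 2) * (1 - UU z ^ 2)) D 0
  + SD y z (UU x - UU y * UU z) ((1 - UU y ^ 2) * (1 - UU z ^ 2)) D 0))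

theorem T_F3 (x y z : ℝ) (hx : x < 1) (hy : y < 1) (hz : z < 1) (D) (hD : lenOk D 0 = true) :
    (1 - x) ^ 16 * (1 - y) ^ 16 * (1 - z) ^ 16 * opR.T D (x / (1 - x)) (y / (1 - y)) (z / (1 - z)) = F3 D x y z := by
  rw [F3, ← S_SD x y z hx hy hz D hD, ← S_SD x z y hx hz hy D hD, ← S_SD y z x hy hz hx D hD]
  simp only [Ops.T]
  generalize opR.S D _ _ _ = X1
  generalize opR.S D _ _ _ = X2
  generalize opR.S D _ _ _ = X3
  simp only [opR, mul_pow]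
  push_cast
  generalize (1-x)^16 = a1
  generalize (1-y)^16 = a2
  generalize (1-z)^16 = a3
  ring

theorem cont_phi (n : ℕ) (g : List ℤ) : Continuous (fun x => phi x n g) := by
  induction g generalizing n with
  | nil => simp only [phi]; fun_prop
  | cons a g ih => simp only [phi]; have := ih (n-1); fun_prop
theorem cont_RR (a k : ℕ) : Continuous (fun p : ℝ × ℝ => RR a p.1 p.2 k) := by
  induction k using Nat.strong_induction_on with
  | _ k ih => 
    match k, ih with
    | 0, _ => simp only [RR]; fun_prop
    | 1, _ => simp only [RR]; fun_prop
    | k+2, ih =>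
      simp only [RR]
      have h1 := ih (k+1) (by omega)
      have h2 := ih k (by omega)
      fun_prop
theorem cont_GG (n : ℕ) (l) : Continuous (fun p : ℝ × ℝ => GG p.1 p.2 n l) := by
  induction l with
  | nil => simp only [GG]; fun_prop
  | cons g l ih =>
    simp only [GG]; have := cont_phi n g
    exact (((this.comp continuous_fst).mul (this.comp continuous_snd))).add ih
theorem cont_SD (D) (k : ℕ) {X : Type} [TopologicalSpace X] (x y A q : X → ℝ) (hx : Continuous x) (hy : Continuous y) (hA : Continuous A) (hq : Continuous q) :
    Continuous (fun t => SD (x t) (y t) (A t) (q t) D k) := by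
  induction D generalizing k with
  | nil => simp only [SD]; fun_prop
  | cons p D ih =>
    simp only [SD]
    have h1 := (cont_GG (16-k) p.2).comp (hx.prodMk hy)
    have h2 := (cont_RR 12 k).comp (hA.prodMk hq)
    exact ((continuous_const.mul h1).mul h2).add (ih (k+1))
theorem cont_UU : Continuous UU := by unfold UU; fun_prop
theorem cont_F3 (D) : Continuous (fun p : ℝ × ℝ × ℝ => F3 D p.1 p.2.1 p.2.2) := by
  unfold F3
  have := cont_UU
  refine ((cont_SD D 0 _ _ _ _ ?_ ?_ ?_ ?_).add ((cont_SD D 0 _ _ _ _ ?_ ?_ ?_ ?_).add (cont_SD D 0 _ _ _ _ ?_ ?_ ?_ ?_))).neg <;> fun_prop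

/-! pair part -/
noncomputable def SA (u : ℝ) : List ℤ → ℕ → ℝ
  | [], _ => 0
  | a :: l, k => a * 2 ^ k * RR 13 u 1 k + SA u l (k + 1)

theorem sA_SA (x : ℝ) (hx : x < 1) (l : List ℤ) (k : ℕ) (hl : l.length + k ≤ 33) (R0 R1 : ℝ)
    (h1 : R1 = (2 / (1 - x)) ^ k * RR 13 (UU x) 1 k) (h0 : k * R0 = k * ((2 / (1 - x)) ^ (k-1) * RR 13 (UU x) 1 (k-1))) :
    (1 - x) ^ 32 * opR.sA (1 / (1 - x)) (2 / (1 - x) * UU x) (2 / (1 - x) * (2 / (1 - x))) l k R0 R1 = SA (UU x) l k := by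
  induction l generalizing k R0 R1 with
  | nil => simp [Ops.sA, SA, opR]
  | cons a l ih =>
    rw [List.length_cons] at hl
    have hx0 : 1 - x ≠ 0 := by linarith
    have e2 := ih (k+1) (by omega) R1 ((2 * k + 13) * (2 / (1 - x) * UU x * R1) + (-(k * (k + 12))) * (2 / (1 - x) * (2 / (1 - x)) * R0)) (by
      cases k with
      | zero => rw [h1]; simp [RR]; ring
      | succ k =>
        have h0' : ((k:ℝ) + 1) * R0 = (k+1) * ((2 / (1 - x)) ^ k * RR 13 (UU x) 1 k) := by simpa using h0
        rw [RR, h1]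
        push_cast
        have : -(((k:ℝ)+1) * (k + 1 + 12)) * (2 / (1 - x) * (2 / (1 - x)) * R0) = -(k+1+12) * (2 / (1 - x) * (2 / (1 - x))) * ((k+1) * R0) := by ring
        rw [this, h0']
        ring) (by rw [h1]; simp)
    rw [Ops.sA, SA, ← e2, opR_pow]
    change _ * ((a : ℝ) * ((1 / (1-x)) ^ (32 - k) * R1) + opR.sA _ _ _ l (k+1) R1 (((2 * k + 13 : ℤ) : ℝ) * _ + ((-(k * (k+12)) : ℤ) : ℝ) * _)) = _
    rw [mul_add]
    congr 1
    · rw [h1]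
      have : (1 - x) ^ 32 = (1 - x) ^ (32 - k) * (1 - x) ^ k := by rw [← pow_add]; congr 1; omega
      rw [this, div_pow, div_pow, one_pow]; field_simp
    · push_cast
      rfl

noncomputable def F2 (D : List (ℕ × List (List ℤ))) (A g : List ℤ) (w M : ℤ) (x : ℝ) : ℝ :=
  -(SD x x (1 - UU x ^ 2) ((1 - UU x ^ 2) ^ 2) D 0 + w * phi x 16 g + SA (UU x) A 0 + M)

theorem Q_F2 (x : ℝ) (hx : x < 1) (D) (hD : lenOk D 0 = true) (A g) (w M) (hA : A.length ≤ 33) (hg : g.length ≤ 17) :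
    (1 - x) ^ 32 * opR.Q D A g w M (x / (1 - x)) = F2 D A g w M x := by
  have h1 : 1 - x ≠ 0 := by linarith
  have e1 : opR.add (opR.c 1) (x / (1 - x)) = 1 / (1 - x) := by simp [opR]; field_simp; ring
  have eh : ∀ t : ℝ, 1 - t ≠ 0 → opR.hh (t / (1 - t)) = 2 / (1 - t) := by
    intro t ht; simp [Ops.hh, opR]; field_simp; ring
  have eu : ∀ t : ℝ, 1 - t ≠ 0 → opR.uu (t / (1 - t)) = 2 / (1 - t) * UU t := by
    intro t ht; simp [Ops.uu, opR, UU]; field_simp; ring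
  have eq : ∀ t : ℝ, 1 - t ≠ 0 → opR.qq (t / (1 - t)) = 4 * (1 - UU t ^ 2) / (1 - t) ^ 2 := by
    intro t ht; simp [Ops.qq, opR, UU]; field_simp; ring
  rw [F2, ← sA_SA x hx A 0 (by omega) 0 1 (by simp [RR]) (by simp), ← gH_phi x hx 16 g hg,
    ← sS_SD x x 1 2 (8 / ((1 - x) * (1 - x))) _ _ hx hx (by norm_num) (by field_simp) D 0 hD 0 1 (by simp [RR]) (by simp)]
  rw [Ops.Q, e1, eq x h1, eh x h1, eu x h1]
  have a1 : opR.mul (opR.c 2) (4 * (1 - UU x ^ 2) / (1 - x) ^ 2) = 8 / ((1 - x) * (1 - x)) * (1 - UU x ^ 2) := by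
    simp [opR]; field_simp; ring
  have a2 : opR.mul (opR.c 4) (opR.mul (4 * (1 - UU x ^ 2) / (1 - x) ^ 2) (4 * (1 - UU x ^ 2) / (1 - x) ^ 2)) =
      8 / ((1 - x) * (1 - x)) * (8 / ((1 - x) * (1 - x))) * (1 - UU x ^ 2) ^ 2 := by
    simp [opR]; field_simp; ring
  have a3 : opR.c 0 = 0 := by simp [opR]
  have a4 : opR.c 1 = 1 := by simp [opR]
  have a5 : opR.c 2 = 2 := by simp [opR]
  rw [a1, a2, a3, a4, a5, opR_pow, opR_pow]
  generalize opR.sS _ _ _ _ _ _ _ _ _ = X1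
  generalize opR.gH _ _ = X2
  change (1 - x) ^ 32 * (((-1 : ℤ) : ℝ) * ((X1 + (w : ℝ) * X2 * _) + (opR.sA _ _ (2 / (1 - x) * (2 / (1 - x))) _ _ _ _ + (M : ℝ) * _))) = _
  generalize opR.sA _ _ _ _ _ _ _ = X3
  push_cast
  have c1 : (1 - x) ^ 32 * (1 / (1 - x)) ^ 16 = (1 - x) ^ 16 := by
    rw [one_div, inv_pow]; field_simp
  have c2 : (1 - x) ^ 32 * (1 / (1 - x)) ^ 32 = 1 := by
    rw [one_div, inv_pow]; field_simp
  have c3 : ((1 - x) * (1 - x) * 1) ^ 16 = (1 - x) ^ 32 := by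
    rw [mul_one, ← pow_two, ← pow_mul]
  rw [c3]
  generalize (1 - x) ^ 32 = a1 at *
  generalize (1 / (1 - x)) ^ 16 = a2 at *
  generalize (1 / (1 - x)) ^ 32 = a3 at *
  generalize (1 - x) ^ 16 = a4 at *
  linear_combination (-(w:ℝ) * X2) * c1 - (M:ℝ) * c2

theorem cont_SA (A : List ℤ) (k : ℕ) : Continuous (fun x => SA (UU x) A k) := by
  induction A generalizing k with
  | nil => simp only [SA]; fun_prop
  | cons a A ih =>
    simp only [SA]
    have := (cont_RR 13 k).comp (cont_UU.prodMk continuous_const : Continuous fun x => (UU x, (1:ℝ)))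
    exact (continuous_const.mul this).add (ih _)
theorem cont_F2 (D A g w M) : Continuous (fun x => F2 D A g w M x) := by
  unfold F2
  have h1 := cont_UU
  have h2 := cont_SA A 0
  have h3 := cont_phi 16 g
  have h4 := cont_SD D 0 (fun x => x) (fun x => x) (fun x => 1 - UU x ^ 2) (fun x => (1 - UU x ^ 2) ^ 2) (by fun_prop) (by fun_prop) (by fun_prop) (by fun_prop)
  fun_prop

def sdg (L : List ℤ) (j : ℕ) : ℕ := (2 ^ 62 - 1 + 2 ^ 40 * L.getD j 0 : ℤ).toNat
def sdf (L : List ℤ) (j : ℕ) : ℕ := if j < L.length then sdg L j else 0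
def sdOk (L : List ℤ) (N : ℕ) : Bool :=
  Nat.beq N (pk 64 (sdf L) L.length) && L.all (fun a => decide (-1000 < a) && decide (a < 1000))

theorem side_LB (n0 n1 n2 N : ℕ) (L : List ℤ) (h0 : 0 < n0) (h1 : 0 < n1) (h2 : 0 < n2) (hL : L.length = n0 * n1 * n2)
    (h : sdOk L N = true) (F : ℝ → ℝ → ℝ → ℝ)
    (hF : ∀ x y z, F x y z = Ph (n0 - 1) (fun i => Ph (n1 - 1) (fun j => Ph (n2 - 1) (fun k =>
    2 ^ 40 * ((L.getD (k + n2 * (j + n1 * i)) 0 : ℤ) : ℝ) - 1) z) y) x) : Ten.LB ⟨n0, n1, n2, N⟩ F := by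
  rw [sdOk, Bool.and_eq_true] at h
  obtain ⟨ha, hb⟩ := h
  have ha := Nat.eq_of_beq_eq_true ha
  have hg : ∀ j, -1000 < L.getD j 0 ∧ L.getD j 0 < 1000 := by
    intro j
    rcases lt_or_ge j L.length with hj | hj
    · rw [List.getD_eq_getElem _ _ hj]
      have := List.all_eq_true.1 hb _ (List.getElem_mem hj)
      simpa using this
    · rw [List.getD_eq_default _ _ hj]; norm_num
  refine ⟨sdf L, ⟨?_, ?_, h0, h1, h2⟩, ?_⟩
  · rw [ha, hL]; rfl
  · intro j
    have := hg j
    unfold sdf sdg W0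
    generalize L.getD j 0 = a at *
    split_ifs
    · zify
      rw [Int.toNat_of_nonneg (by omega)]
      norm_num; omega
    · positivity
  · intro x y z hx hy hz
    rw [hF]
    unfold Ten.val
    refine Ph_mono _ _ _ _ hx.1 hx.2 fun i hi => Ph_mono _ _ _ _ hy.1 hy.2 fun j hj => Ph_mono _ _ _ _ hz.1 hz.2 fun k hk => ?_
    have hi : i + 1 ≤ n0 := by simp only at hi; omega
    have hj : j + 1 ≤ n1 := by simp only at hj; omega
    have hk : k + 1 ≤ n2 := by simp only at hk; omega
    have hlt : k + n2 * (j + n1 * i) < L.length := by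
      rw [hL]
      have a1 : n1 * i + n1 ≤ n1 * n0 := by nlinarith
      have a2 : n2 * (j + n1 * i + 1) ≤ n2 * (n1 * n0) := Nat.mul_le_mul_left _ (by omega)
      nlinarith
    unfold sdf
    rw [if_pos hlt]
    unfold sdg
    have := hg (k + n2 * (j + n1 * i))
    generalize L.getD (k + n2 * (j + n1 * i)) 0 = a at *
    have e : (((2 ^ 62 - 1 + 2 ^ 40 * a : ℤ).toNat : ℤ) : ℝ) = ((2 ^ 62 - 1 + 2 ^ 40 * a : ℤ) : ℝ) := by
      rw [Int.toNat_of_nonneg (by omega)]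
    rw [Int.cast_natCast] at e
    rw [e]
    push_cast
    unfold W0
    norm_num
    linarith

def detL : List ℤ := [256,64,16,64,-56,-32,16,-32,64,64,-56,-32,-56,-158,-116,-32,-116,-56,16,-32,64,-32,-116,-56,64,-56,-32]
theorem o1_LB : Ten.LB ⟨2,2,2,o1N⟩ (fun x y _ => (x - y) * 2 ^ 40 - 1) := by
  refine side_LB 2 2 2 _ [0,0,-1,-1,1,1,0,0] (by norm_num) (by norm_num) (by norm_num) rfl (by decide +kernel) _ ?_
  intro x y z
  simp [Ph]
  ring
theorem o2_LB : Ten.LB ⟨2,2,2,o2N⟩ (fun _ y z => (y - z) * 2 ^ 40 - 1) := by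
  refine side_LB 2 2 2 _ [0,-1,1,0,0,-1,1,0] (by norm_num) (by norm_num) (by norm_num) rfl (by decide +kernel) _ ?_
  intro x y z
  simp [Ph]
  ring
theorem det_LB : Ten.LB ⟨3,3,3,detN⟩ (fun x y z => -(1 + 2 * UU x * UU y * UU z - UU x ^ 2 - UU y ^ 2 - UU z ^ 2) * 2 ^ 46 - 1) := by
  refine side_LB 3 3 3 _ detL (by norm_num) (by norm_num) (by norm_num) rfl (by decide +kernel) _ ?_
  intro x y z
  simp [Ph, detL, UU]
  ring
theorem chk1_sound (fuel : ℕ) (ts : List Ten) (Fs) (h : List.Forall₂ Ten.LB ts Fs) (hok : chk1 fuel ts = true) :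
    Good Fs := by
  induction fuel generalizing ts Fs with
  | zero => exact any_sound ts Fs h hok
  | succ fuel ih =>
    rw [chk1, Bool.or_eq_true, Bool.and_eq_true] at hok
    rcases hok with hok | ⟨h1, h2⟩
    · exact any_sound ts Fs h hok
    · exact Good_split Fs 2 (ih _ _ (LBs_left ts Fs h 2) h1) (ih _ _ (LBs_right ts Fs h 2) h2)

section
variable {R R' : Type} {o : Ops R} {o' : Ops R'} {r : R → R' → Prop}
theorem rel_sA (H : Ops.Rel o o' r) {h h' A A' q q'} (hh : r h h') (hA : r A A') (hq : r q q') (l : List ℤ)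
    (k : ℕ) {R0 R0' R1 R1'} (h0 : r R0 R0') (h1 : r R1 R1') :
    r (o.sA h A q l k R0 R1) (o'.sA h' A' q' l k R0' R1') := by
  induction l generalizing k R0 R0' R1 R1' with
  | nil => exact H.c _
  | cons a g ih =>
    exact H.add (H.mul (H.c _) (H.mul (rel_pow H hh _) h1))
      (ih _ h1 (H.add (H.mul (H.c _) (H.mul hA h1)) (H.mul (H.c _) (H.mul hq h0))))
theorem rel_Q (H : Ops.Rel o o' r) (D A g w M) {x x'} (hx : r x x') : r (o.Q D A g w M x) (o'.Q D A g w M x') :=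
  H.mul (H.c _) (H.add
    (H.add (rel_sS H hx hx (H.c _) (H.mul (H.c _) (rel_qq H hx)) (H.mul (H.c _) (H.mul (rel_qq H hx) (rel_qq H hx))) D 0 (H.c _) (H.c _))
      (H.mul (H.mul (H.c _) (rel_gH H hx g)) (rel_pow H (H.add (H.c _) hx) 16)))
    (H.add (rel_sA H (H.add (H.c _) hx) (rel_uu H hx) (H.mul (rel_hh H hx) (rel_hh H hx)) A 0 (H.c _) (H.c _))
      (H.mul (H.c _) (rel_pow H (H.add (H.c _) hx) 32))))
end
theorem relD_mono {i P n m} (h : relD' i P n) (hb : Nat.ble n m = true) : relD' i P m :=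
  fun s hs => (h s hs).trans_le (Nat.le_of_ble_eq_true hb)
theorem relD_X1 (i : Fin 3) : relD' i (MvPolynomial.X i) 2 := by simpa using relD_X i i
theorem relD_X2 (i j : Fin 3) (h : i ≠ j) : relD' i (MvPolynomial.X j) 1 := by simpa [h] using relD_X i j

theorem C16_ok : ∀ i < 17, C16.getD i 0 = (17-1).choose i := by decide +kernel
theorem C32_ok : ∀ i < 33, C32.getD i 0 = (33-1).choose i := by decide +kernel
theorem C1_ok : ∀ i < 1, [1].getD i 0 = (1-1).choose i := by decide +kernel
theorem data_ok : lenOk dataW 0 = true := by decide +kernel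

set_option exponentiation.threshold 2000
theorem root3_gen (D) (kT : ℤ) (hk : opZ.T D (2 ^ (275 * (17 * 17))) (2 ^ (275 * 17)) (2 ^ 275) = kT) (data_ok : lenOk D 0 = true)
    (T_N : Nat.ble (opN.T D 1 1 1 + 1) (2 ^ 274) = true) (T_D0 : Nat.ble (opD.T D 2 1 1) 17 = true)
    (T_D1 : Nat.ble (opD.T D 1 2 1) 17 = true) (T_D2 : Nat.ble (opD.T D 1 1 2) 17 = true)
    (T_top : topOk (17*17*17) (rootOf 275 17 17 C16 C16 C16 (2 ^ 165) (kron 275 (17*17*17) kT)) = true) :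
    Ten.LB ⟨17, 17, 17, rootOf 275 17 17 C16 C16 C16 (2 ^ 165) (kron 275 (17*17*17) kT)⟩ (fun x y z => F3 D x y z / 2 ^ 165) := by
  refine root_LB 275 17 17 17 (2 ^ 165) (opN.T D 1 1 1) C16 C16 C16 rfl rfl rfl C16_ok C16_ok C16_ok
    (by norm_num) (by norm_num) (by norm_num) (by norm_num) (by positivity)
    (opP.T D (MvPolynomial.X 0) (MvPolynomial.X 1) (MvPolynomial.X 2))
    (rel_T rel_N D (relN_X 0) (relN_X 1) (relN_X 2)) (Nat.le_of_ble_eq_true T_N)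
    (relD_mono (rel_T (rel_D 0) D (relD_X1 0) (relD_X2 0 1 (by decide)) (relD_X2 0 2 (by decide))) T_D0)
    (relD_mono (rel_T (rel_D 1) D (relD_X2 1 0 (by decide)) (relD_X1 1) (relD_X2 1 2 (by decide))) T_D1)
    (relD_mono (rel_T (rel_D 2) D (relD_X2 2 0 (by decide)) (relD_X2 2 1 (by decide)) (relD_X1 2)) T_D2)
    kT ?_ T_top _ ?_ ?_
  · rw [← hk]
    exact rel_T (rel_Z _) D (MvPolynomial.eval_X _) (MvPolynomial.eval_X _) (MvPolynomial.eval_X _)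
  · exact (cont_F3 D).div_const _
  · intro x y z _ hx _ hy _ hz
    have e : MvPolynomial.aeval ![x/(1-x), y/(1-y), z/(1-z)] (opP.T D (MvPolynomial.X 0) (MvPolynomial.X 1) (MvPolynomial.X 2))
        = opR.T D (x/(1-x)) (y/(1-y)) (z/(1-z)) :=
      rel_T (rel_R _) D (MvPolynomial.aeval_X _ _) (MvPolynomial.aeval_X _ _) (MvPolynomial.aeval_X _ _)
    rw [e]
    have := T_F3 x y z hx hy hz D data_ok
    rw [Nat.cast_pow, Nat.cast_ofNat, div_mul_cancel₀ _ (by positivity)]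
    exact this

theorem root3_LB : Ten.LB ⟨17, 17, 17, root3⟩ (fun x y z => F3 dataW x y z / 2 ^ 165) :=
  root3_gen dataW kT rfl data_ok T_N T_D0 T_D1 T_D2 T_top

theorem root1_gen (D A g) (w M : ℤ) (kQ : ℤ) (hk : opZ.Q D A g w M (2 ^ 256) = kQ) (data_ok : lenOk D 0 = true)
    (hA : A.length ≤ 33) (hg : g.length ≤ 17)
    (Q_N : Nat.ble (opN.Q D A g w M 1 + 1) (2 ^ 255) = true) (Q_D2 : Nat.ble (opD.Q D A g w M 2) 33 = true)
    (Q_D1 : Nat.ble (opD.Q D A g w M 1) 1 = true)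
    (Q_top : topOk (1*1*33) (rootOf 256 1 33 [1] [1] C32 (2 ^ 156) (kron 256 (1*1*33) kQ)) = true) :
    Ten.LB ⟨1, 1, 33, rootOf 256 1 33 [1] [1] C32 (2 ^ 156) (kron 256 (1*1*33) kQ)⟩ (fun _ _ z => F2 D A g w M z / 2 ^ 156) := by
  refine root_LB 256 1 1 33 (2 ^ 156) (opN.Q D A g w M 1) [1] [1] C32 rfl rfl (by decide +kernel) C1_ok C1_ok C32_ok
    (by norm_num) (by norm_num) (by norm_num) (by norm_num) (by positivity)
    (opP.Q D A g w M (MvPolynomial.X 2))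
    (rel_Q rel_N _ _ _ _ _ (relN_X 2)) (Nat.le_of_ble_eq_true Q_N)
    (relD_mono (rel_Q (rel_D 0) _ _ _ _ _ (relD_X2 0 2 (by decide))) Q_D1)
    (relD_mono (rel_Q (rel_D 1) _ _ _ _ _ (relD_X2 1 2 (by decide))) Q_D1)
    (relD_mono (rel_Q (rel_D 2) _ _ _ _ _ (relD_X1 2)) Q_D2)
    kQ ?_ Q_top _ ?_ ?_
  · rw [← hk]
    exact rel_Q (rel_Z _) _ _ _ _ _ (MvPolynomial.eval_X _)
  · exact (((cont_F2 D A g w M).comp continuous_snd).comp continuous_snd).div_const _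
  · intro x y z _ hx _ hy _ hz
    have e : MvPolynomial.aeval ![x/(1-x), y/(1-y), z/(1-z)] (opP.Q D A g w M (MvPolynomial.X 2))
        = opR.Q D A g w M (z/(1-z)) :=
      rel_Q (rel_R _) _ _ _ _ _ (MvPolynomial.aeval_X _ _)
    rw [e]
    have := Q_F2 z hz D data_ok A g w M hA hg
    rw [Nat.cast_pow, Nat.cast_ofNat, div_mul_cancel₀ _ (by positivity), ← this]
    simp

theorem root1_LB : Ten.LB ⟨1, 1, 33, root1⟩ (fun _ _ z => F2 dataW dataA g00 w00 M00 z / 2 ^ 156) :=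
  root1_gen dataW dataA g00 w00 M00 kQ rfl data_ok (by decide +kernel) (by decide +kernel) Q_N Q_D2 Q_D1 Q_top

theorem pair_nonneg (x : ℝ) (hx : I01 x) : 0 ≤ F2 dataW dataA g00 w00 M00 x := by
  have h := chk1_sound 8 _ _ (List.Forall₂.cons root1_LB .nil) Q_chk
  obtain ⟨F, hF, h0⟩ := h 0 0 x ⟨le_rfl, zero_le_one⟩ ⟨le_rfl, zero_le_one⟩ hx
  rw [List.mem_singleton.1 hF] at h0
  have h0 : 0 ≤ F2 dataW dataA g00 w00 M00 x / 2 ^ 156 := h0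
  by_contra hc
  have := div_neg_of_neg_of_pos (not_le.1 hc) (show (0:ℝ) < 2 ^ 156 by positivity)
  linarith

theorem tri0 (x y z : ℝ) (hx : I01 x) (hy : I01 y) (hz : I01 z) (hxy : x ≤ y) (hyz : y ≤ z)
    (hd : 0 ≤ 1 + 2 * UU x * UU y * UU z - UU x ^ 2 - UU y ^ 2 - UU z ^ 2) : 0 ≤ F3 dataW x y z := by
  have hL := List.Forall₂.cons o1_LB (.cons o2_LB (.cons det_LB (.cons root3_LB .nil)))
  have h := Good_split _ 0
    (Good_split _ 1 (chk_sound 25 2 _ _ (LBs_left _ _ (LBs_left _ _ hL 0) 1) T_chk00) (chk_sound 25 2 _ _ (LBs_right _ _ (LBs_left _ _ hL 0) 1) T_chk01))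
    (Good_split _ 1 (chk_sound 25 2 _ _ (LBs_left _ _ (LBs_right _ _ hL 0) 1) T_chk10) (chk_sound 25 2 _ _ (LBs_right _ _ (LBs_right _ _ hL 0) 1) T_chk11))
  obtain ⟨F, hF, h0⟩ := h x y z hx hy hz
  simp only [List.mem_cons, List.not_mem_nil, or_false] at hF
  rcases hF with rfl | rfl | rfl | rfl
  · exfalso; simp only at h0; linarith
  · exfalso; simp only at h0; linarith
  · exfalso; simp only at h0; linarith
  · by_contra hc
    have := div_neg_of_neg_of_pos (not_le.1 hc) (show (0:ℝ) < 2 ^ 165 by positivity)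
    linarith

theorem GG_comm (x y n l) : GG x y n l = GG y x n l := by
  induction l with
  | nil => rfl
  | cons g l ih => rw [GG, GG, ih, mul_comm]
theorem SD_comm (x y A q D k) : SD x y A q D k = SD y x A q D k := by
  induction D generalizing k with
  | nil => rfl
  | cons g l ih => rw [SD, SD, ih, GG_comm]
theorem F3_swap1 (D x y z) : F3 D x y z = F3 D y x z := by
  unfold F3
  rw [SD_comm x y, mul_comm (UU x) (UU y), mul_comm (1 - UU x ^ 2) (1 - UU y ^ 2)]; ring
theorem F3_swap2 (D x y z) : F3 D x y z = F3 D x z y := by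
  unfold F3
  rw [SD_comm y z, mul_comm (UU y) (UU z), mul_comm (1 - UU y ^ 2) (1 - UU z ^ 2)]; ring

theorem tri_nonneg (x y z : ℝ) (hx : I01 x) (hy : I01 y) (hz : I01 z) 
    (hd : 0 ≤ 1 + 2 * UU x * UU y * UU z - UU x ^ 2 - UU y ^ 2 - UU z ^ 2) : 0 ≤ F3 dataW x y z := by
  rcases le_total x y with h1 | h1 <;> rcases le_total y z with h2 | h2 <;> rcases le_total x z with h3 | h3
  · exact tri0 x y z hx hy hz h1 h2 hd
  · exact tri0 x y z hx hy hz h1 h2 hd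
  · rw [F3_swap2]; exact tri0 x z y hx hz hy h3 h2 (by linarith)
  · rw [F3_swap2, F3_swap1]; exact tri0 z x y hz hx hy h3 h1 (by linarith)
  · rw [F3_swap1]; exact tri0 y x z hy hx hz h1 h3 (by linarith)
  · rw [F3_swap1, F3_swap2]; exact tri0 y z x hy hz hx h2 h3 (by linarith)
  · rw [F3_swap1, F3_swap2, F3_swap1]; exact tri0 z y x hz hy hx h2 h1 (by linarith)
  · rw [F3_swap1, F3_swap2, F3_swap1]; exact tri0 z y x hz hy hx h2 h1 (by linarith)

set_option linter.unusedSimpArgs false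
section Fischer
open MvPolynomial
variable {m : ℕ}
noncomputable def fcs (s : Fin m →₀ ℕ) : ℝ := ∏ i, ((s i).factorial : ℝ)
noncomputable def BF (m : ℕ) : MvPolynomial (Fin m) ℝ →ₗ[ℝ] MvPolynomial (Fin m) ℝ →ₗ[ℝ] ℝ :=
  (basisMonomials (Fin m) ℝ).constr ℝ (fun s => fcs s • lcoeff ℝ s)

theorem BF_mon (s : Fin m →₀ ℕ) (q) : BF m (monomial s 1) q = fcs s * q.coeff s := by
  have : BF m (basisMonomials (Fin m) ℝ s) = fcs s • lcoeff ℝ s := Module.Basis.constr_basis _ _ _ _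
  rw [coe_basisMonomials] at this
  rw [this]; rfl

theorem fcs_add (s : Fin m →₀ ℕ) (i : Fin m) : fcs (s + Finsupp.single i 1) = fcs s * (s i + 1) := by
  unfold fcs
  rw [← Finset.mul_prod_erase _ _ (Finset.mem_univ i), ← Finset.mul_prod_erase Finset.univ (fun i => ((s i).factorial : ℝ)) (Finset.mem_univ i)]
  have : ∏ j ∈ Finset.univ.erase i, (((s + Finsupp.single i 1 : Fin m →₀ ℕ) j).factorial : ℝ) = ∏ j ∈ Finset.univ.erase i, ((s j).factorial : ℝ) := by
    refine Finset.prod_congr rfl fun j hj => ?_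
    rw [Finsupp.add_apply, Finsupp.single_eq_of_ne (Finset.ne_of_mem_erase hj)]; simp
  rw [this]
  simp [Nat.factorial_succ]
  ring

theorem BF_X (i : Fin m) (p q) : BF m (X i * p) q = BF m p (pderiv i q) := by
  have : (BF m).comp (LinearMap.mulLeft ℝ (X i)) = (LinearMap.lcomp ℝ ℝ (pderiv i).toLinearMap).comp (BF m) := by
    refine (basisMonomials (Fin m) ℝ).ext fun s => ?_
    rw [coe_basisMonomials]
    refine LinearMap.ext fun q => ?_
    simp only [LinearMap.comp_apply, LinearMap.mulLeft_apply, LinearMap.lcomp_apply]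
    rw [X, monomial_mul, one_mul, add_comm _ s, BF_mon, fcs_add]
    change _ = BF m (monomial s 1) (pderiv i q)
    rw [BF_mon, coeff_pderiv]
    ring
  exact LinearMap.congr_fun (LinearMap.congr_fun this p) q

theorem BF_nonneg (p) : 0 ≤ BF m p p := by
  have h : BF m p p = ∑ s ∈ p.support, p.coeff s * (fcs s * p.coeff s) := by
    conv_lhs => enter [1]; rw [p.as_sum]
    rw [map_sum, LinearMap.sum_apply]
    refine Finset.sum_congr rfl fun s _ => ?_
    have : monomial s (coeff s p) = coeff s p • monomial s (1:ℝ) := by rw [smul_monomial]; simp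
    rw [this, map_smul, LinearMap.smul_apply, BF_mon]; rfl
  rw [h]
  refine Finset.sum_nonneg fun s _ => ?_
  have : 0 ≤ fcs s := Finset.prod_nonneg fun i _ => by positivity
  nlinarith [mul_nonneg this (sq_nonneg (p.coeff s))]

noncomputable def lin (x : Fin m → ℝ) : MvPolynomial (Fin m) ℝ := ∑ i, C (x i) * X i
noncomputable def NN (m : ℕ) : MvPolynomial (Fin m) ℝ := ∑ i, X i * X i
noncomputable def Lap (q : MvPolynomial (Fin m) ℝ) : MvPolynomial (Fin m) ℝ := ∑ i, pderiv i (pderiv i q)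
noncomputable def Dx (x : Fin m → ℝ) (q : MvPolynomial (Fin m) ℝ) : MvPolynomial (Fin m) ℝ := ∑ i, C (x i) * pderiv i q

theorem BF_lin (x : Fin m → ℝ) (p q) : BF m (lin x * p) q = BF m p (Dx x q) := by
  unfold lin Dx
  rw [Finset.sum_mul, map_sum, LinearMap.sum_apply, map_sum]
  refine Finset.sum_congr rfl fun i _ => ?_
  rw [mul_assoc, ← smul_eq_C_mul, ← smul_eq_C_mul, map_smul, LinearMap.smul_apply, BF_X, map_smul]
theorem BF_NN (p q) : BF m (NN m * p) q = BF m p (Lap q) := by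
  unfold NN Lap
  rw [Finset.sum_mul, map_sum, LinearMap.sum_apply, map_sum]
  refine Finset.sum_congr rfl fun i _ => ?_
  rw [mul_assoc, BF_X, BF_X]

theorem hom_Dx (x : Fin m → ℝ) (k : ℕ) (q) (hq : IsHomogeneous q (k+1)) : IsHomogeneous (Dx x q) k := by
  unfold Dx
  refine IsHomogeneous.sum _ _ _ fun i _ => ?_
  have := (isHomogeneous_C (Fin m) (x i)).mul (hq.pderiv (i := i))
  simpa using this

theorem eval_Dx (x : Fin m → ℝ) (k : ℕ) (q) (hq : IsHomogeneous q k) : eval x (Dx x q) = k * eval x q := by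
  have := congrArg (eval x) hq.sum_X_mul_pderiv
  simp only [map_sum, map_mul, eval_X] at this
  unfold Dx
  simp only [map_sum, map_mul, eval_C]
  rw [this, map_nsmul, nsmul_eq_mul]

theorem BF_lin_pow (x : Fin m → ℝ) (k : ℕ) (q) (hq : IsHomogeneous q k) : BF m (lin x ^ k) q = k.factorial * eval x q := by
  induction k generalizing q with
  | zero =>
    have h1 : (lin x ^ 0 : MvPolynomial (Fin m) ℝ) = monomial 0 1 := by simp
    rw [h1, BF_mon]
    obtain ⟨c, rfl⟩ : ∃ c, q = C c := ⟨_, totalDegree_eq_zero_iff_eq_C.1 (Nat.le_zero.1 hq.totalDegree_le)⟩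
    simp [fcs]
  | succ k ih =>
    rw [pow_succ', BF_lin, ih _ (hom_Dx x k q hq), eval_Dx x (k+1) q hq, Nat.factorial_succ]
    push_cast; ring

noncomputable def PP (a : ℕ) (x : Fin m → ℝ) : ℕ → MvPolynomial (Fin m) ℝ
  | 0 => 1
  | 1 => C (a : ℝ) * lin x
  | k + 2 => C ((2 * (k + 1) + a : ℝ)) * lin x * PP a x (k + 1) - C ((k + 1) * (k + a) : ℝ) * C (∑ i, x i * x i) * NN m * PP a x k

theorem eval_PP (a : ℕ) (x y : Fin m → ℝ) (k : ℕ) :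
    eval y (PP a x k) = RR a (∑ i, x i * y i) ((∑ i, x i * x i) * ∑ i, y i * y i) k := by
  induction k using Nat.strong_induction_on with
  | _ k ih =>
    have e1 : eval y (lin x) = ∑ i, x i * y i := by simp [lin]
    have e2 : eval y (NN m) = ∑ i, y i * y i := by simp [NN]
    match k, ih with
    | 0, _ => simp [PP, RR]
    | 1, _ => rw [PP, RR, map_mul, eval_C, e1]
    | k+2, ih =>
      rw [PP, RR, ← ih (k+1) (by omega), ← ih k (by omega)]
      simp only [map_sub, map_mul, eval_C, e1, e2]
      ring

theorem hom_lin (x : Fin m → ℝ) : IsHomogeneous (lin x) 1 := by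
  refine IsHomogeneous.sum _ _ _ fun i _ => ?_
  have := (isHomogeneous_C (Fin m) (x i)).mul (isHomogeneous_X ℝ i)
  simpa using this
theorem hom_NN : IsHomogeneous (NN m) 2 := by
  refine IsHomogeneous.sum _ _ _ fun i _ => ?_
  exact (isHomogeneous_X ℝ i).mul (isHomogeneous_X ℝ i)

theorem hom_PP (a : ℕ) (x : Fin m → ℝ) (k : ℕ) : IsHomogeneous (PP a x k) k := by
  induction k using Nat.strong_induction_on with
  | _ k ih =>
    match k, ih with
    | 0, _ => exact isHomogeneous_one _ _
    | 1, _ => 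
      have := (isHomogeneous_C (Fin m) (a:ℝ)).mul (hom_lin x)
      simpa [PP] using this
    | k+2, ih =>
      rw [PP]
      refine IsHomogeneous.sub ?_ ?_
      · have := ((isHomogeneous_C (Fin m) (2 * (k + 1) + a : ℝ)).mul (hom_lin x)).mul (ih (k+1) (by omega))
        rwa [show 0 + 1 + (k + 1) = k + 2 by omega] at this
      · have := (((isHomogeneous_C (Fin m) ((k + 1) * (k + a) : ℝ)).mul (isHomogeneous_C (Fin m) (∑ i, x i * x i))).mul hom_NN).mul (ih k (by omega))
        rwa [show 0 + 0 + 2 + k = k + 2 by omega] at this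

theorem pd_lin (x : Fin m → ℝ) (i) : pderiv i (lin x) = C (x i) := by
  unfold lin
  simp [pderiv_C_mul, pderiv_X, Pi.single_apply]
theorem pd_NN (i) : pderiv i (NN m) = 2 * X i := by
  unfold NN
  simp [pderiv_mul, pderiv_X, Pi.single_apply, Finset.sum_add_distrib]
  ring

theorem Dx_mul (x : Fin m → ℝ) (p q) : Dx x (p * q) = Dx x p * q + p * Dx x q := by
  unfold Dx
  rw [Finset.sum_mul, Finset.mul_sum, ← Finset.sum_add_distrib]
  refine Finset.sum_congr rfl fun i _ => ?_
  rw [pderiv_mul]; ring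
theorem Dx_lin (x : Fin m → ℝ) : Dx x (lin x) = C (∑ i, x i * x i) := by
  unfold Dx
  simp [pd_lin]
theorem Dx_NN (x : Fin m → ℝ) : Dx x (NN m) = 2 * lin x := by
  unfold Dx lin
  rw [Finset.mul_sum]
  refine Finset.sum_congr rfl fun i _ => ?_
  rw [pd_NN]; ring
theorem Dx_C (x : Fin m → ℝ) (c : ℝ) : Dx x (C c) = 0 := by simp [Dx]
theorem Dx_sub (x : Fin m → ℝ) (p q) : Dx x (p - q) = Dx x p - Dx x q := by
  simp [Dx, mul_sub]

theorem Dx_PP (a : ℕ) (x : Fin m → ℝ) (k : ℕ) :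
    Dx x (PP a x (k+1)) = C ((k + 1) * (k + a) : ℝ) * C (∑ i, x i * x i) * PP a x k := by
  induction k using Nat.strong_induction_on with
  | _ k ih =>
    match k, ih with
    | 0, _ => rw [zero_add, show PP a x 1 = C (a : ℝ) * lin x from rfl, Dx_mul, Dx_lin, Dx_C, PP]; simp
    | 1, _ =>
      simp only [PP, Dx_sub, Dx_mul, Dx_lin, Dx_C, Dx_NN]
      have : Dx x (1 : MvPolynomial (Fin m) ℝ) = 0 := by simpa using Dx_C x 1
      rw [this]
      simp only [map_add, map_mul, map_one, map_ofNat, map_natCast, Nat.cast_add, Nat.cast_one, Nat.cast_zero, map_zero]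
      ring
    | k+2, ih =>
      have h1 := ih (k+1) (by omega)
      have h2 := ih k (by omega)
      rw [PP]
      simp only [Dx_sub, Dx_mul, Dx_lin, Dx_C, Dx_NN, h1, h2]
      rw [show PP a x (k+2) = _ from rfl, PP]
      simp only [map_add, map_mul, map_one, map_ofNat, map_natCast, Nat.cast_add, Nat.cast_one]
      ring

theorem Lap_sub (p q : MvPolynomial (Fin m) ℝ) : Lap (p - q) = Lap p - Lap q := by simp [Lap]
theorem Lap_Cmul (c) (q : MvPolynomial (Fin m) ℝ) : Lap (C c * q) = C c * Lap q := by simp [Lap, pderiv_C_mul, Finset.mul_sum]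
theorem Lap_lin (x : Fin m → ℝ) (q) : Lap (lin x * q) = lin x * Lap q + 2 * Dx x q := by
  unfold Lap Dx
  rw [Finset.mul_sum, Finset.mul_sum, ← Finset.sum_add_distrib]
  refine Finset.sum_congr rfl fun i _ => ?_
  simp only [pderiv_mul, map_add, pd_lin, pderiv_C]; ring
theorem Lap_NN (k : ℕ) (q : MvPolynomial (Fin m) ℝ) (hq : IsHomogeneous q k) : Lap (NN m * q) = NN m * Lap q + C (4 * k + 2 * m : ℝ) * q := by
  have h : C (4 * k + 2 * m : ℝ) * q = 4 * (∑ i, X i * pderiv i q) + ∑ i : Fin m, 2 * q := by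
    rw [hq.sum_X_mul_pderiv]
    simp only [map_add, map_mul, map_ofNat, map_natCast, Finset.sum_const, Finset.card_univ, Fintype.card_fin, nsmul_eq_mul]; ring
  rw [h]
  unfold Lap
  rw [Finset.mul_sum, Finset.mul_sum, ← Finset.sum_add_distrib, ← Finset.sum_add_distrib]
  refine Finset.sum_congr rfl fun i _ => ?_
  have h2 : pderiv i (2 * X i : MvPolynomial (Fin m) ℝ) = 2 := by
    rw [show (2 : MvPolynomial (Fin m) ℝ) = C 2 from (map_ofNat C 2).symm, pderiv_C_mul, pderiv_X_self, mul_one]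
  rw [pderiv_mul, map_add, pd_NN, pderiv_mul (f := 2 * X i), h2, pderiv_mul, pd_NN]; ring

theorem Lap_PP (a : ℕ) (hm : m = a + 2) (x : Fin m → ℝ) (k : ℕ) : Lap (PP a x k) = 0 := by
  induction k using Nat.strong_induction_on with
  | _ k ih =>
    match k, ih with
    | 0, _ => simp [PP, Lap]
    | 1, _ => simp [PP, Lap, pd_lin, pderiv_C_mul]
    | k+2, ih =>
      have h1 := ih (k+1) (by omega)
      have h2 := ih k (by omega)
      rw [PP, Lap_sub, mul_assoc, mul_assoc, mul_assoc, Lap_Cmul, Lap_lin, Lap_Cmul, Lap_Cmul, Lap_NN k _ (hom_PP a x k), h1, h2, Dx_PP, show (m : ℝ) = a + 2 by rw [hm]; push_cast; rfl]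
      simp only [map_add, map_mul, map_one, map_ofNat, map_natCast, Nat.cast_add, Nat.cast_one, Nat.cast_ofNat]
      ring

theorem PP_split (a : ℕ) (ha : 0 < a) (x : Fin m → ℝ) (k : ℕ) : ∃ α : ℝ, 0 < α ∧ ∀ x : Fin m → ℝ, ∃ G, PP a x k = C α * lin x ^ k + NN m * G := by
  induction k using Nat.strong_induction_on with
  | _ k ih =>
    match k, ih with
    | 0, _ => exact ⟨1, one_pos, fun x => ⟨0, by simp [PP]⟩⟩
    | 1, _ => exact ⟨a, by exact_mod_cast ha, fun x => ⟨0, by simp [PP]⟩⟩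
    | k+2, ih =>
      obtain ⟨α, h0, h⟩ := ih (k+1) (by omega)
      refine ⟨(2 * (k + 1) + a) * α, by positivity, fun x => ?_⟩
      obtain ⟨G, hG⟩ := h x
      refine ⟨C ((2 * (k + 1) + a : ℝ)) * lin x * G - C ((k + 1) * (k + a) : ℝ) * C (∑ i, x i * x i) * PP a x k, ?_⟩
      rw [PP, hG, C_mul (a := (2 * (k + 1) + a : ℝ)) (a' := α)]; ring

theorem RR_pos {ι : Type*} (s : Finset ι) (a : ℕ) (ha : 0 < a) (hm : m = a + 2) (v : ι → Fin m → ℝ) (c : ι → ℝ) (k : ℕ) :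
    0 ≤ ∑ i ∈ s, ∑ j ∈ s, c i * c j * RR a (∑ t, v i t * v j t) ((∑ t, v i t * v i t) * ∑ t, v j t * v j t) k := by
  obtain ⟨α, h0, h⟩ := PP_split (m := m) a ha 0 k
  choose G hG using h
  let H : MvPolynomial (Fin m) ℝ := ∑ i ∈ s, C (c i) * PP a (v i) k
  have hH : IsHomogeneous H k := IsHomogeneous.sum _ _ _ fun i _ => by
    simpa using (isHomogeneous_C (Fin m) (c i)).mul (hom_PP a (v i) k)
  have hL : Lap H = 0 := by
    have : Lap H = ∑ i ∈ s, Lap (C (c i) * PP a (v i) k) := by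
      simp only [Lap, H, map_sum]; rw [Finset.sum_comm]
    rw [this]
    exact Finset.sum_eq_zero fun i _ => by rw [Lap_Cmul, Lap_PP a hm]; simp
  have e : ∀ i, BF m (PP a (v i) k) H = α * k.factorial * eval (v i) H := by
    intro i
    rw [hG (v i), map_add, LinearMap.add_apply, BF_NN, hL, map_zero, add_zero, ← smul_eq_C_mul, map_smul, LinearMap.smul_apply, BF_lin_pow _ _ _ hH, smul_eq_mul]
    ring
  have e2 : BF m H H = α * k.factorial * ∑ i ∈ s, c i * eval (v i) H := by
    have : ∀ q, BF m H q = ∑ i ∈ s, c i * BF m (PP a (v i) k) q := by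
      intro q
      rw [show H = ∑ i ∈ s, C (c i) * PP a (v i) k from rfl, map_sum, LinearMap.sum_apply]
      refine Finset.sum_congr rfl fun i _ => ?_
      rw [← smul_eq_C_mul, map_smul, LinearMap.smul_apply, smul_eq_mul]
    rw [this, Finset.mul_sum]
    refine Finset.sum_congr rfl fun i _ => ?_
    rw [e]; ring
  have e3 : ∑ i ∈ s, c i * eval (v i) H = ∑ i ∈ s, ∑ j ∈ s, c i * c j * RR a (∑ t, v i t * v j t) ((∑ t, v i t * v i t) * ∑ t, v j t * v j t) k := by
    refine Finset.sum_congr rfl fun i _ => ?_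
    rw [show H = ∑ i ∈ s, C (c i) * PP a (v i) k from rfl, map_sum, Finset.mul_sum]
    refine Finset.sum_congr rfl fun j _ => ?_
    rw [map_mul, eval_C, eval_PP, mul_comm (∑ t, v i t * v i t)]
    simp only [mul_comm (v j _) (v i _)]
    ring
  rw [← e3]
  have := BF_nonneg H
  rw [e2] at this
  exact nonneg_of_mul_nonneg_right this (by positivity)
end Fischer

section Geo
local notation "E15" => EuclideanSpace ℝ (Fin 15)
local notation "ip" => inner ℝ

theorem pos15 (S : Finset E15) (h : ∀ x ∈ S, ‖x‖ = 1) (k : ℕ) : 0 ≤ ∑ y ∈ S, ∑ z ∈ S, RR 13 (ip y z) 1 k := by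
  have := RR_pos S 13 (by norm_num) (m := 15) rfl (fun y t => y t) (fun _ => 1) k
  refine this.trans_eq (Finset.sum_congr rfl fun y hy => Finset.sum_congr rfl fun z hz => ?_)
  have e : ∀ y z : E15, ∑ t, y t * z t = ip y z := by
    intro y z; rw [PiLp.inner_apply]; simp [mul_comm]
  simp only [e, real_inner_self_eq_norm_sq, h y hy, h z hz]
  norm_num

theorem pos14 (T : Finset E15) (h : ∀ x ∈ T, ‖x‖ = 1) (z : E15) (hz : ‖z‖ = 1) (c : E15 → ℝ) (k : ℕ) :
    0 ≤ ∑ y ∈ T, ∑ y' ∈ T, c y * c y' * RR 12 (ip y y' - ip y z * ip y' z) ((1 - ip y z ^ 2) * (1 - ip y' z ^ 2)) k := by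
  have hz0 : z ≠ 0 := by rintro rfl; simp at hz
  haveI : Fact (Module.finrank ℝ E15 = 14 + 1) := ⟨by simp⟩
  have hf : Module.finrank ℝ (ℝ ∙ z)ᗮ = 12 + 2 := Submodule.finrank_orthogonal_span_singleton (n := 14) hz0
  have hzz : ip z z = 1 := by rw [real_inner_self_eq_norm_sq, hz]; norm_num
  let b := stdOrthonormalBasis ℝ (ℝ ∙ z)ᗮ
  let w : E15 → (ℝ ∙ z)ᗮ := fun y => ⟨y - ip y z • z, by
    rw [Submodule.mem_orthogonal_singleton_iff_inner_right, inner_sub_right, inner_smul_right, hzz, real_inner_comm]; ring⟩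
  have hw : ∀ y y', ip (w y) (w y') = ip y y' - ip y z * ip y' z := by
    intro y y'
    change ip (y - ip y z • z) (y' - ip y' z • z) = _
    rw [inner_sub_left, inner_sub_right, inner_sub_right, real_inner_smul_left, real_inner_smul_right, real_inner_smul_left, real_inner_smul_right, hzz, real_inner_comm y' z]
    ring
  have e : ∀ y y', ∑ t, ip (w y) (b t) * ip (w y') (b t) = ip y y' - ip y z * ip y' z := by
    intro y y'
    rw [← hw, ← b.sum_inner_mul_inner (w y) (w y')]
    exact Finset.sum_congr rfl fun t _ => by rw [real_inner_comm (b t) (w y')]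
  have := RR_pos T 12 (by norm_num) hf (fun y t => ip (w y) (b t)) c k
  refine this.trans_eq (Finset.sum_congr rfl fun y hy => Finset.sum_congr rfl fun y' hy' => ?_)
  simp only [e, real_inner_self_eq_norm_sq, h y hy, h y' hy']
  ring_nf

theorem GG_pos (T : Finset E15) (h : ∀ x ∈ T, ‖x‖ = 1) (z : E15) (hz : ‖z‖ = 1) (X : E15 → ℝ) (k n : ℕ) (l) :
    0 ≤ ∑ y ∈ T, ∑ y' ∈ T, GG (X y) (X y') n l * RR 12 (ip y y' - ip y z * ip y' z) ((1 - ip y z ^ 2) * (1 - ip y' z ^ 2)) k := by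
  induction l with
  | nil => simp [GG]
  | cons g l ih =>
    simp only [GG, add_mul, Finset.sum_add_distrib]
    exact add_nonneg (pos14 T h z hz (fun y => phi (X y) n g) k) ih

theorem SD_pos (T : Finset E15) (h : ∀ x ∈ T, ‖x‖ = 1) (z : E15) (hz : ‖z‖ = 1) (X : E15 → ℝ) (D) (k : ℕ) :
    0 ≤ ∑ y ∈ T, ∑ y' ∈ T, SD (X y) (X y') (ip y y' - ip y z * ip y' z) ((1 - ip y z ^ 2) * (1 - ip y' z ^ 2)) D k := by
  induction D generalizing k with
  | nil => simp [SD]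
  | cons p D ih =>
    simp only [SD, Finset.sum_add_distrib]
    refine add_nonneg ?_ (ih _)
    have := GG_pos T h z hz X k (16 - k) p.2
    have := mul_nonneg (show (0:ℝ) ≤ 2 ^ p.1 * 2 ^ (16 + 2 * k) by positivity) this
    simp only [Finset.mul_sum] at this
    refine this.trans_eq (Finset.sum_congr rfl fun y hy => Finset.sum_congr rfl fun z hz => ?_)
    ring

theorem SD_sq (T : Finset E15) (h : ∀ x ∈ T, ‖x‖ = 1) (z : E15) (hz : ‖z‖ = 1) (X : E15 → ℝ) (D : List (ℕ × List (List ℤ))) :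
    2 ^ (D.headD (0, [])).1 * 2 ^ 16 * (∑ y ∈ T, phi (X y) 16 (((D.headD (0, [])).2).headD [])) ^ 2 ≤
     ∑ y ∈ T, ∑ y' ∈ T, SD (X y) (X y') (ip y y' - ip y z * ip y' z) ((1 - ip y z ^ 2) * (1 - ip y' z ^ 2)) D 0 := by
  rcases D with _ | ⟨⟨e, rows⟩, D⟩
  · simp [SD, phi]
  rcases rows with _ | ⟨g, rows⟩
  · refine le_trans ?_ (SD_pos T h z hz X _ 0)
    simp [phi]
  simp only [List.headD_cons, SD, Finset.sum_add_distrib, GG, RR, mul_one, mul_zero, add_zero, Nat.sub_zero, mul_add]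
  have h1 := SD_pos T h z hz X D (0+1)
  have h2 := GG_pos T h z hz X 0 16 rows
  simp only [RR, mul_one] at h2
  have h2 := mul_nonneg (show (0:ℝ) ≤ 2 ^ e * 2 ^ 16 by positivity) h2
  simp only [Finset.mul_sum] at h2
  have h3 : 2 ^ e * 2 ^ 16 * (∑ y ∈ T, phi (X y) 16 g) ^ 2 = ∑ y ∈ T, ∑ y' ∈ T, 2 ^ e * 2 ^ 16 * (phi (X y) 16 g * phi (X y') 16 g) := by
    rw [pow_two, Finset.sum_mul_sum]
    simp only [Finset.mul_sum]
  rw [h3]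
  linarith

theorem SA_pos (S : Finset E15) (h : ∀ x ∈ S, ‖x‖ = 1) (A : List ℤ) (hA : ∀ a ∈ A, 0 ≤ a) (k : ℕ) :
    0 ≤ ∑ y ∈ S, ∑ z ∈ S, SA (ip y z) A k := by
  induction A generalizing k with
  | nil => simp [SA]
  | cons a A ih =>
    simp only [SA, Finset.sum_add_distrib]
    refine add_nonneg ?_ (ih (fun a ha => hA a (List.mem_cons_of_mem _ ha)) _)
    have ha : (0:ℝ) ≤ a := by exact_mod_cast hA a (by simp)
    have := mul_nonneg (show (0:ℝ) ≤ a * 2 ^ k by positivity) (pos15 S h k)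
    simpa only [Finset.mul_sum] using this

theorem gram3 (p q r : E15) (hp : ‖p‖ = 1) (hq : ‖q‖ = 1) (hr : ‖r‖ = 1) :
    0 ≤ 1 + 2 * ip p q * ip p r * ip q r - ip p q ^ 2 - ip p r ^ 2 - ip q r ^ 2 := by
  have hpp : ip p p = 1 := by rw [real_inner_self_eq_norm_sq, hp]; norm_num
  have hqq : ip q q = 1 := by rw [real_inner_self_eq_norm_sq, hq]; norm_num
  have hrr : ip r r = 1 := by rw [real_inner_self_eq_norm_sq, hr]; norm_num
  have := real_inner_mul_inner_self_le (q - ip p q • p) (r - ip p r • p)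
  simp only [inner_sub_left, inner_sub_right, real_inner_smul_left, real_inner_smul_right, hpp, hqq, hrr, real_inner_comm p q, real_inner_comm p r] at this
  nlinarith

def zSA : List ℤ → ℕ → ℤ → ℤ → ℤ
  | [], _, _, _ => 0
  | a :: l, k, R0, R1 => a * 2 ^ k * R1 + zSA l (k + 1) R1 ((2 * k + 13) * R1 - k * (k + 12) * R0)

theorem zSA_eq (A : List ℤ) (k : ℕ) (R0 R1 : ℤ) (h1 : (R1 : ℝ) = RR 13 1 1 k) (h0 : (k : ℝ) * R0 = k * RR 13 1 1 (k-1)) :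
    (zSA A k R0 R1 : ℝ) = SA 1 A k := by
  induction A generalizing k R0 R1 with
  | nil => simp [zSA, SA]
  | cons a A ih =>
    rw [zSA, SA, ← ih (k+1) R1 ((2 * k + 13) * R1 - k * (k + 12) * R0) ?_ (by rw [h1]; simp)]
    · push_cast; rw [h1]
    · cases k with
      | zero => push_cast; rw [h1]; simp [RR]
      | succ k =>
        rw [RR]
        simp only [Nat.add_sub_cancel] at h0
        push_cast at h0 ⊢
        rw [h1]
        linear_combination (-((k:ℝ)+1+12)) * h0

noncomputable def XX (y z : E15) : ℝ := (2 * ip y z + 2) / 3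
theorem UU_XX (y z : E15) : UU (XX y z) = ip y z := by unfold UU XX; ring
theorem XX_comm (y z : E15) : XX y z = XX z y := by unfold XX; rw [real_inner_comm]

theorem XX_I01 (y z : E15) (hy : ‖y‖ = 1) (hz : ‖z‖ = 1) (h : 1 ≤ dist y z) : I01 (XX y z) := by
  have h1 := neg_le_of_abs_le (abs_real_inner_le_norm y z)
  rw [hy, hz] at h1
  have h2 := norm_sub_sq_real y z
  rw [← dist_eq_norm, hy, hz] at h2
  unfold XX
  constructor <;> nlinarith

noncomputable def gg (y y' z : E15) : ℝ :=
  SD (XX y z) (XX y' z) (ip y y' - ip y z * ip y' z) ((1 - ip y z ^ 2) * (1 - ip y' z ^ 2)) dataW 0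

theorem gg_tri (p q r : E15) (hp : ‖p‖ = 1) (hq : ‖q‖ = 1) (hr : ‖r‖ = 1) (h1 : 1 ≤ dist p q) (h2 : 1 ≤ dist p r) (h3 : 1 ≤ dist q r) :
    gg q r p + gg p r q + gg p q r ≤ 0 := by
  have := tri_nonneg (XX p q) (XX p r) (XX q r) (XX_I01 _ _ hp hq h1) (XX_I01 _ _ hp hr h2) (XX_I01 _ _ hq hr h3)
    (by simp only [UU_XX]; exact gram3 p q r hp hq hr)
  unfold F3 at this
  simp only [UU_XX] at this
  unfold gg
  rw [XX_comm q p, XX_comm r p, XX_comm r q, real_inner_comm p q, real_inner_comm p r, real_inner_comm q r]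
  linarith

theorem data_bd : decide (zSA dataA 0 0 1 + 2 ^ (dataW.headD (0, [])).1 * 2 ^ 16 * (dataV.headD 0) ^ 2 < 4866 * M00) = true := by decide +kernel
theorem dataA_nn : dataA.all (fun a => decide (0 ≤ a)) = true := by decide +kernel

theorem main_bd (S : Finset E15) (hn : ∀ x ∈ S, ‖x‖ = 1) (hd : ∀ x ∈ S, ∀ y ∈ S, x ≠ y → 1 ≤ dist x y) : S.card ≤ 4866 := by
  classical
  by_cases hS : S.card = 0
  · omega
  have hN : (0:ℝ) < S.card := by exact_mod_cast Nat.pos_of_ne_zero hS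
  -- triples
  have hT : ∑ p ∈ S, ∑ q ∈ S, ∑ r ∈ S, (if p ≠ q ∧ p ≠ r ∧ q ≠ r then gg q r p else 0) ≤ 0 := by
    have a2 : ∑ p ∈ S, ∑ q ∈ S, ∑ r ∈ S, (if p ≠ q ∧ p ≠ r ∧ q ≠ r then gg q r p else 0)
        = ∑ p ∈ S, ∑ q ∈ S, ∑ r ∈ S, (if p ≠ q ∧ p ≠ r ∧ q ≠ r then gg p r q else 0) := by
      rw [Finset.sum_comm]
      refine Finset.sum_congr rfl fun p _ => Finset.sum_congr rfl fun q _ => Finset.sum_congr rfl fun r _ => ?_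
      exact if_congr (by tauto) rfl rfl
    have a3 : ∑ p ∈ S, ∑ q ∈ S, ∑ r ∈ S, (if p ≠ q ∧ p ≠ r ∧ q ≠ r then gg p r q else 0)
        = ∑ p ∈ S, ∑ q ∈ S, ∑ r ∈ S, (if p ≠ q ∧ p ≠ r ∧ q ≠ r then gg p q r else 0) := by
      refine Finset.sum_congr rfl fun p _ => ?_
      rw [Finset.sum_comm]
      refine Finset.sum_congr rfl fun q _ => Finset.sum_congr rfl fun r _ => ?_
      exact if_congr (by tauto) rfl rfl
    have a4 : ∑ p ∈ S, ∑ q ∈ S, ∑ r ∈ S, (if p ≠ q ∧ p ≠ r ∧ q ≠ r then gg q r p + gg p r q + gg p q r else 0) ≤ 0 := by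
      refine Finset.sum_nonpos fun p hp => Finset.sum_nonpos fun q hq => Finset.sum_nonpos fun r hr => ?_
      split_ifs with h
      · exact gg_tri p q r (hn p hp) (hn q hq) (hn r hr) (hd p hp q hq h.1) (hd p hp r hr h.2.1) (hd q hq r hr h.2.2)
      · exact le_rfl
    have a5 : ∑ p ∈ S, ∑ q ∈ S, ∑ r ∈ S, (if p ≠ q ∧ p ≠ r ∧ q ≠ r then gg q r p + gg p r q + gg p q r else 0)
      = ∑ p ∈ S, ∑ q ∈ S, ∑ r ∈ S, (if p ≠ q ∧ p ≠ r ∧ q ≠ r then gg q r p else 0)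
      + ∑ p ∈ S, ∑ q ∈ S, ∑ r ∈ S, (if p ≠ q ∧ p ≠ r ∧ q ≠ r then gg p r q else 0)
      + ∑ p ∈ S, ∑ q ∈ S, ∑ r ∈ S, (if p ≠ q ∧ p ≠ r ∧ q ≠ r then gg p q r else 0) := by
      simp only [← Finset.sum_add_distrib]
      refine Finset.sum_congr rfl fun p _ => Finset.sum_congr rfl fun q _ => Finset.sum_congr rfl fun r _ => ?_
      split_ifs <;> simp
    linarith
  obtain ⟨e0, he0⟩ : ∃ e0, e0 = (dataW.headD (0, [])).1 := ⟨_, rfl⟩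
  obtain ⟨w, hw⟩ : ∃ w : ℤ, w = dataV.headD 0 := ⟨_, rfl⟩
  have hw00 : (w00 : ℝ) = 2 * (2 ^ e0 * 2 ^ 16) * w := by
    have : w00 = 2 ^ 17 * 2 ^ e0 * w := by rw [he0, hw]; rfl
    rw [this]; push_cast; ring
  -- per point
  have hz : ∀ z ∈ S, 0 ≤ ∑ y ∈ S.erase z, ∑ y' ∈ S.erase z, gg y y' z + w00 * ∑ y ∈ S.erase z, phi (XX y z) 16 g00 + 2 ^ e0 * 2 ^ 16 * (w:ℝ) ^ 2 := by
    intro z hz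
    have h := SD_sq (S.erase z) (fun x hx => hn x (Finset.mem_of_mem_erase hx)) z (hn z hz) (fun y => XX y z) dataW
    rw [← he0] at h
    have h : 2 ^ e0 * 2 ^ 16 * (∑ y ∈ S.erase z, phi (XX y z) 16 g00) ^ 2 ≤ ∑ y ∈ S.erase z, ∑ y' ∈ S.erase z, gg y y' z := h
    rw [hw00]
    have h2 := mul_nonneg (show (0:ℝ) ≤ 2 ^ e0 * 2 ^ 16 by positivity) (sq_nonneg ((∑ y ∈ S.erase z, phi (XX y z) 16 g00) + w))
    linarith
  have hz2 : ∀ z ∈ S, ∑ y ∈ S.erase z, ∑ y' ∈ S.erase z, gg y y' z = ∑ y ∈ S.erase z, gg y y z + ∑ q ∈ S, ∑ r ∈ S, (if z ≠ q ∧ z ≠ r ∧ q ≠ r then gg q r z else 0) := by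
    intro z hz
    have b1 : ∀ q ∈ S.erase z, ∑ y' ∈ S.erase z, gg q y' z = gg q q z + ∑ r ∈ S, (if z ≠ q ∧ z ≠ r ∧ q ≠ r then gg q r z else 0) := by
      intro q hq
      rw [← Finset.add_sum_erase _ _ hq]
      congr 1
      rw [← Finset.sum_filter]
      refine Finset.sum_congr ?_ fun _ _ => rfl
      ext r
      have := Finset.ne_of_mem_erase hq
      simp only [Finset.mem_erase, Finset.mem_filter]
      tauto
    rw [Finset.sum_congr rfl b1, Finset.sum_add_distrib]
    congr 1
    refine Finset.sum_subset (Finset.erase_subset _ _) fun q hq hq' => ?_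
    have : q = z := by by_contra hc; exact hq' (Finset.mem_erase.2 ⟨hc, hq⟩)
    subst this
    simp
  have hA := SA_pos S hn dataA (fun a ha => by simpa using List.all_eq_true.1 dataA_nn a ha) 0
  have hA2 : ∑ y ∈ S, ∑ z ∈ S, SA (ip y z) dataA 0 = ∑ z ∈ S, (SA 1 dataA 0 + ∑ y ∈ S.erase z, SA (ip y z) dataA 0) := by
    rw [Finset.sum_comm]
    refine Finset.sum_congr rfl fun z hz => ?_
    rw [← Finset.add_sum_erase _ _ hz, real_inner_self_eq_norm_sq, hn z hz]
    norm_num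
  have hP : ∀ z ∈ S, ∀ y ∈ S.erase z, gg y y z + w00 * phi (XX y z) 16 g00 + SA (ip y z) dataA 0 ≤ -(M00 : ℝ) := by
    intro z hz y hy
    have hy' := Finset.mem_of_mem_erase hy
    have := pair_nonneg (XX y z) (XX_I01 y z (hn y hy') (hn z hz) (hd y hy' z hz (Finset.ne_of_mem_erase hy)))
    unfold F2 at this
    rw [UU_XX] at this
    unfold gg
    have hyy : ip y y = 1 := by rw [real_inner_self_eq_norm_sq, hn y hy']; norm_num
    rw [hyy, ← pow_two, ← pow_two]
    linarith
  have hsum : 0 ≤ ∑ z ∈ S, (∑ y ∈ S.erase z, (gg y y z + w00 * phi (XX y z) 16 g00 + SA (ip y z) dataA 0) + (2 ^ e0 * 2 ^ 16 * (w:ℝ) ^ 2 + SA 1 dataA 0)) := by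
    have c1 := Finset.sum_nonneg hz
    have c2 : ∑ z ∈ S, (∑ y ∈ S.erase z, ∑ y' ∈ S.erase z, gg y y' z + w00 * ∑ y ∈ S.erase z, phi (XX y z) 16 g00 + 2 ^ e0 * 2 ^ 16 * (w:ℝ) ^ 2)
      = ∑ z ∈ S, (∑ y ∈ S.erase z, gg y y z + ∑ q ∈ S, ∑ r ∈ S, (if z ≠ q ∧ z ≠ r ∧ q ≠ r then gg q r z else 0) + w00 * ∑ y ∈ S.erase z, phi (XX y z) 16 g00 + 2 ^ e0 * 2 ^ 16 * (w:ℝ) ^ 2) :=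
      Finset.sum_congr rfl fun z hz => by rw [hz2 z hz]
    rw [c2] at c1
    rw [hA2] at hA
    simp only [Finset.sum_add_distrib, Finset.mul_sum] at c1 hA ⊢
    linarith
  have hle : ∑ z ∈ S, (∑ y ∈ S.erase z, (gg y y z + w00 * phi (XX y z) 16 g00 + SA (ip y z) dataA 0) + (2 ^ e0 * 2 ^ 16 * (w:ℝ) ^ 2 + SA 1 dataA 0))
     ≤ ∑ z ∈ S, (((S.card : ℝ) - 1) * (-(M00:ℝ)) + (2 ^ e0 * 2 ^ 16 * (w:ℝ) ^ 2 + SA 1 dataA 0)) := by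
    refine Finset.sum_le_sum fun z hz => ?_
    have := Finset.sum_le_card_nsmul _ _ _ (hP z hz)
    rw [Finset.card_erase_of_mem hz, nsmul_eq_mul, Nat.cast_sub (by omega), Nat.cast_one] at this
    linarith
  have h1 := hsum.trans hle
  rw [Finset.sum_const, nsmul_eq_mul] at h1
  have h2 := nonneg_of_mul_nonneg_right h1 hN
  have hb := of_decide_eq_true data_bd
  rw [← he0, ← hw] at hb
  have hb : ((zSA dataA 0 0 1 + 2 ^ e0 * 2 ^ 16 * w ^ 2 : ℤ) : ℝ) < ((4866 * M00 : ℤ) : ℝ) := by exact_mod_cast hb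
  push_cast at hb
  rw [zSA_eq dataA 0 0 1 (by simp [RR]) (by simp)] at hb
  have hM : (0:ℝ) < M00 := by
    have : (0:ℤ) < M00 := by decide
    exact_mod_cast this
  have h3 : ((S.card : ℝ) - 1) * M00 < 4866 * M00 := by linarith
  have h4 := lt_of_mul_lt_mul_right h3 hM.le
  have h5 : (S.card : ℝ) < (4867 : ℕ) := by push_cast; linarith
  have := Nat.cast_lt.1 h5
  omega
end Geo

theorem kissing_number_dim15_le_4866
    (S : Finset (EuclideanSpace ℝ (Fin 15)))
    (hnorm : ∀ x ∈ S, ‖x‖ = 1)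
    (hdist : ∀ x ∈ S, ∀ y ∈ S, x ≠ y → 1 ≤ dist x y) :
    S.card ≤ 4866 := by
  exact main_bd S hnorm hdist
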